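/- Let Δ ⊆ ℝ⁴ be a 4-dimensional reflexive polytope. Then 12 · |∂Δ ∩ ℤ⁴| = 2 · v(Δ) + Σ_θ v(θ)·v(θ*), where the sum runs over all 2-dimensional faces θ of Δ, θ* is the dual 1-dimensional face (edge) of Δ*, |∂Δ ∩ ℤ⁴| denotes the number of lattice points on the boundary of Δ, v(Δ) = 4!·vol(Δ), v(θ) is the normalized lattice area of θ, and v(θ*) = |θ* ∩ ℤ⁴| − 1. -/

import Mathlib

open MeasureTheory Filter Pointwise

noncomputable section

/-- The canonical embedding of a lattice point of `ℤ^d` into `ℝ^d`. -/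
def coeLat {d : ℕ} (n : Fin d → ℤ) : Fin d → ℝ := fun i => (n i : ℝ)

/-- The set of lattice points lying in a subset `S ⊆ ℝ^d`. -/
def latticePoints {d : ℕ} (S : Set (Fin d → ℝ)) : Set (Fin d → ℤ) :=
  {n | coeLat n ∈ S}

/-- A lattice polytope: the convex hull of finitely many points of `ℤ^d`. -/
def IsLatticePolytope {d : ℕ} (P : Set (Fin d → ℝ)) : Prop :=
  ∃ V : Finset (Fin d → ℤ), P = convexHull ℝ (coeLat '' (V : Set (Fin d → ℤ)))

/-- The dual (polar) body `P* = {y | ⟨y,x⟩ ≥ -1 ∀ x ∈ P}`. -/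
def polarDual {d : ℕ} (P : Set (Fin d → ℝ)) : Set (Fin d → ℝ) :=
  {y | ∀ x ∈ P, -1 ≤ ∑ i, y i * x i}

/-- Dimension of a subset of `ℝ^d`: the dimension of its affine span. -/
def dimSet {d : ℕ} (S : Set (Fin d → ℝ)) : ℕ :=
  Module.finrank ℝ (affineSpan ℝ S).direction

/-- A reflexive polytope: a lattice polytope containing the origin in its interior
whose dual is again a lattice polytope. -/
def IsReflexive {d : ℕ} (P : Set (Fin d → ℝ)) : Prop :=
  IsLatticePolytope P ∧ (0 : Fin d → ℝ) ∈ interior P ∧ IsLatticePolytope (polarDual P)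

/-- A (nonempty, exposed) face of dimension `k` of a polytope `P`. -/
def IsFaceOfDim {d : ℕ} (P : Set (Fin d → ℝ)) (k : ℕ) (θ : Set (Fin d → ℝ)) : Prop :=
  IsExposed ℝ P θ ∧ θ.Nonempty ∧ dimSet θ = k

/-- The dual face `θ* = {y ∈ P* | ⟨y,x⟩ = -1 ∀ x ∈ θ}` of a face `θ` of `P`. -/
def dualFace {d : ℕ} (P θ : Set (Fin d → ℝ)) : Set (Fin d → ℝ) :=
  {y ∈ polarDual P | ∀ x ∈ θ, ∑ i, y i * x i = -1}

/-- The normalized volume of a `k`-dimensional lattice polytope `θ ⊆ ℝ^d`: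
`lim_{m → ∞} k! ⬝ |mθ ∩ ℤ^d| / m^k`. -/
def normVol {d : ℕ} (k : ℕ) (θ : Set (Fin d → ℝ)) : ℝ :=
  limUnder atTop
    (fun m : ℕ => (Nat.factorial k : ℝ) * (latticePoints ((m : ℝ) • θ)).ncard / (m : ℝ) ^ k)

namespace R4

abbrev E4 := Fin 4 → ℝ
abbrev L4 := Fin 4 → ℤ

lemma coeLat_add (x y : L4) : coeLat (x + y) = coeLat x + coeLat y := by
  ext i; simp [coeLat]
lemma coeLat_sub (x y : L4) : coeLat (x - y) = coeLat x - coeLat y := by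
  ext i; simp [coeLat]
lemma coeLat_zero : coeLat (0 : L4) = 0 := by
  ext i; simp [coeLat]
lemma coeLat_nsmul (n : ℕ) (x : L4) : coeLat (n • x) = (n : ℝ) • coeLat x := by
  ext i; simp [coeLat]
lemma coeLat_zsmul (n : ℤ) (x : L4) : coeLat (n • x) = (n : ℝ) • coeLat x := by
  ext i; simp [coeLat]
lemma coeLat_sum {ι : Type*} (s : Finset ι) (f : ι → L4) :
    coeLat (∑ i ∈ s, f i) = ∑ i ∈ s, coeLat (f i) := by
  ext i; simp [coeLat]
lemma coeLat_inj {x y : L4} (h : coeLat x = coeLat y) : x = y := by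
  ext i; have := congrFun h i; simpa [coeLat] using this

/-- four lattice vectors forming a real basis -/
def IsB (s : Finset L4) : Prop := s.card = 4 ∧ LinearIndepOn ℝ (coeLat (d := 4)) (s : Set L4)

def bas (s : Finset L4) (h : IsB s) : Module.Basis s ℝ E4 :=
  basisOfLinearIndependentOfCardEqFinrank' (fun v : s => coeLat v.1) h.2 (by simp [h.1])

open Classical in
def cf (s : Finset L4) (v : L4) : E4 →ₗ[ℝ] ℝ :=
  if h : IsB s ∧ v ∈ s then (bas s h.1).coord ⟨v, h.2⟩ else 0

lemma cf_repr {s : Finset L4} (h : IsB s) (z : E4) : ∑ v ∈ s, cf s v z • coeLat v = z := by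
  conv_rhs => rw [← (bas s h).sum_repr z]
  rw [← Finset.sum_coe_sort s]
  refine Finset.sum_congr rfl fun v _ => ?_
  have : bas s h v = coeLat v.1 := 
    congrFun (coe_basisOfLinearIndependentOfCardEqFinrank' _ _ _) v
  simp [cf, h, this]

lemma cf_unique {s : Finset L4} (h : IsB s) (c : L4 → ℝ) {z : E4}
    (hz : ∑ v ∈ s, c v • coeLat v = z) {v : L4} (hv : v ∈ s) : cf s v z = c v := by
  have h1 : ∑ v ∈ s, (cf s v z - c v) • coeLat v = 0 := by
    simp [sub_smul, Finset.sum_sub_distrib, hz, cf_repr h]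
  have := linearIndepOn_finset_iff.mp h.2 _ h1 v hv
  linarith

lemma cf_self {s : Finset L4} (h : IsB s) {u v : L4} (hu : u ∈ s) (hv : v ∈ s) :
    cf s v (coeLat u) = if v = u then 1 else 0 := by
  classical
  refine cf_unique h (fun v => if v = u then 1 else 0) ?_ hv
  simp [hu]

/-- dual functional with weights w -/
def yw (s : Finset L4) (w : L4 → ℝ) : E4 →ₗ[ℝ] ℝ := ∑ v ∈ s, w v • cf s v

lemma yw_apply (s : Finset L4) (w : L4 → ℝ) (z : E4) : yw s w z = ∑ v ∈ s, w v * cf s v z := by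
  simp [yw]

lemma yw_self {s : Finset L4} (h : IsB s) (w : L4 → ℝ) {v : L4} (hv : v ∈ s) :
    yw s w (coeLat v) = w v := by
  rw [yw_apply, Finset.sum_eq_single v]
  · simp [cf_self h hv hv]
  · intro b hb hbv
    simp [cf_self h hv hb, hbv]
  · exact fun h => (h hv).elim

/-- avoiding finitely many nonzero functionals -/
lemma exists_generic {M ι : Type*} [AddCommGroup M] [Module ℝ M] (I : Finset ι)
    (φ : ι → M →ₗ[ℝ] ℝ) (hφ : ∀ i ∈ I, φ i ≠ 0) : ∃ m : M, ∀ i ∈ I, φ i m ≠ 0 := by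
  classical
  have := Subspace.biUnion_ne_univ_of_top_notMem (k := ℝ) (E := M)
    (s := I.image fun i => LinearMap.ker (φ i)) (by
      simp only [Finset.mem_image, not_exists, not_and]
      intro i hi h
      exact hφ i hi (LinearMap.ker_eq_top.mp h))
  obtain ⟨m, hm⟩ := (Set.ne_univ_iff_exists_notMem _).mp this
  refine ⟨m, fun i hi h => hm ?_⟩
  simp only [Set.mem_iUnion]
  exact ⟨_, Finset.mem_image_of_mem _ hi, by simpa using h⟩

open Classical in
def bases (V : Finset L4) : Finset (Finset L4) := V.powerset.filter IsB

lemma mem_bases {V s : Finset L4} : s ∈ bases V ↔ s ⊆ V ∧ IsB s := by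
  simp [bases]

lemma exists_xi (V : Finset L4) : ∃ ξ : E4, ∀ s ∈ bases V, ∀ v ∈ s, cf s v ξ ≠ 0 := by
  classical
  obtain ⟨ξ, h⟩ := exists_generic ((bases V).sigma fun s => s) (fun p => cf p.1 p.2) (by
    rintro ⟨s, v⟩ h
    simp only [Finset.mem_sigma] at h
    intro h0
    have := cf_self (mem_bases.mp h.1).2 h.2 h.2
    simp only [h0] at this
    simp at this)
  exact ⟨ξ, fun s hs v hv => h ⟨s, v⟩ (by simp [hs, hv])⟩

lemma exists_r (V : Finset L4) :
    ∃ r : L4 → ℝ, ∀ s ∈ bases V, ∀ v ∈ V, v ∉ s → yw s r (coeLat v) ≠ r v := by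
  classical
  let φ : Finset L4 × L4 → (L4 → ℝ) →ₗ[ℝ] ℝ := fun p =>
    (∑ u ∈ p.1, cf p.1 u (coeLat p.2) • (LinearMap.proj u : (L4 → ℝ) →ₗ[ℝ] ℝ)) - LinearMap.proj p.2
  have hφ : ∀ p r, φ p r = yw p.1 r (coeLat p.2) - r p.2 := by
    intro p r
    simp [φ, yw_apply, mul_comm]
  obtain ⟨r, h⟩ := exists_generic (((bases V) ×ˢ V).filter fun p => p.2 ∉ p.1) φ (by
    rintro ⟨s, v⟩ h h0
    simp only [Finset.mem_filter, Finset.mem_product] at h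
    have := hφ (s, v) (Pi.single v 1)
    rw [h0, yw_apply, Finset.sum_eq_zero] at this
    · simp at this
    · intro u hu
      have : u ≠ v := fun e => h.2 (e ▸ hu)
      simp [this])
  refine ⟨r, fun s hs v hv hvs h0 => h (s, v) (by simp [hs, hv, hvs]) ?_⟩
  rw [hφ, h0, sub_self]

/-- good weights -/
structure GoodW (V : Finset L4) (w : L4 → ℝ) : Prop where
  pos : ∀ v ∈ V, 0 < w v
  gen : ∀ s ∈ bases V, ∀ v ∈ V, v ∉ s → yw s w (coeLat v) ≠ w v
  near : ∀ s ∈ bases V, ∀ v ∈ V, 1 < yw s 1 (coeLat v) → w v < yw s w (coeLat v)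

open Topology in
lemma ev_pos_of_pos (a b : ℝ) (h : 0 < a) : ∀ᶠ t in 𝓝[>] (0:ℝ), 0 < a + t * b := by
  have : Tendsto (fun t : ℝ => a + t * b) (𝓝[>] 0) (𝓝 (a + 0 * b)) :=
    ((continuous_const.add (continuous_id.mul continuous_const)).tendsto 0).mono_left
      nhdsWithin_le_nhds
  exact this.eventually (lt_mem_nhds (by simpa using h))

open Topology in
/-- sign of a + t b for small t>0 -/
lemma ev_sign (a b : ℝ) (hb : b ≠ 0) :
    ∀ᶠ t in 𝓝[>] (0:ℝ), a + t * b ≠ 0 ∧ (0 < a + t * b ↔ (0 < a ∨ (a = 0 ∧ 0 < b))) := by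
  rcases lt_trichotomy a 0 with h | h | h
  · filter_upwards [ev_pos_of_pos (-a) (-b) (by linarith)] with t ht
    refine ⟨by nlinarith, ⟨fun h' => by nlinarith, ?_⟩⟩
    rintro (h' | h') <;> linarith
  · filter_upwards [self_mem_nhdsWithin] with t ht
    have ht : 0 < t := ht
    subst h
    simp only [zero_add, lt_irrefl, true_and, false_or]
    refine ⟨by positivity, by rw [mul_pos_iff_of_pos_left ht]⟩
  · filter_upwards [ev_pos_of_pos a b h] with t ht
    exact ⟨ht.ne', by simp [ht, h]⟩

open Topology in
lemma exists_w (V : Finset L4) : ∃ w, GoodW V w := by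
  obtain ⟨r, hr⟩ := exists_r V
  have hy : ∀ (s : Finset L4) (z : E4) (t : ℝ), yw s (fun v => 1 + t * r v) z
      = yw s 1 z + t * yw s r z := by
    intro s z t
    simp only [yw_apply, Pi.one_apply, add_mul, Finset.sum_add_distrib, Finset.mul_sum, mul_assoc]
  have e1 : ∀ᶠ t in 𝓝[>] (0:ℝ), ∀ v ∈ V, 0 < 1 + t * r v :=
    (V.eventually_all).mpr fun v _ => ev_pos_of_pos 1 (r v) one_pos
  have e2 : ∀ᶠ t in 𝓝[>] (0:ℝ), ∀ s ∈ bases V, ∀ v ∈ V,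
      v ∉ s → yw s (fun v => 1 + t * r v) (coeLat v) ≠ 1 + t * r v := by
    refine (Finset.eventually_all _).mpr fun s hs => (Finset.eventually_all _).mpr fun v hv => ?_
    by_cases hvs : v ∈ s
    · simp [hvs]
    filter_upwards [ev_sign (yw s 1 (coeLat v) - 1) (yw s r (coeLat v) - r v)
      (sub_ne_zero.mpr (hr s hs v hv hvs))] with t ht _ h
    apply ht.1
    rw [hy] at h
    linarith
  have e3 : ∀ᶠ t in 𝓝[>] (0:ℝ), ∀ s ∈ bases V, ∀ v ∈ V,
      1 < yw s 1 (coeLat v) → 1 + t * r v < yw s (fun v => 1 + t * r v) (coeLat v) := by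
    refine (Finset.eventually_all _).mpr fun s hs => (Finset.eventually_all _).mpr fun v hv => ?_
    by_cases h1 : 1 < yw s 1 (coeLat v)
    · filter_upwards [ev_pos_of_pos (yw s 1 (coeLat v) - 1) (yw s r (coeLat v) - r v)
        (by linarith)] with t ht _
      rw [hy]; linarith
    · simp [h1]
  obtain ⟨t, h1, h2, h3⟩ := (e1.and (e2.and e3)).exists
  exact ⟨fun v => 1 + t * r v, h1, h2, h3⟩

end R4

namespace R4

structure Gauge (V : Finset L4) (h : E4 → ℝ) : Prop where
  sub : ∀ x y, h (x + y) ≤ h x + h y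
  hom : ∀ (t : ℝ) (x : E4), 0 ≤ t → h (t • x) = t * h x
  le_one : ∀ v ∈ V, h (coeLat v) ≤ 1
  rep : ∀ z, ∃ c : L4 → ℝ, (∀ v, 0 ≤ c v) ∧ ∑ v ∈ V, c v • coeLat v = z ∧ ∑ v ∈ V, c v = h z
  int : ∀ x : L4, ∃ k : ℕ, h (coeLat x) = k
  fin : ∀ C : ℝ, {x : L4 | h (coeLat x) ≤ C}.Finite

lemma conic_caratheodory (V : Finset L4) (z : E4) (c : L4 → ℝ) (hc : ∀ v ∈ V, 0 ≤ c v)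
    (hz : ∑ v ∈ V, c v • coeLat v = z) :
    ∃ t ⊆ V, LinearIndepOn ℝ (coeLat (d := 4)) (t : Set L4) ∧ ∃ c : L4 → ℝ,
      (∀ v ∈ t, 0 < c v) ∧ ∑ v ∈ t, c v • coeLat v = z := by
  classical
  let S := V.powerset.filter fun t => ∃ c : L4 → ℝ,
      (∀ v ∈ t, 0 ≤ c v) ∧ ∑ v ∈ t, c v • coeLat v = z
  have hS : S.Nonempty := ⟨V, by simpa [S] using ⟨c, hc, hz⟩⟩
  obtain ⟨t, htS, hmin⟩ := S.exists_min_image Finset.card hS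
  simp only [S, Finset.mem_filter, Finset.mem_powerset] at htS hmin
  obtain ⟨htV, c, hc, hz⟩ := htS
  have key : ∀ c : L4 → ℝ, (∀ v ∈ t, 0 ≤ c v) → ∑ v ∈ t, c v • coeLat v = z →
      ∀ u ∈ t, c u ≠ 0 := by
    intro c hc hz u hu h0
    have := hmin (t.erase u) ⟨(Finset.erase_subset _ _).trans htV, c,
      fun v hv => hc v (Finset.mem_of_mem_erase hv), by
        rw [← hz, ← Finset.add_sum_erase _ _ hu, h0]; simp⟩
    have h2 := Finset.card_erase_lt_of_mem hu
    omega
  refine ⟨t, htV, ?_, c, fun v hv => lt_of_le_of_ne (hc v hv) (key c hc hz v hv).symm, hz⟩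
  by_contra hli
  rw [linearIndepOn_finset_iff] at hli
  push Not at hli
  obtain ⟨g, hg, i, hi, hgi⟩ := hli
  obtain ⟨g, hg, i, hi, hgi⟩ : ∃ g : L4 → ℝ, ∑ v ∈ t, g v • coeLat v = 0 ∧ ∃ i ∈ t, 0 < g i := by
    rcases lt_or_gt_of_ne hgi with h | h
    · exact ⟨-g, by simp [hg], i, hi, by simpa using h⟩
    · exact ⟨g, hg, i, hi, h⟩
  obtain ⟨u, hu, humin⟩ := (t.filter fun v => 0 < g v).exists_min_image (fun v => c v / g v)
    ⟨i, by simp [hi, hgi]⟩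
  simp only [Finset.mem_filter] at hu humin
  refine key (fun v => c v - c u / g u * g v) ?_ ?_ u hu.1 ?_
  · intro v hv
    by_cases hgv : 0 < g v
    · have := humin v ⟨hv, hgv⟩
      rw [le_div_iff₀ hgv] at this
      linarith
    · have h1 : 0 ≤ c u / g u := div_nonneg (hc u hu.1) hu.2.le
      have h2 := hc v hv
      nlinarith
  · simp only [sub_smul, Finset.sum_sub_distrib, hz, mul_smul, ← Finset.smul_sum, hg]
    simp
  · have := hu.2.ne'
    field_simp
    simp

lemma extend_basis (V t : Finset L4) (hV : Submodule.span ℝ (coeLat '' (V : Set L4)) = ⊤)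
    (ht : t ⊆ V) (hli : LinearIndepOn ℝ (coeLat (d := 4)) (t : Set L4)) :
    ∃ s ∈ bases V, t ⊆ s := by
  classical
  obtain ⟨b, hbV, htb, hsp, hb⟩ := exists_linearIndepOn_extension hli
    (Finset.coe_subset.mpr ht)
  have hfin : b.Finite := V.finite_toSet.subset hbV
  lift b to Finset L4 using hfin
  refine ⟨b, mem_bases.mpr ⟨Finset.coe_subset.mp hbV, ?_, hb⟩, Finset.coe_subset.mp htb⟩
  have htop : Submodule.span ℝ (coeLat '' (b : Set L4)) = ⊤ := by
    rw [eq_top_iff, ← hV]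
    exact Submodule.span_le.mpr hsp
  have h1 := finrank_span_eq_card (R := ℝ) (b := fun v : b => coeLat v.1) hb
  have h2 : Set.range (fun v : b => coeLat v.1) = coeLat '' (b : Set L4) := by
    ext; simp
  rw [h2, htop] at h1
  simpa using h1.symm

lemma Gauge.span {V : Finset L4} {h : E4 → ℝ} (G : Gauge V h) :
    Submodule.span ℝ (coeLat '' (V : Set L4)) = ⊤ := by
  rw [eq_top_iff]
  intro z _
  obtain ⟨c, -, hz, -⟩ := G.rep z
  rw [← hz]
  exact Submodule.sum_mem _ fun v hv =>
    Submodule.smul_mem _ _ (Submodule.subset_span ⟨v, hv, rfl⟩)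

lemma exists_cone {V : Finset L4} {h : E4 → ℝ} (G : Gauge V h) (z : E4)
    (hz : ∀ s ∈ bases V, ∀ v ∈ s, cf s v z ≠ 0) : ∃ s ∈ bases V, ∀ v ∈ s, 0 < cf s v z := by
  classical
  obtain ⟨c, hc, hcz, -⟩ := G.rep z
  obtain ⟨t, htV, hli, c, hc, hcz⟩ := conic_caratheodory V z c (fun v _ => hc v) hcz
  obtain ⟨s, hs, hts⟩ := extend_basis V t G.span htV hli
  refine ⟨s, hs, fun v hv => ?_⟩
  have h1 : cf s v z = if v ∈ t then c v else 0 := by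
    refine cf_unique (mem_bases.mp hs).2 (fun v => if v ∈ t then c v else 0) ?_ hv
    simp only [ite_smul, zero_smul]
    rw [← Finset.sum_filter, Finset.filter_mem_eq_inter, Finset.inter_eq_right.mpr hts, hcz]
  have h2 := hz s hs v hv
  rw [h1] at h2 ⊢
  by_cases hvt : v ∈ t
  · simpa [hvt] using hc v hvt
  · simp [hvt] at h2

/-- the triangulation -/
def tri (V : Finset L4) (w : L4 → ℝ) : Finset (Finset L4) :=
  open Classical in (bases V).filter fun s => ∀ v ∈ V, v ∉ s → yw s w (coeLat v) < w v

lemma mem_tri {V : Finset L4} {w : L4 → ℝ} {s : Finset L4} :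
    s ∈ tri V w ↔ s ∈ bases V ∧ ∀ v ∈ V, v ∉ s → yw s w (coeLat v) < w v := by
  simp [tri]

lemma yw_eq_sum {s t : Finset L4} (ht : IsB t) (w : L4 → ℝ) (z : E4) :
    yw s w z = ∑ v ∈ t, cf t v z * yw s w (coeLat v) := by
  conv_lhs => rw [← cf_repr ht z]
  simp

lemma tri_le {V : Finset L4} {w : L4 → ℝ} {s : Finset L4} (hs : s ∈ tri V w) {v : L4}
    (hv : v ∈ V) : yw s w (coeLat v) ≤ w v := by
  rw [mem_tri] at hs
  by_cases h : v ∈ s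
  · exact (yw_self (mem_bases.mp hs.1).2 w h).le
  · exact (hs.2 v hv h).le

lemma tri_unique_aux {V : Finset L4} {w : L4 → ℝ} {s t : Finset L4} (hs : s ∈ tri V w)
    (ht : t ∈ tri V w) {z : E4} (hsz : ∀ v ∈ s, 0 < cf s v z) (hle : yw s w z ≤ yw t w z) :
    s ⊆ t := by
  have hs' := mem_bases.mp (mem_tri.mp hs).1
  intro u hu
  by_contra hut
  have h1 : yw t w z < yw s w z := by
    rw [yw_eq_sum hs'.2, yw_apply s]
    apply Finset.sum_lt_sum
    · intro v hv
      rw [mul_comm]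
      exact mul_le_mul_of_nonneg_right (tri_le ht (hs'.1 hv)) (hsz v hv).le
    · refine ⟨u, hu, ?_⟩
      rw [mul_comm]
      exact mul_lt_mul_of_pos_right ((mem_tri.mp ht).2 u (hs'.1 hu) hut) (hsz u hu)
  linarith

lemma tri_unique {V : Finset L4} {w : L4 → ℝ} {s t : Finset L4} (hs : s ∈ tri V w)
    (ht : t ∈ tri V w) {z : E4} (hsz : ∀ v ∈ s, 0 < cf s v z) (htz : ∀ v ∈ t, 0 < cf t v z) :
    s = t := by
  have hs' := (mem_bases.mp (mem_tri.mp hs).1).2.1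
  have ht' := (mem_bases.mp (mem_tri.mp ht).1).2.1
  rcases le_total (yw s w z) (yw t w z) with h | h
  · exact Finset.eq_of_subset_of_card_le (tri_unique_aux hs ht hsz h) (by omega)
  · exact (Finset.eq_of_subset_of_card_le (tri_unique_aux ht hs htz h) (by omega)).symm

lemma pivot {V s : Finset L4} {w : L4 → ℝ} (hw : GoodW V w) (hs : s ∈ bases V) {z : E4}
    (hgen : ∀ s ∈ bases V, ∀ v ∈ s, cf s v z ≠ 0)
    (hz : ∀ v ∈ s, 0 < cf s v z) {v : L4} (hv : v ∈ V) (hlt : w v < yw s w (coeLat v)) :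
    ∃ t ∈ bases V, (∀ v ∈ t, 0 < cf t v z) ∧ yw t w z < yw s w z := by
  classical
  obtain ⟨hsV, hsB⟩ := mem_bases.mp hs
  have hvs : v ∉ s := fun h => by rw [yw_self hsB w h] at hlt; exact lt_irrefl _ hlt
  let m := fun u => cf s u (coeLat v)
  obtain ⟨i, hi, hmi⟩ : ∃ i ∈ s, 0 < m i := by
    by_contra! hcon
    have h1 : yw s w (coeLat v) ≤ 0 := by
      rw [yw_apply]
      exact Finset.sum_nonpos fun u hu =>
        mul_nonpos_of_nonneg_of_nonpos (hw.pos u (hsV hu)).le (hcon u hu)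
    have := hw.pos v hv
    linarith
  obtain ⟨u, hu, humin⟩ := (s.filter fun u => 0 < m u).exists_min_image (fun u => cf s u z / m u)
    ⟨i, by simp [hi, hmi]⟩
  simp only [Finset.mem_filter] at hu humin
  obtain ⟨hus, hmu⟩ := hu
  set τ := cf s u z / m u with hτ
  have hτ0 : 0 < τ := div_pos (hz u hus) hmu
  have hvrep : ∑ a ∈ s, m a • coeLat a = coeLat v := cf_repr hsB _
  have hue : v ∉ s.erase u := fun h => hvs (Finset.mem_of_mem_erase h)
  have htB : IsB (insert v (s.erase u)) := by
    refine ⟨by rw [Finset.card_insert_of_notMem hue, Finset.card_erase_of_mem hus, hsB.1], ?_⟩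
    rw [linearIndepOn_finset_iff]
    intro g hg
    rw [Finset.sum_insert hue, ← hvrep] at hg
    have h2 : ∑ a ∈ s, (g v * m a + if a = u then 0 else g a) • coeLat a = 0 := by
      rw [← hg, Finset.smul_sum]
      simp only [add_smul, Finset.sum_add_distrib, mul_smul]
      congr 1
      rw [← Finset.add_sum_erase _ _ hus]
      simp only [if_true, zero_smul, zero_add]
      refine Finset.sum_congr rfl fun a ha => ?_
      rw [if_neg (Finset.ne_of_mem_erase ha)]
    have h3 := linearIndepOn_finset_iff.mp hsB.2 _ h2
    have h4 : g v = 0 := by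
      have := h3 u hus
      simp only [if_true, add_zero] at this
      exact (mul_eq_zero.mp this).resolve_right hmu.ne'
    intro a ha
    rcases Finset.mem_insert.mp ha with rfl | ha
    · exact h4
    · have := h3 a (Finset.mem_of_mem_erase ha)
      rwa [h4, zero_mul, zero_add, if_neg (Finset.ne_of_mem_erase ha)] at this
  have htb : insert v (s.erase u) ∈ bases V := mem_bases.mpr
    ⟨Finset.insert_subset hv ((Finset.erase_subset _ _).trans hsV), htB⟩
  have hz0 : cf s u z - τ * m u = 0 := by
    have := hmu.ne'
    rw [hτ]; field_simp; simp
  have hcf : ∀ a ∈ insert v (s.erase u), cf (insert v (s.erase u)) a z =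
      if a = v then τ else cf s a z - τ * m a := by
    intro a ha
    refine cf_unique htB (fun a => if a = v then τ else cf s a z - τ * m a) ?_ ha
    rw [Finset.sum_insert hue, if_pos rfl]
    have h1 : ∑ a ∈ s.erase u, (if a = v then τ else cf s a z - τ * m a) • coeLat a
        = ∑ a ∈ s, (cf s a z - τ * m a) • coeLat a := by
      rw [← Finset.add_sum_erase s _ hus, hz0, zero_smul, zero_add]
      refine Finset.sum_congr rfl fun b hb => ?_
      rw [if_neg (fun e : b = v => hue (by rw [← e]; exact hb))]
    rw [h1]
    simp only [sub_smul, Finset.sum_sub_distrib, mul_smul, ← Finset.smul_sum, cf_repr hsB, hvrep]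
    abel
  refine ⟨_, htb, ?_, ?_⟩
  · intro a ha
    refine lt_of_le_of_ne ?_ (hgen _ htb a ha).symm
    rw [hcf a ha]
    split_ifs with hav
    · exact hτ0.le
    have has : a ∈ s := Finset.mem_of_mem_erase ((Finset.mem_insert.mp ha).resolve_left hav)
    by_cases hma : 0 < m a
    · have := humin a ⟨has, hma⟩
      rw [le_div_iff₀ hma] at this
      linarith
    · have := hz a has
      nlinarith
  · rw [yw_apply, Finset.sum_congr rfl fun a ha => by rw [hcf a ha], Finset.sum_insert hue,
      if_pos rfl]
    have h1 : ∑ a ∈ s.erase u, w a * (if a = v then τ else cf s a z - τ * m a)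
        = ∑ a ∈ s, w a * (cf s a z - τ * m a) := by
      rw [← Finset.add_sum_erase s _ hus, hz0, mul_zero, zero_add]
      refine Finset.sum_congr rfl fun b hb => ?_
      rw [if_neg (fun e : b = v => hue (by rw [← e]; exact hb))]
    have h2 : ∑ a ∈ s, w a * (cf s a z - τ * m a) = yw s w z - τ * yw s w (coeLat v) := by
      simp only [yw_apply, mul_sub, Finset.sum_sub_distrib, Finset.mul_sum]
      congr 1
      refine Finset.sum_congr rfl fun a _ => ?_
      simp only [m]; ring
    rw [h1, h2]
    nlinarith

lemma tri_exists {V : Finset L4} {h : E4 → ℝ} (G : Gauge V h) {w : L4 → ℝ} (hw : GoodW V w)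
    (z : E4) (hz : ∀ s ∈ bases V, ∀ v ∈ s, cf s v z ≠ 0) :
    ∃ s ∈ tri V w, ∀ v ∈ s, 0 < cf s v z := by
  classical
  obtain ⟨s0, hs0, hs0z⟩ := exists_cone G z hz
  obtain ⟨s, hs, hmin⟩ := ((bases V).filter fun s => ∀ v ∈ s, 0 < cf s v z).exists_min_image
    (fun s => yw s w z) ⟨s0, by simpa [hs0] using hs0z⟩
  simp only [Finset.mem_filter] at hs hmin
  refine ⟨s, mem_tri.mpr ⟨hs.1, fun v hv hvs => ?_⟩, hs.2⟩
  refine lt_of_le_of_ne ?_ (hw.gen s hs.1 v hv hvs)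
  by_contra! hlt
  obtain ⟨t, ht, htz, hlt'⟩ := pivot hw hs.1 hz hs.2 hv hlt
  have := hmin t ⟨ht, htz⟩
  linarith

def half (s : Finset L4) (ξ : E4) (x : E4) : Prop :=
  ∀ v ∈ s, 0 < cf s v x ∨ (cf s v x = 0 ∧ 0 < cf s v ξ)

open Topology in
lemma tri_half {V : Finset L4} {h : E4 → ℝ} (G : Gauge V h) {w : L4 → ℝ} (hw : GoodW V w)
    (ξ : E4) (hξ : ∀ s ∈ bases V, ∀ v ∈ s, cf s v ξ ≠ 0) (x : E4) :
    ∃! s, s ∈ tri V w ∧ half s ξ x := by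
  have ev : ∀ᶠ t in 𝓝[>] (0:ℝ), ∀ s ∈ bases V, ∀ v ∈ s, cf s v (x + t • ξ) ≠ 0 ∧
      (0 < cf s v (x + t • ξ) ↔ (0 < cf s v x ∨ (cf s v x = 0 ∧ 0 < cf s v ξ))) := by
    refine (Finset.eventually_all _).mpr fun s hs => (Finset.eventually_all _).mpr fun v hv => ?_
    filter_upwards [ev_sign (cf s v x) (cf s v ξ) (hξ s hs v hv)] with t ht
    simpa using ht
  obtain ⟨t, ht⟩ := ev.exists
  obtain ⟨s, hs, hsz⟩ := tri_exists G hw (x + t • ξ) fun s hs v hv => (ht s hs v hv).1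
  refine ⟨s, ⟨hs, fun v hv => (ht s (mem_tri.mp hs).1 v hv).2.mp (hsz v hv)⟩, ?_⟩
  rintro s' ⟨hs', hx⟩
  exact tri_unique hs' hs (z := x + t • ξ)
    (fun v hv => (ht s' (mem_tri.mp hs').1 v hv).2.mpr (hx v hv)) hsz

/-- the gauge is linear on each cone -/
lemma gauge_on_cone {V : Finset L4} {h : E4 → ℝ} (G : Gauge V h) {w : L4 → ℝ} (hw : GoodW V w)
    {s : Finset L4} (hs : s ∈ tri V w) {x : E4} (hx : ∀ v ∈ s, 0 ≤ cf s v x) :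
    h x = ∑ v ∈ s, cf s v x := by
  obtain ⟨hsV, hsB⟩ := mem_bases.mp (mem_tri.mp hs).1
  apply le_antisymm
  · have h0 : h 0 = 0 := by simpa using G.hom 0 0 le_rfl
    have key : ∀ t : Finset L4, t ⊆ s →
        h (∑ v ∈ t, cf s v x • coeLat v) ≤ ∑ v ∈ t, cf s v x := by
      classical
      intro t
      induction t using Finset.induction_on with
      | empty => simp [h0]
      | insert a t ha ih =>
        intro hts
        rw [Finset.sum_insert ha, Finset.sum_insert ha]
        have has := hts (Finset.mem_insert_self a t)
        refine (G.sub _ _).trans (add_le_add ?_ (ih ((Finset.subset_insert _ _).trans hts)))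
        rw [G.hom _ _ (hx a has)]
        have := G.le_one a (hsV has)
        have := hx a has
        nlinarith
    have := key s subset_rfl
    rwa [cf_repr hsB] at this
  · obtain ⟨c, hc, hcx, hch⟩ := G.rep x
    have h1 : yw s 1 x = ∑ v ∈ s, cf s v x := by simp [yw_apply]
    rw [← h1, ← hch]
    conv_lhs => rw [← hcx]
    rw [map_sum]
    refine Finset.sum_le_sum fun v hv => ?_
    rw [map_smul, smul_eq_mul]
    have : yw s 1 (coeLat v) ≤ 1 := by
      by_contra! hlt
      exact absurd (hw.near s (mem_tri.mp hs).1 v hv hlt) (tri_le hs hv).not_gt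
    have := hc v
    nlinarith

end R4

namespace R4

def sg (s : Finset L4) (x : E4) : ℝ := ∑ v ∈ s, cf s v x

def box (s : Finset L4) (ξ : E4) : Set L4 :=
  {p | ∀ v ∈ s, (0 < cf s v ξ ∧ 0 ≤ cf s v (coeLat p) ∧ cf s v (coeLat p) < 1) ∨
    (cf s v ξ < 0 ∧ 0 < cf s v (coeLat p) ∧ cf s v (coeLat p) ≤ 1)}

lemma box_half {s : Finset L4} {ξ : E4} {p : L4} (hp : p ∈ box s ξ) : half s ξ (coeLat p) := by
  intro v hv
  rcases hp v hv with ⟨h1, h2, h3⟩ | ⟨h1, h2, h3⟩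
  · rcases h2.lt_or_eq with h | h
    · exact Or.inl h
    · exact Or.inr ⟨h.symm, h1⟩
  · exact Or.inl h2

lemma half_nonneg {s : Finset L4} {ξ x : E4} (hp : half s ξ x) : ∀ v ∈ s, 0 ≤ cf s v x := by
  intro v hv
  rcases hp v hv with h | h
  · exact h.le
  · exact h.1.ge

lemma cf_comb {s : Finset L4} (hs : IsB s) (m : L4 → ℕ) {v : L4} (hv : v ∈ s) :
    cf s v (coeLat (∑ u ∈ s, m u • u)) = m v := by
  refine cf_unique hs (fun v => (m v : ℝ)) ?_ hv
  rw [coeLat_sum]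
  exact Finset.sum_congr rfl fun u _ => (coeLat_nsmul _ _).symm

lemma sg_add (s : Finset L4) (x y : E4) : sg s (x + y) = sg s x + sg s y := by
  simp [sg, Finset.sum_add_distrib]

lemma sg_comb {s : Finset L4} (hs : IsB s) (m : L4 → ℕ) :
    sg s (coeLat (∑ u ∈ s, m u • u)) = ((∑ u ∈ s, m u : ℕ) : ℝ) := by
  rw [sg, Nat.cast_sum]
  exact Finset.sum_congr rfl fun u hu => cf_comb hs m hu

def PP (z : ℝ) : ℝ := (z + 1) * (z + 2) * (z + 3) / 6

lemma card_antidiag {s : Finset L4} (hs : IsB s) (k : ℕ) :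
    ((Finset.finsuppAntidiag s k).card : ℝ) = PP k := by
  classical
  rw [Finset.card_finsuppAntidiag_nat_eq_choose, hs.1]
  have h1 : (4 + k - 1).choose k = (k + 3).choose 3 := by
    rw [show 4 + k - 1 = k + 3 by omega, ← Nat.choose_symm_of_eq_add (by omega : k + 3 = k + 3)]
  have h2 := Nat.choose_mul_factorial_mul_factorial (show 3 ≤ k + 3 by omega)
  have h3 : (k + 3).factorial = (k + 3) * ((k + 2) * ((k + 1) * k.factorial)) := by
    simp [Nat.factorial_succ]
  have h4 : k + 3 - 3 = k := by omega
  rw [h4, h3] at h2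
  rw [h1, PP]
  have h5 : ((k + 3).choose 3 : ℝ) * 6 * k.factorial
      = (k + 3) * ((k + 2) * ((k + 1) * k.factorial)) := by
    have : Nat.factorial 3 = 6 := rfl
    rw [this] at h2
    exact_mod_cast h2
  have h6 : (k.factorial : ℝ) ≠ 0 := by positivity
  have h7 : ((k + 3).choose 3 : ℝ) * 6 = (k + 3) * ((k + 2) * (k + 1)) := by
    apply mul_right_cancel₀ h6
    linarith
  linarith

section count
variable {V : Finset L4} {h : E4 → ℝ} (G : Gauge V h) {w : L4 → ℝ} (hw : GoodW V w)
  {s : Finset L4} (hs : s ∈ tri V w) {ξ : E4} (hξ : ∀ s ∈ bases V, ∀ v ∈ s, cf s v ξ ≠ 0)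

lemma box_sg_le {V : Finset L4} {h : E4 → ℝ} (G : Gauge V h) {w : L4 → ℝ} (hw : GoodW V w)
    {s : Finset L4} (hs : s ∈ tri V w) {ξ : E4} {p : L4} (hp : p ∈ box s ξ) : h (coeLat p) = sg s (coeLat p) ∧
    h (coeLat p) ≤ 4 := by
  have h1 : h (coeLat p) = sg s (coeLat p) := gauge_on_cone G hw hs (half_nonneg (box_half hp))
  refine ⟨h1, ?_⟩
  rw [h1, sg]
  have hc := (mem_bases.mp (mem_tri.mp hs).1).2.1
  calc ∑ v ∈ s, cf s v (coeLat p) ≤ ∑ v ∈ s, (1:ℝ) := Finset.sum_le_sum fun v hv => by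
        rcases hp v hv with h | h
        · exact h.2.2.le
        · exact h.2.2
    _ = 4 := by simp [hc]

lemma box_finite {V : Finset L4} {h : E4 → ℝ} (G : Gauge V h) {w : L4 → ℝ} (hw : GoodW V w)
    {s : Finset L4} (hs : s ∈ tri V w) {ξ : E4} : (box s ξ).Finite :=
  (G.fin 4).subset fun _ hp => (box_sg_le G hw hs hp).2

/-- the lattice-part rounding -/
def rnd (a b : ℝ) : ℕ := if 0 < a then ⌊b⌋.toNat else (⌈b⌉ - 1).toNat

lemma rnd_spec {a b : ℝ} (ha : a ≠ 0) (hb : 0 < b ∨ (b = 0 ∧ 0 < a)) :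
    (0 < a ∧ 0 ≤ b - rnd a b ∧ b - rnd a b < 1) ∨ (a < 0 ∧ 0 < b - rnd a b ∧ b - rnd a b ≤ 1) := by
  have hb0 : 0 ≤ b := by rcases hb with h | h; exacts [h.le, h.1.ge]
  rcases lt_or_gt_of_ne ha with h | h
  · right
    have hb1 : 0 < b := hb.resolve_right fun h' => by linarith [h'.2]
    have h1 : 0 ≤ ⌈b⌉ - 1 := by have := Int.ceil_pos.mpr hb1; omega
    have h2 : ((rnd a b : ℕ) : ℝ) = ⌈b⌉ - 1 := by
      rw [rnd, if_neg h.not_gt]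
      have : (((⌈b⌉ - 1).toNat : ℤ) : ℝ) = ((⌈b⌉ - 1 : ℤ) : ℝ) := by rw [Int.toNat_of_nonneg h1]
      push_cast at this
      exact this
    rw [h2]
    exact ⟨h, by linarith [Int.ceil_lt_add_one b], by linarith [Int.le_ceil b]⟩
  · left
    have h1 : 0 ≤ ⌊b⌋ := Int.floor_nonneg.mpr hb0
    have h2 : ((rnd a b : ℕ) : ℝ) = ⌊b⌋ := by
      rw [rnd, if_pos h]
      have : (((⌊b⌋).toNat : ℤ) : ℝ) = ((⌊b⌋ : ℤ) : ℝ) := by rw [Int.toNat_of_nonneg h1]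
      exact_mod_cast this
    rw [h2]
    exact ⟨h, by linarith [Int.floor_le b], by linarith [Int.lt_floor_add_one b]⟩

lemma rnd_unique {a c : ℝ} {m m' : ℕ} (ha : (0 < a ∧ 0 ≤ c - m ∧ c - m < 1) ∨
    (a < 0 ∧ 0 < c - m ∧ c - m ≤ 1)) (ha' : (0 < a ∧ 0 ≤ c - m' ∧ c - m' < 1) ∨
    (a < 0 ∧ 0 < c - m' ∧ c - m' ≤ 1)) : m = m' := by
  have : (m : ℝ) < m' + 1 ∧ (m' : ℝ) < m + 1 := by
    rcases ha with ⟨h1, h2, h3⟩ | ⟨h1, h2, h3⟩ <;> rcases ha' with ⟨h4, h5, h6⟩ | ⟨h4, h5, h6⟩ <;>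
      constructor <;> linarith
  obtain ⟨h1, h2⟩ := this
  have h1 : m < m' + 1 := by exact_mod_cast h1
  have h2 : m' < m + 1 := by exact_mod_cast h2
  omega

lemma count_cone {V : Finset L4} {h : E4 → ℝ} (G : Gauge V h) {w : L4 → ℝ} (hw : GoodW V w)
    {s : Finset L4} (hs : s ∈ tri V w) {ξ : E4} (hξ : ∀ s ∈ bases V, ∀ v ∈ s, cf s v ξ ≠ 0) (kp : L4 → ℕ) (hkp : ∀ x, h (coeLat x) = kp x) (j : ℕ) (hj : 1 ≤ j) :
    ({x : L4 | half s ξ (coeLat x) ∧ kp x = j}.ncard : ℝ) =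
      ∑ p ∈ (box_finite G hw hs (ξ := ξ)).toFinset, PP ((j : ℝ) - kp p) := by
  classical
  have hsb := (mem_tri.mp hs).1
  have hB := (mem_bases.mp hsb).2
  have hfin : {x : L4 | half s ξ (coeLat x) ∧ kp x = j}.Finite :=
    (G.fin j).subset fun x hx => by simp [hkp, hx.2]
  have hk : ∀ x : L4, half s ξ (coeLat x) → sg s (coeLat x) = kp x := fun x hx => by
    rw [← hkp]; exact (gauge_on_cone G hw hs (half_nonneg hx)).symm
  set T : L4 → Finset (L4 →₀ ℕ) := fun p =>
    if kp p ≤ j then Finset.finsuppAntidiag s (j - kp p) else ∅ with hT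
  have hmemT : ∀ p m, m ∈ T p ↔ (∑ v ∈ s, m v) + kp p = j ∧ m.support ⊆ s := by
    intro p m
    simp only [hT]
    split_ifs with h1
    · rw [Finset.mem_finsuppAntidiag]
      change (∑ v ∈ s, m v) = j - kp p ∧ _ ↔ _
      constructor <;> rintro ⟨h2, h3⟩ <;> exact ⟨by omega, h3⟩
    · simp only [Finset.notMem_empty, false_iff]
      rintro ⟨h2, -⟩
      omega
  have hbij : (((box_finite G hw hs (ξ := ξ)).toFinset).sigma T).card = hfin.toFinset.card := by
    refine Finset.card_bij (fun q _ => q.1 + ∑ u ∈ s, q.2 u • u) ?_ ?_ ?_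
    · rintro ⟨p, m⟩ hpm
      simp only [Finset.mem_sigma, Set.Finite.mem_toFinset, hmemT] at hpm
      obtain ⟨hp, hm, -⟩ := hpm
      have hh : half s ξ (coeLat (p + ∑ u ∈ s, m u • u)) := by
        intro v hv
        rw [coeLat_add, map_add, cf_comb hB _ hv]
        rcases box_half hp v hv with h1 | h1
        · left; positivity
        · rcases (Nat.zero_le (m v)).lt_or_eq with h2 | h2
          · left; rw [h1.1, zero_add]; exact_mod_cast h2
          · right; rw [h1.1, ← h2]; simpa using h1.2
      simp only [Set.Finite.mem_toFinset, Set.mem_ofPred_eq]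
      refine ⟨hh, ?_⟩
      have h1 := hk _ hh
      rw [coeLat_add, sg_add, sg_comb hB, hk p (box_half hp)] at h1
      have h2 : kp p + ∑ u ∈ s, m u = kp (p + ∑ u ∈ s, m u • u) := by exact_mod_cast h1
      rw [← h2]; omega
    · rintro ⟨p, m⟩ hpm ⟨p', m'⟩ hpm' heq
      simp only [Finset.mem_sigma, Set.Finite.mem_toFinset, hmemT] at hpm hpm'
      simp only at heq
      have hmm : m = m' := by
        ext v
        by_cases hv : v ∈ s
        · have e1 : cf s v (coeLat (p + ∑ u ∈ s, m u • u)) - m v = cf s v (coeLat p) := by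
            rw [coeLat_add, map_add, cf_comb hB _ hv]; ring
          have e2 : cf s v (coeLat (p + ∑ u ∈ s, m u • u)) - m' v = cf s v (coeLat p') := by
            rw [heq, coeLat_add, map_add, cf_comb hB _ hv]; ring
          have b1 := hpm.1 v hv
          have b2 := hpm'.1 v hv
          rw [← e1] at b1
          rw [← e2] at b2
          exact rnd_unique b1 b2
        · rw [Finsupp.notMem_support_iff.mp fun h => hv (hpm.2.2 h),
            Finsupp.notMem_support_iff.mp fun h => hv (hpm'.2.2 h)]
      subst hmm
      have : p = p' := add_right_cancel heq
      subst this
      rfl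
    · intro x hx
      simp only [Set.Finite.mem_toFinset, Set.mem_ofPred_eq] at hx
      let m : L4 →₀ ℕ := Finsupp.onFinset s
        (fun v => if v ∈ s then rnd (cf s v ξ) (cf s v (coeLat x)) else 0)
        (fun v hv => by by_contra h; simp [h] at hv)
      have hm : ∀ v ∈ s, m v = rnd (cf s v ξ) (cf s v (coeLat x)) := by
        intro v hv; simp [m, hv]
      have hp : x - ∑ u ∈ s, m u • u ∈ box s ξ := by
        intro v hv
        rw [coeLat_sub, map_sub, cf_comb hB _ hv, hm v hv]
        exact rnd_spec (hξ s hsb v hv) (hx.1 v hv)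
      refine ⟨⟨x - ∑ u ∈ s, m u • u, m⟩, ?_, by simp⟩
      simp only [Finset.mem_sigma, Set.Finite.mem_toFinset, hmemT]
      refine ⟨hp, ?_, Finsupp.support_onFinset_subset⟩
      have h1 := hk _ (box_half hp)
      have h2 := hk _ hx.1
      have h3 : sg s (coeLat x) = sg s (coeLat (x - ∑ u ∈ s, m u • u)) +
          sg s (coeLat (∑ u ∈ s, m u • u)) := by
        rw [← sg_add, ← coeLat_add, sub_add_cancel]
      rw [h1, h2, sg_comb hB, hx.2] at h3
      have h3 : j = kp (x - ∑ u ∈ s, m u • u) + ∑ u ∈ s, m u := by exact_mod_cast h3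
      omega
  rw [Set.ncard_eq_toFinset_card _ hfin, ← hbij, Finset.card_sigma, Nat.cast_sum]
  refine Finset.sum_congr rfl fun p hp => ?_
  simp only [Set.Finite.mem_toFinset] at hp
  simp only [hT]
  split_ifs with h1
  · rw [card_antidiag hB, Nat.cast_sub h1]
  · have h2 : kp p ≤ 4 := by
      have := (box_sg_le G hw hs hp).2
      rw [hkp] at this
      exact_mod_cast this
    have h3 : kp p = j + 1 ∨ kp p = j + 2 ∨ kp p = j + 3 := by omega
    rcases h3 with h3 | h3 | h3 <;> rw [h3] <;> simp [PP]

lemma box_neg {V : Finset L4} {h : E4 → ℝ} (G : Gauge V h) {w : L4 → ℝ} (hw : GoodW V w)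
    {s : Finset L4} (hs : s ∈ tri V w) {ξ : E4} (kp : L4 → ℕ) (hkp : ∀ x, h (coeLat x) = kp x) (F : ℝ → ℝ) :
    ∑ p ∈ (box_finite G hw hs (ξ := -ξ)).toFinset, F (kp p) =
    ∑ p ∈ (box_finite G hw hs (ξ := ξ)).toFinset, F (4 - kp p) := by
  classical
  have hsb := (mem_tri.mp hs).1
  have hB := (mem_bases.mp hsb).2
  have hc : ∀ (p : L4), ∀ v ∈ s, cf s v (coeLat (∑ u ∈ s, u - p)) = 1 - cf s v (coeLat p) := by
    intro p v hv
    rw [coeLat_sub, map_sub]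
    have := cf_comb hB (fun _ => 1) hv
    simp only [one_smul, Nat.cast_one] at this
    rw [this]
  have hb : ∀ (ξ : E4) (p : L4), p ∈ box s (-ξ) → ∑ u ∈ s, u - p ∈ box s ξ := by
    intro ξ p hp v hv
    have := hp v hv
    rw [hc p v hv]
    simp only [map_neg, Left.neg_pos_iff, Left.neg_neg_iff] at this
    rcases this with ⟨h1, h2, h3⟩ | ⟨h1, h2, h3⟩
    · right; exact ⟨h1, by linarith, by linarith⟩
    · left; exact ⟨h1, by linarith, by linarith⟩
  refine Finset.sum_bij' (fun p _ => ∑ u ∈ s, u - p) (fun p _ => ∑ u ∈ s, u - p) ?_ ?_ ?_ ?_ ?_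
  · intro p hp
    simp only [Set.Finite.mem_toFinset] at hp ⊢
    exact hb ξ p hp
  · intro p hp
    simp only [Set.Finite.mem_toFinset] at hp ⊢
    exact hb (-ξ) p (by rwa [neg_neg])
  · intro p _; simp
  · intro p _; simp
  · intro p hp
    simp only [Set.Finite.mem_toFinset] at hp
    congr 1
    have h1 := (box_sg_le G hw hs hp).1
    have h2 := (box_sg_le G hw hs (hb ξ p hp)).1
    rw [hkp, sg] at h1 h2
    rw [Finset.sum_congr rfl (hc p), Finset.sum_sub_distrib, ← h1] at h2
    simp only [Finset.sum_const, hB.1] at h2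
    rw [h2]; simp

end count

theorem ehrhart_odd {V : Finset L4} {h : E4 → ℝ} (G : Gauge V h) :
    ∃ a b : ℝ, ∀ j : ℕ, 1 ≤ j →
      ({x : L4 | h (coeLat x) = j}.ncard : ℝ) = a * j ^ 3 + b * j := by
  classical
  choose kp hkp using G.int
  obtain ⟨w, hw⟩ := exists_w V
  obtain ⟨ξ, hξ⟩ := exists_xi V
  have main : ∀ ξ : E4, (∀ s ∈ bases V, ∀ v ∈ s, cf s v ξ ≠ 0) → ∀ j : ℕ, 1 ≤ j →
      ({x : L4 | h (coeLat x) = j}.ncard : ℝ) = ∑ s : {s // s ∈ tri V w},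
        ∑ p ∈ (box_finite G hw s.2 (ξ := ξ)).toFinset, PP ((j : ℝ) - kp p) := by
    intro ξ hξ j hj
    rw [Finset.sum_congr rfl fun s _ => (count_cone G hw s.2 hξ kp hkp j hj).symm]
    have hfin : ∀ s : Finset L4, {x : L4 | half s ξ (coeLat x) ∧ kp x = j}.Finite := fun s =>
      (G.fin j).subset fun x hx => by simp [hkp, hx.2]
    have hfin' : {x : L4 | h (coeLat x) = j}.Finite := (G.fin j).subset fun x hx => le_of_eq hx
    rw [Set.ncard_eq_toFinset_card _ hfin']
    have : hfin'.toFinset = Finset.univ.biUnion fun s : {s // s ∈ tri V w} =>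
        (hfin s.1).toFinset := by
      ext x
      simp only [Set.Finite.mem_toFinset, Set.mem_ofPred_eq, Finset.mem_biUnion, Finset.mem_univ,
        true_and]
      constructor
      · intro hx
        obtain ⟨s, ⟨hs, hsx⟩, -⟩ := tri_half G hw ξ hξ (coeLat x)
        refine ⟨⟨s, hs⟩, hsx, ?_⟩
        rw [hkp] at hx; exact_mod_cast hx
      · rintro ⟨s, -, hx⟩
        rw [hkp, hx]
    rw [this, Finset.card_biUnion, Nat.cast_sum]
    · refine Finset.sum_congr rfl fun s _ => ?_
      rw [Set.ncard_eq_toFinset_card _ (hfin s.1)]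
    · intro s _ t _ hst
      refine Finset.disjoint_left.mpr ?_
      intro x hx hx'
      simp only [Set.Finite.mem_toFinset, Set.mem_ofPred_eq] at hx hx'
      obtain ⟨r, -, hr⟩ := tri_half G hw ξ hξ (coeLat x)
      exact hst (Subtype.ext ((hr s.1 ⟨s.2, hx.1⟩).trans (hr t.1 ⟨t.2, hx'.1⟩).symm))
  refine ⟨∑ s : {s // s ∈ tri V w}, ∑ p ∈ (box_finite G hw s.2 (ξ := ξ)).toFinset, (1/6 : ℝ),
    ∑ s : {s // s ∈ tri V w}, ∑ p ∈ (box_finite G hw s.2 (ξ := ξ)).toFinset,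
      (3 * ((kp p : ℝ) - 2) ^ 2 - 1) / 6, fun j hj => ?_⟩
  have h1 := main ξ hξ j hj
  have h2 := main (-ξ) (fun s hs v hv => by simpa using hξ s hs v hv) j hj
  rw [Finset.sum_congr rfl fun s _ => box_neg G hw s.2 kp hkp (fun k => PP ((j : ℝ) - k))] at h2
  have h3 : ({x : L4 | h (coeLat x) = j}.ncard : ℝ) + {x : L4 | h (coeLat x) = j}.ncard =
      ∑ s : {s // s ∈ tri V w}, ∑ p ∈ (box_finite G hw s.2 (ξ := ξ)).toFinset,
        (2 * (1/6 : ℝ) * j ^ 3 + 2 * ((3 * ((kp p : ℝ) - 2) ^ 2 - 1) / 6) * j) := by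
    conv_lhs => arg 1; rw [h1]
    conv_lhs => arg 2; rw [h2]
    rw [← Finset.sum_add_distrib]
    refine Finset.sum_congr rfl fun s _ => ?_
    rw [← Finset.sum_add_distrib]
    refine Finset.sum_congr rfl fun p _ => ?_
    simp only [PP]; ring
  have h4 : ∑ s : {s // s ∈ tri V w}, ∑ p ∈ (box_finite G hw s.2 (ξ := ξ)).toFinset,
        (2 * (1/6 : ℝ) * j ^ 3 + 2 * ((3 * ((kp p : ℝ) - 2) ^ 2 - 1) / 6) * j) =
      2 * ((∑ s : {s // s ∈ tri V w}, ∑ p ∈ (box_finite G hw s.2 (ξ := ξ)).toFinset, (1/6 : ℝ))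
        * j ^ 3 + (∑ s : {s // s ∈ tri V w}, ∑ p ∈ (box_finite G hw s.2 (ξ := ξ)).toFinset,
      (3 * ((kp p : ℝ) - 2) ^ 2 - 1) / 6) * j) := by
    simp only [Finset.sum_add_distrib, Finset.sum_mul, Finset.mul_sum, mul_add, mul_assoc]
  linarith

end R4

namespace R4

def dot (y x : L4) : ℤ := ∑ i, y i * x i

lemma dot_add (y x x' : L4) : dot y (x + x') = dot y x + dot y x' := by
  simp [dot, mul_add, Finset.sum_add_distrib]
lemma dot_neg (y x : L4) : dot y (-x) = -dot y x := by
  simp [dot]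
lemma dot_sub (y x x' : L4) : dot y (x - x') = dot y x - dot y x' := by
  simp [dot, mul_sub, Finset.sum_sub_distrib]
lemma dot_smul (y x : L4) (k : ℤ) : dot y (k • x) = k * dot y x := by
  simp only [dot, Finset.mul_sum, Pi.smul_apply, smul_eq_mul]
  exact Finset.sum_congr rfl fun i _ => by ring
lemma sub_dot (y y' x : L4) : dot (y - y') x = dot y x - dot y' x := by
  simp [dot, sub_mul, Finset.sum_sub_distrib]
lemma smul_dot (y x : L4) (k : ℤ) : dot (k • y) x = k * dot y x := by
  simp only [dot, Finset.mul_sum, Pi.smul_apply, smul_eq_mul]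
  exact Finset.sum_congr rfl fun i _ => by ring

structure AD (Y : Finset L4) (H : L4 → ℤ) : Prop where
  le : ∀ y ∈ Y, ∀ x, dot y x ≤ H x
  ex : ∀ x, ∃ y ∈ Y, dot y x = H x
  pos : ∃ c : ℝ, 0 < c ∧ ∀ x, c * ∑ i, |(x i : ℝ)| ≤ H x
  indep : ∀ y1 ∈ Y, ∀ y2 ∈ Y, ∀ y3 ∈ Y, y1 ≠ y2 → y1 ≠ y3 → y2 ≠ y3 →
    ∃ i j, (y1 - y2) i * (y1 - y3) j ≠ (y1 - y2) j * (y1 - y3) i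

/-- the exponential weight -/
def ew (H : L4 → ℤ) (s : ℝ) (x : L4) : ℝ := Real.exp (-(s * (H x : ℝ)))

lemma ew_pos (H : L4 → ℤ) (s : ℝ) (x : L4) : 0 < ew H s x := Real.exp_pos _

/-- growth bound for weighted sums over a set -/
def Dd (H : L4 → ℤ) (p : ℕ) (E : Set L4) : Prop :=
  ∃ C : ℝ, 0 ≤ C ∧ ∀ s : ℝ, 0 < s → s ≤ 1 → s ^ p * ∑' x, E.indicator (ew H s) x ≤ C

lemma int_exp_bound (c : ℝ) (hc : 0 < c) : ∃ C : ℝ, 0 ≤ C ∧ ∀ s : ℝ, 0 < s → s ≤ 1 → ∀ M : ℕ,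
    s * ∑ n ∈ Finset.Icc (-(M : ℤ)) M, Real.exp (-(s * (c * |(n : ℝ)|))) ≤ C := by
  refine ⟨2 * (1 + 1 / c), by positivity, fun s hs hs1 M => ?_⟩
  have hsc : 0 < s * c := by positivity
  set q := Real.exp (-(s * c)) with hq
  have hq0 : 0 < q := Real.exp_pos _
  have hq1 : q < 1 := by rw [hq, Real.exp_lt_one_iff]; linarith
  have hg : ∑ j ∈ Finset.range (M + 1), q ^ j ≤ 1 / (1 - q) := by
    rw [geom_sum_eq hq1.ne, ← neg_div_neg_eq]
    have : 0 < q ^ (M + 1) := by positivity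
    apply div_le_div₀ <;> linarith
  have h1q : s / (1 - q) ≤ 1 + 1 / c := by
    have h2 : (1 + s * c) * q ≤ 1 := by
      have h3 : 1 + s * c ≤ Real.exp (s * c) := by linarith [Real.add_one_le_exp (s * c)]
      calc (1 + s * c) * q ≤ Real.exp (s * c) * q := by gcongr
        _ = 1 := by rw [hq, ← Real.exp_add]; simp
    have h3 : (1 + 1 / c) * (1 - q) - s = ((1 + c) * (1 - q) - s * c) / c := by field_simp; ring
    rw [div_le_iff₀ (by linarith), ← sub_nonneg, h3]
    apply div_nonneg _ hc.le
    have h4 : s * c ≤ (1 + s * c) * (1 - q) := by nlinarith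
    have h5 : s * c ≤ c := by nlinarith
    have h6 : (1 + s * c) * (1 - q) ≤ (1 + c) * (1 - q) :=
      mul_le_mul_of_nonneg_right (by linarith) (by linarith)
    linarith
  have hsum : ∑ n ∈ Finset.Icc (-(M : ℤ)) M, Real.exp (-(s * (c * |(n : ℝ)|)))
      ≤ 2 * ∑ j ∈ Finset.range (M + 1), q ^ j := by
    have hsub : Finset.Icc (-(M : ℤ)) M ⊆
        (Finset.range (M + 1)).image (fun j : ℕ => (j : ℤ)) ∪
        (Finset.range (M + 1)).image (fun j : ℕ => -(j : ℤ)) := by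
      intro n hn
      rw [Finset.mem_Icc] at hn
      rw [Finset.mem_union, Finset.mem_image, Finset.mem_image]
      rcases le_total 0 n with h | h
      · left; exact ⟨n.toNat, by rw [Finset.mem_range]; omega, by omega⟩
      · right; exact ⟨(-n).toNat, by rw [Finset.mem_range]; omega, by omega⟩
    calc _ ≤ ∑ n ∈ (Finset.range (M + 1)).image (fun j : ℕ => (j : ℤ)) ∪
        (Finset.range (M + 1)).image (fun j : ℕ => -(j : ℤ)), Real.exp (-(s * (c * |(n : ℝ)|))) :=
          Finset.sum_le_sum_of_subset_of_nonneg hsub fun _ _ _ => (Real.exp_pos _).le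
      _ ≤ ∑ n ∈ (Finset.range (M + 1)).image (fun j : ℕ => (j : ℤ)),
            Real.exp (-(s * (c * |(n : ℝ)|))) +
          ∑ n ∈ (Finset.range (M + 1)).image (fun j : ℕ => -(j : ℤ)),
            Real.exp (-(s * (c * |(n : ℝ)|))) := by
          rw [← Finset.sum_union_inter]
          have : 0 ≤ ∑ n ∈ (Finset.range (M + 1)).image (fun j : ℕ => (j : ℤ)) ∩
            (Finset.range (M + 1)).image (fun j : ℕ => -(j : ℤ)),
            Real.exp (-(s * (c * |(n : ℝ)|))) := Finset.sum_nonneg fun _ _ => (Real.exp_pos _).le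
          linarith
      _ = _ := by
          rw [Finset.sum_image (by intro a _ b _ h; simpa using h),
            Finset.sum_image (by intro a _ b _ h; simpa using h), two_mul]
          congr 1 <;>
          · refine Finset.sum_congr rfl fun j _ => ?_
            rw [hq, ← Real.exp_nat_mul]
            congr 1
            push_cast
            simp
            ring
  calc _ ≤ s * (2 * (1 / (1 - q))) := by gcongr; exact hsum.trans (by gcongr)
    _ = 2 * (s / (1 - q)) := by ring
    _ ≤ _ := by gcongr

lemma weight_fin {H : L4 → ℤ} {c : ℝ} (hc0 : 0 < c)
    (hc : ∀ x, c * ∑ i, |(x i : ℝ)| ≤ H x) (J : Finset (Fin 4)) (E : Set L4)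
    {α : Type*} (g : L4 → α) (F : Finset α) (hF : ∀ x ∈ E, g x ∈ F)
    (hinj : ∀ x ∈ E, ∀ x' ∈ E, g x = g x' → (∀ i ∈ J, x i = x' i) → x = x') :
    ∃ C : ℝ, 0 ≤ C ∧ ∀ s : ℝ, 0 < s → s ≤ 1 → ∀ A : Finset L4,
      s ^ J.card * ∑ x ∈ A, E.indicator (ew H s) x ≤ C := by
  classical
  obtain ⟨C, hC0, hC⟩ := int_exp_bound c hc0
  refine ⟨F.card * C ^ J.card, by positivity, fun s hs hs1 A => ?_⟩
  obtain ⟨M, hM⟩ : ∃ M : ℕ, ∀ x ∈ A, ∀ i, |x i| ≤ M := by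
    refine ⟨A.sup fun x => Finset.univ.sup fun i => (x i).natAbs, fun x hx i => ?_⟩
    have h1 : (x i).natAbs ≤ Finset.univ.sup fun i => (x i).natAbs :=
      Finset.le_sup (f := fun i => (x i).natAbs) (Finset.mem_univ i)
    have h2 := Finset.le_sup (f := fun x : L4 => Finset.univ.sup fun i => (x i).natAbs) hx
    have h3 : (x i).natAbs ≤ _ := h1.trans h2
    rw [Int.abs_eq_natAbs]
    exact_mod_cast h3
  set e : ℤ → ℝ := fun n => Real.exp (-(s * (c * |(n : ℝ)|))) with he
  have hle : ∀ x, ew H s x ≤ ∏ i : J, e (x i) := by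
    intro x
    rw [he, ← Real.exp_sum, ew, Real.exp_le_exp, Finset.sum_neg_distrib, neg_le_neg_iff,
      ← Finset.mul_sum, ← Finset.mul_sum]
    refine mul_le_mul_of_nonneg_left (le_trans ?_ (hc x)) hs.le
    refine mul_le_mul_of_nonneg_left ?_ hc0.le
    rw [Finset.sum_coe_sort J (fun i => |(x i : ℝ)|)]
    exact Finset.sum_le_sum_of_subset_of_nonneg (Finset.subset_univ _) fun _ _ _ => abs_nonneg _
  have h1 : ∑ x ∈ A, E.indicator (ew H s) x = ∑ x ∈ A.filter (· ∈ E), ew H s x := by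
    rw [Finset.sum_filter]
    exact Finset.sum_congr rfl fun x _ => by simp [Set.indicator_apply]
  have h2 : ∑ x ∈ A.filter (· ∈ E), ew H s x ≤
      ∑ p ∈ F ×ˢ Fintype.piFinset (fun _ : J => Finset.Icc (-(M : ℤ)) M), ∏ i : J, e (p.2 i) := by
    calc _ ≤ ∑ x ∈ A.filter (· ∈ E), ∏ i : J, e (x i) := Finset.sum_le_sum fun x _ => hle x
      _ = ∑ p ∈ (A.filter (· ∈ E)).image (fun x => (g x, fun i : J => x i)),
          ∏ i : J, e (p.2 i) := by
          rw [Finset.sum_image]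
          intro x hx x' hx' h
          rw [Finset.mem_coe, Finset.mem_filter] at hx hx'
          rw [Prod.mk.injEq] at h
          exact hinj x hx.2 x' hx'.2 h.1 fun i hi => congrFun h.2 ⟨i, hi⟩
      _ ≤ _ := by
          refine Finset.sum_le_sum_of_subset_of_nonneg ?_ fun _ _ _ =>
            Finset.prod_nonneg fun _ _ => (Real.exp_pos _).le
          intro p hp
          obtain ⟨x, hx, rfl⟩ := Finset.mem_image.mp hp
          rw [Finset.mem_filter] at hx
          rw [Finset.mem_product, Fintype.mem_piFinset]
          refine ⟨hF x hx.2, fun i => ?_⟩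
          rw [Finset.mem_Icc]
          exact abs_le.mp (hM x hx.1 i)
  have h3 : ∑ p ∈ F ×ˢ Fintype.piFinset (fun _ : J => Finset.Icc (-(M : ℤ)) M),
      ∏ i : J, e (p.2 i) = F.card * (∑ n ∈ Finset.Icc (-(M : ℤ)) M, e n) ^ J.card := by
    rw [Finset.sum_product]
    simp only [Finset.sum_const, nsmul_eq_mul]
    congr 1
    rw [← Finset.prod_univ_sum]
    simp
  rw [h1]
  calc _ ≤ s ^ J.card * (F.card * (∑ n ∈ Finset.Icc (-(M : ℤ)) M, e n) ^ J.card) := by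
        gcongr; exact h2.trans_eq h3
    _ = F.card * (s * ∑ n ∈ Finset.Icc (-(M : ℤ)) M, e n) ^ J.card := by rw [mul_pow]; ring
    _ ≤ _ := by
      have : 0 ≤ ∑ n ∈ Finset.Icc (-(M : ℤ)) M, e n :=
        Finset.sum_nonneg fun _ _ => (Real.exp_pos _).le
      gcongr
      exact hC s hs hs1 M

lemma ew_anti {H : L4 → ℤ} (hH : ∀ x, 0 ≤ H x) {s t : ℝ} (h : s ≤ t) (x : L4) :
    ew H t x ≤ ew H s x := by
  have : (0 : ℝ) ≤ H x := by exact_mod_cast hH x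
  rw [ew, ew, Real.exp_le_exp]
  nlinarith

variable {Y : Finset L4} {H : L4 → ℤ}

lemma AD.nonneg (A : AD Y H) (x : L4) : 0 ≤ H x := by
  obtain ⟨c, hc, h⟩ := A.pos
  have := h x
  have h2 : 0 ≤ c * ∑ i, |(x i : ℝ)| := by positivity
  exact_mod_cast h2.trans this

lemma AD.summable (A : AD Y H) {s : ℝ} (hs : 0 < s) : Summable (ew H s) := by
  obtain ⟨c, hc, h⟩ := A.pos
  obtain ⟨C, hC0, hC⟩ := weight_fin hc h Finset.univ Set.univ (fun _ => ()) {()} (by simp)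
    (by intro x _ x' _ _ h; ext i; exact h i (Finset.mem_univ i))
  have h1 : Summable (ew H (min s 1)) := by
    have hm : 0 < min s 1 := by positivity
    refine summable_of_sum_le (c := C / (min s 1) ^ 4) (fun x => (ew_pos H _ x).le) fun u => ?_
    rw [le_div_iff₀ (by positivity), mul_comm]
    have := hC (min s 1) hm (min_le_right _ _) u
    simpa using this
  exact Summable.of_nonneg_of_le (fun x => (ew_pos H _ x).le)
    (fun x => ew_anti A.nonneg (min_le_left _ _) x) h1

lemma AD.summable_ind (A : AD Y H) {s : ℝ} (hs : 0 < s) (E : Set L4) :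
    Summable (E.indicator (ew H s)) := (A.summable hs).indicator E

lemma AD.Dd_of (A : AD Y H) (J : Finset (Fin 4)) (E : Set L4)
    {α : Type*} (g : L4 → α) (F : Finset α) (hF : ∀ x ∈ E, g x ∈ F)
    (hinj : ∀ x ∈ E, ∀ x' ∈ E, g x = g x' → (∀ i ∈ J, x i = x' i) → x = x') :
    Dd H J.card E := by
  obtain ⟨c, hc, h⟩ := A.pos
  obtain ⟨C, hC0, hC⟩ := weight_fin hc h J E g F hF hinj
  refine ⟨C, hC0, fun s hs hs1 => ?_⟩
  rw [mul_comm, ← le_div_iff₀ (by positivity)]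
  refine (A.summable_ind hs E).tsum_le_of_sum_le fun u => ?_
  rw [le_div_iff₀ (by positivity), mul_comm]
  exact hC s hs hs1 u

lemma AD.D4 (A : AD Y H) : Dd H 4 Set.univ :=
  A.Dd_of Finset.univ Set.univ (fun _ => ()) {()} (by simp)
    (by intro x _ x' _ _ h; ext i; exact h i (Finset.mem_univ i))

lemma AD.Dmono (A : AD Y H) {p : ℕ} {E E' : Set L4} (h : Dd H p E') (hE : E ⊆ E') : Dd H p E := by
  obtain ⟨C, hC0, hC⟩ := h
  refine ⟨C, hC0, fun s hs hs1 => le_trans ?_ (hC s hs hs1)⟩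
  refine mul_le_mul_of_nonneg_left ?_ (by positivity)
  refine (A.summable_ind hs E).tsum_le_tsum (fun x => ?_) (A.summable_ind hs E')
  exact Set.indicator_le_indicator_of_subset hE (fun x => (ew_pos H s x).le) x

lemma AD.Dunion (A : AD Y H) {p : ℕ} {E E' : Set L4} (h : Dd H p E) (h' : Dd H p E') :
    Dd H p (E ∪ E') := by
  obtain ⟨C, hC0, hC⟩ := h
  obtain ⟨C', hC0', hC'⟩ := h'
  refine ⟨C + C', by positivity, fun s hs hs1 => ?_⟩
  refine le_trans ?_ (add_le_add (hC s hs hs1) (hC' s hs hs1))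
  rw [← mul_add, ← (A.summable_ind hs E).tsum_add (A.summable_ind hs E')]
  refine mul_le_mul_of_nonneg_left ?_ (by positivity)
  refine (A.summable_ind hs _).tsum_le_tsum (fun x => ?_)
    ((A.summable_ind hs _).add (A.summable_ind hs _))
  have := (ew_pos H s x).le
  by_cases h1 : x ∈ E <;> by_cases h2 : x ∈ E' <;> simp [h1, h2, this]

lemma Dempty {p : ℕ} : Dd H p ∅ := ⟨0, le_rfl, fun s _ _ => by simp⟩

lemma AD.Dbiunion (A : AD Y H) {p : ℕ} {ι : Type*} (I : Finset ι) (E : ι → Set L4)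
    (h : ∀ i ∈ I, Dd H p (E i)) : Dd H p (⋃ i ∈ I, E i) := by
  classical
  induction I using Finset.induction_on with
  | empty => simpa using Dempty
  | insert a I _ ih =>
    rw [Finset.set_biUnion_insert]
    exact A.Dunion (h a (Finset.mem_insert_self _ _))
      (ih fun i hi => h i (Finset.mem_insert_of_mem hi))

/-- one functional -/
lemma AD.D3 (A : AD Y H) (a : E4) (i : Fin 4) (ha : a i ≠ 0) (E : Set L4) (F : Finset ℝ)
    (hF : ∀ x ∈ E, ∑ j, a j * (x j : ℝ) ∈ F) : Dd H 3 E := by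
  have := A.Dd_of (Finset.univ.erase i) E (fun x => ∑ j, a j * (x j : ℝ)) F hF (by
    intro x _ x' _ h1 h2
    have h3 : ∀ j, j ≠ i → x j = x' j := fun j hj => h2 j (by simp [hj])
    ext j
    by_cases hj : j = i
    · subst hj
      rw [← Finset.add_sum_erase _ _ (Finset.mem_univ j),
        ← Finset.add_sum_erase _ (fun j => a j * (x' j : ℝ)) (Finset.mem_univ j)] at h1
      rw [Finset.sum_congr rfl fun k hk => by rw [h3 k (Finset.ne_of_mem_erase hk)]] at h1
      have := mul_left_cancel₀ ha (add_right_cancel h1)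
      exact_mod_cast this
    · exact h3 j hj)
  simpa using this

/-- two functionals -/
lemma AD.D2 (A : AD Y H) (a b : E4) (i j : Fin 4) (hij : a i * b j ≠ a j * b i) (E : Set L4)
    (F : Finset (ℝ × ℝ))
    (hF : ∀ x ∈ E, (∑ k, a k * (x k : ℝ), ∑ k, b k * (x k : ℝ)) ∈ F) : Dd H 2 E := by
  have hne : i ≠ j := by rintro rfl; exact hij rfl
  have hcard : ((Finset.univ.erase i).erase j).card = 2 := by
    rw [Finset.card_erase_of_mem (by simp [hne.symm]), Finset.card_erase_of_mem (by simp)]; simp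
  rw [← hcard]
  refine A.Dd_of _ E _ F hF ?_
  intro x _ x' _ h1 h2
  have h3 : ∀ k, k ≠ i → k ≠ j → x k = x' k := fun k hk hk' => h2 k (by simp [hk, hk'])
  rw [Prod.mk.injEq] at h1
  have key : ∀ a : E4, ∑ k, a k * (x k : ℝ) = ∑ k, a k * (x' k : ℝ) →
      a i * ((x i : ℝ) - x' i) + a j * ((x j : ℝ) - x' j) = 0 := by
    intro a h
    have h4 : ∑ k, a k * ((x k : ℝ) - x' k) = 0 := by
      simp only [mul_sub, Finset.sum_sub_distrib, h, sub_self]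
    rw [← Finset.add_sum_erase _ _ (Finset.mem_univ i),
      ← Finset.add_sum_erase (Finset.univ.erase i) _ (a := j) (by simp [hne.symm]),
      Finset.sum_eq_zero (s := (Finset.univ.erase i).erase j)] at h4
    · linarith
    · intro k hk
      rw [h3 k (by simp at hk; exact hk.2) (by simp at hk; exact hk.1)]
      simp
  have ka := key a h1.1
  have kb := key b h1.2
  have hd : a i * b j - a j * b i ≠ 0 := sub_ne_zero.mpr hij
  have hi : (a i * b j - a j * b i) * ((x i : ℝ) - x' i) = 0 := by linear_combination b j * ka - a j * kb
  have hj : (a i * b j - a j * b i) * ((x j : ℝ) - x' j) = 0 := by linear_combination a i * kb - b i * ka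
  have hi' := sub_eq_zero.mp ((mul_eq_zero.mp hi).resolve_left hd)
  have hj' := sub_eq_zero.mp ((mul_eq_zero.mp hj).resolve_left hd)
  ext k
  by_cases hk : k = i
  · subst hk; exact_mod_cast hi'
  by_cases hk' : k = j
  · subst hk'; exact_mod_cast hj'
  exact h3 k hk hk'

end R4

namespace R4

variable {Y : Finset L4} {H : L4 → ℤ}

def near (H : L4 → ℤ) (K : ℤ) (y x : L4) : Prop := H x - K ≤ dot y x

def tripS (Y : Finset L4) (H : L4 → ℤ) (K : ℤ) : Set L4 :=
  {x | ∃ y1 ∈ Y, ∃ y2 ∈ Y, ∃ y3 ∈ Y, y1 ≠ y2 ∧ y1 ≠ y3 ∧ y2 ≠ y3 ∧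
    near H K y1 x ∧ near H K y2 x ∧ near H K y3 x}

def pairS (Y : Finset L4) (H : L4 → ℤ) (K : ℤ) : Set L4 :=
  {x | ∃ y1 ∈ Y, ∃ y2 ∈ Y, y1 ≠ y2 ∧ near H K y1 x ∧ near H K y2 x}

lemma dot_cast (y x : L4) : ∑ j, (coeLat y) j * (x j : ℝ) = (dot y x : ℝ) := by
  simp [dot, coeLat]

lemma AD.D_slab (A : AD Y H) (n : L4) (hn : n ≠ 0) (K : ℤ) (E : Set L4)
    (hE : ∀ x ∈ E, |dot n x| ≤ K) : Dd H 3 E := by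
  classical
  obtain ⟨i, hi⟩ := Function.ne_iff.mp hn
  refine A.D3 (coeLat n) i (by simpa [coeLat] using hi) E
    ((Finset.Icc (-K) K).image fun k : ℤ => (k : ℝ)) fun x hx => ?_
  rw [dot_cast, Finset.mem_image]
  exact ⟨_, Finset.mem_Icc.mpr (abs_le.mp (hE x hx)), rfl⟩

lemma near_diff (A : AD Y H) {K : ℤ} {y y' x : L4} (hy : y ∈ Y) (hy' : y' ∈ Y)
    (h : near H K y x) (h' : near H K y' x) : |dot (y - y') x| ≤ K := by
  rw [sub_dot, abs_le]
  have := A.le y hy x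
  have := A.le y' hy' x
  unfold near at h h'
  constructor <;> linarith

lemma AD.D_pair (A : AD Y H) (K : ℤ) : Dd H 3 (pairS Y H K) := by
  classical
  have := A.Dbiunion (p := 3) Y.offDiag (fun p => {x | |dot (p.1 - p.2) x| ≤ K}) (by
    intro p hp
    rw [Finset.mem_offDiag] at hp
    exact A.D_slab _ (sub_ne_zero.mpr hp.2.2) K _ fun x hx => hx)
  refine A.Dmono this ?_
  rintro x ⟨y1, h1, y2, h2, h12, n1, n2⟩
  simp only [Set.mem_iUnion]
  exact ⟨(y1, y2), Finset.mem_offDiag.mpr ⟨h1, h2, h12⟩, near_diff A h1 h2 n1 n2⟩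

lemma AD.D_trip (A : AD Y H) (K : ℤ) : Dd H 2 (tripS Y H K) := by
  classical
  have := A.Dbiunion (p := 2) (((Y ×ˢ Y) ×ˢ Y).filter
      fun p => p.1.1 ≠ p.1.2 ∧ p.1.1 ≠ p.2 ∧ p.1.2 ≠ p.2)
    (fun p => {x | |dot (p.1.1 - p.1.2) x| ≤ K ∧ |dot (p.1.1 - p.2) x| ≤ K}) (by
    intro p hp
    simp only [Finset.mem_filter, Finset.mem_product] at hp
    obtain ⟨⟨⟨h1, h2⟩, h3⟩, h12, h13, h23⟩ := hp
    obtain ⟨i, j, hij⟩ := A.indep _ h1 _ h2 _ h3 h12 h13 h23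
    refine A.D2 (coeLat (p.1.1 - p.1.2)) (coeLat (p.1.1 - p.2)) i j ?_ _
      (((Finset.Icc (-K) K).image fun k : ℤ => (k : ℝ)) ×ˢ
        ((Finset.Icc (-K) K).image fun k : ℤ => (k : ℝ))) ?_
    · simp only [coeLat]
      exact_mod_cast hij
    · rintro x ⟨hx1, hx2⟩
      rw [dot_cast, dot_cast, Finset.mem_product]
      exact ⟨Finset.mem_image_of_mem _ (Finset.mem_Icc.mpr (abs_le.mp hx1)),
        Finset.mem_image_of_mem _ (Finset.mem_Icc.mpr (abs_le.mp hx2))⟩)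
  refine A.Dmono this ?_
  rintro x ⟨y1, h1, y2, h2, y3, h3, h12, h13, h23, n1, n2, n3⟩
  simp only [Set.mem_iUnion]
  refine ⟨((y1, y2), y3), ?_, near_diff A h1 h2 n1 n2, near_diff A h1 h3 n1 n3⟩
  simp only [Finset.mem_filter, Finset.mem_product]
  exact ⟨⟨⟨h1, h2⟩, h3⟩, h12, h13, h23⟩

/-- basic smallness lemma -/
lemma AD.small (A : AD Y H) {p : ℕ} {E0 E1 : Set L4} (h0 : Dd H p E0) (h1 : Dd H (p + 1) E1)
    (F : ℝ → L4 → ℝ) {C : ℝ} (hC : 0 ≤ C) (hF : ∀ᶠ s in nhdsWithin (0 : ℝ) (Set.Ioi 0), ∀ x, |F s x| ≤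
      C * (E0.indicator (ew H s) x + s * E1.indicator (ew H s) x)) :
    Tendsto (fun s => s ^ (p + 1) * ∑' x, F s x) (nhdsWithin (0 : ℝ) (Set.Ioi 0)) (nhds 0) := by
  obtain ⟨C0, hC0, hb0⟩ := h0
  obtain ⟨C1, hC1, hb1⟩ := h1
  have hlim : Tendsto (fun s : ℝ => C * (C0 + C1) * s) (nhdsWithin (0 : ℝ) (Set.Ioi 0)) (nhds 0) := by
    have : Tendsto (fun s : ℝ => C * (C0 + C1) * s) (nhds 0) (nhds (C * (C0 + C1) * 0)) :=
      (continuous_const.mul continuous_id).tendsto 0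
    rw [mul_zero] at this
    exact this.mono_left nhdsWithin_le_nhds
  refine squeeze_zero_norm' ?_ hlim
  have h01 : ∀ᶠ s in nhdsWithin (0 : ℝ) (Set.Ioi 0), s ≤ 1 :=
    nhdsWithin_le_nhds (Iic_mem_nhds (by norm_num : (0 : ℝ) < 1))
  filter_upwards [hF, h01, self_mem_nhdsWithin] with s hs hs1 hs0
  have hs0 : 0 < s := hs0
  have hsum : HasSum (fun x => C * (E0.indicator (ew H s) x + s * E1.indicator (ew H s) x))
      (C * (∑' x, E0.indicator (ew H s) x + s * ∑' x, E1.indicator (ew H s) x)) :=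
    ((A.summable_ind hs0 E0).hasSum.add ((A.summable_ind hs0 E1).hasSum.mul_left s)).mul_left C
  have hn := tsum_of_norm_bounded hsum (f := F s) (fun x => hs x)
  rw [norm_mul, Real.norm_of_nonneg (by positivity)]
  have e0 := hb0 s hs0 hs1
  have e1 := hb1 s hs0 hs1
  calc _ ≤ s ^ (p + 1) * (C * (∑' x, E0.indicator (ew H s) x
        + s * ∑' x, E1.indicator (ew H s) x)) := by gcongr
    _ = C * s * (s ^ p * ∑' x, E0.indicator (ew H s) x
        + s ^ (p + 1) * ∑' x, E1.indicator (ew H s) x) := by ring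
    _ ≤ C * s * (C0 + C1) := by gcongr
    _ = _ := by ring

lemma exists_dot_bound (Y : Finset L4) (u : L4) : ∃ m : ℤ, 0 ≤ m ∧ ∀ y ∈ Y, |dot y u| ≤ m := by
  refine ⟨∑ y ∈ Y, |dot y u|, Finset.sum_nonneg fun _ _ => abs_nonneg _, fun y hy => ?_⟩
  exact Finset.single_le_sum (f := fun y => |dot y u|) (fun _ _ => abs_nonneg _) hy

lemma AD.H_diff (A : AD Y H) {u : L4} {m : ℤ} (hm : ∀ y ∈ Y, |dot y u| ≤ m) (x : L4) :
    |H (x + u) - H x| ≤ m := by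
  obtain ⟨y, hy, hyx⟩ := A.ex x
  obtain ⟨y', hy', hyx'⟩ := A.ex (x + u)
  have h1 := A.le y hy (x + u)
  have h2 := A.le y' hy' x
  rw [dot_add] at h1 hyx'
  have h3 := abs_le.mp (hm y hy)
  have h4 := abs_le.mp (hm y' hy')
  rw [abs_le]
  constructor <;> linarith

lemma ev_small (M : ℝ) (hM : 0 ≤ M) : ∀ᶠ s in nhdsWithin (0 : ℝ) (Set.Ioi 0), 0 < s ∧ s ≤ 1 ∧ s * M ≤ 1 := by
  have h01 : ∀ᶠ s in nhdsWithin (0 : ℝ) (Set.Ioi 0), s ≤ 1 / (M + 1) :=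
    nhdsWithin_le_nhds (Iic_mem_nhds (by positivity : (0 : ℝ) < 1 / (M + 1)))
  filter_upwards [h01, self_mem_nhdsWithin] with s hs hs0
  have hs0 : 0 < s := hs0
  rw [le_div_iff₀ (by positivity)] at hs
  exact ⟨hs0, by nlinarith, by nlinarith⟩

lemma ew_add (H : L4 → ℤ) (s : ℝ) (x u : L4) :
    ew H s (x + u) = Real.exp (-(s * ((H (x + u) - H x : ℤ) : ℝ))) * ew H s x := by
  rw [ew, ew, ← Real.exp_add]
  congr 1
  push_cast
  ring

lemma AD.ew_shift (A : AD Y H) (u : L4) : ∃ C : ℝ, 0 ≤ C ∧ ∀ᶠ s in nhdsWithin (0 : ℝ) (Set.Ioi 0),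
    ∀ x, |ew H s (x + u) - ew H s x| ≤ C * s * ew H s x := by
  obtain ⟨m, hm0, hm⟩ := exists_dot_bound Y u
  have hm0' : (0 : ℝ) ≤ m := by exact_mod_cast hm0
  refine ⟨2 * m, by positivity, ?_⟩
  filter_upwards [ev_small m hm0'] with s ⟨hs0, hs1, hsm⟩ x
  have hd : |((H (x + u) - H x : ℤ) : ℝ)| ≤ m := by exact_mod_cast A.H_diff hm x
  have h1 : |-(s * ((H (x + u) - H x : ℤ) : ℝ))| ≤ s * m := by
    rw [abs_neg, abs_mul, abs_of_pos hs0]; gcongr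
  have h2 := Real.abs_exp_sub_one_le (h1.trans hsm)
  rw [ew_add, ← sub_one_mul, abs_mul, abs_of_pos (ew_pos H s x)]
  refine mul_le_mul_of_nonneg_right (h2.trans ?_) (ew_pos H s x).le
  linarith

lemma AD.summable_mul (A : AD Y H) {s : ℝ} (hs : 0 < s) (G : L4 → ℝ) {B : ℝ}
    (hB : ∀ x, |G x| ≤ B) : Summable fun x => G x * ew H s x := by
  refine Summable.of_norm_bounded ((A.summable hs).mul_left B) fun x => ?_
  rw [norm_mul, Real.norm_of_nonneg (ew_pos H s x).le]
  exact mul_le_mul_of_nonneg_right (hB x) (ew_pos H s x).le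

/-- Comparison: two near-translates -/
lemma AD.shift_compare (A : AD Y H) {p : ℕ} {E0 E1 : Set L4} (h0 : Dd H p E0)
    (h1 : Dd H (p + 1) E1) (G G' : L4 → ℝ) {B : ℝ} (hB0 : 0 ≤ B) (hB : ∀ x, |G x| ≤ B)
    (hB' : ∀ x, |G' x| ≤ B)
    (u : L4) (hG : ∀ x, x ∉ E0 → G (x + u) = G' x) (hG' : ∀ x, x ∉ E1 → G' x = 0) :
    Tendsto (fun s => s ^ (p + 1) * (∑' x, G x * ew H s x - ∑' x, G' x * ew H s x))
      (nhdsWithin (0 : ℝ) (Set.Ioi 0)) (nhds 0) := by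
  obtain ⟨C, hC, hsh⟩ := A.ew_shift u
  have := A.small h0 h1 (fun s x => G (x + u) * ew H s (x + u) - G' x * ew H s x)
    (C := B * (2 + C)) (by positivity) (by
      filter_upwards [hsh, ev_small 0 le_rfl] with s hs ⟨hs0, hs1, _⟩ x
      have hw := (ew_pos H s x).le
      have h2 := hs x
      by_cases hx0 : x ∈ E0
      · have h3 : |ew H s (x + u)| ≤ (1 + C) * ew H s x := by
          have h5 : C * s * ew H s x ≤ C * ew H s x :=
            mul_le_mul_of_nonneg_right (by nlinarith) hw
          calc _ = |(ew H s (x + u) - ew H s x) + ew H s x| := by ring_nf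
            _ ≤ _ := (abs_add_le _ _).trans (by rw [abs_of_nonneg hw]; linarith)
        have h4 : 0 ≤ s * E1.indicator (ew H s) x :=
          mul_nonneg hs0.le (Set.indicator_nonneg (fun x _ => (ew_pos H s x).le) x)
        rw [Set.indicator_of_mem hx0]
        calc _ ≤ |G (x + u) * ew H s (x + u)| + |G' x * ew H s x| := abs_sub _ _
          _ ≤ B * ((1 + C) * ew H s x) + B * ew H s x := by
              rw [abs_mul, abs_mul, abs_of_nonneg hw]
              gcongr
              · exact hB _
              · exact hB' _
          _ = B * (2 + C) * ew H s x := by ring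
          _ ≤ _ := by
            refine mul_le_mul_of_nonneg_left ?_ (by positivity)
            linarith
      · rw [hG x hx0, ← mul_sub, Set.indicator_of_notMem hx0, zero_add, abs_mul]
        by_cases hx1 : x ∈ E1
        · rw [Set.indicator_of_mem hx1]
          calc _ ≤ B * (C * s * ew H s x) := by
                gcongr
                exact hB' _
            _ = B * C * (s * ew H s x) := by ring
            _ ≤ _ := by
              refine mul_le_mul_of_nonneg_right ?_ (by positivity)
              nlinarith
        · rw [hG' x hx1, Set.indicator_of_notMem hx1]
          simp)
  refine this.congr' ?_
  filter_upwards [self_mem_nhdsWithin] with s hs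
  have hs : 0 < s := hs
  congr 1
  have e1 := A.summable_mul hs G hB
  rw [← (Equiv.addRight u).tsum_eq (fun x => G x * ew H s x)]
  exact ((Equiv.addRight u).summable_iff.mpr e1).tsum_sub (A.summable_mul hs G' hB')

/-- cancellation -/
lemma AD.cancel (A : AD Y H) {p : ℕ} {E0 E1 : Set L4} (h0 : Dd H p E0)
    (h1 : Dd H (p + 1) E1) (χ G : L4 → ℝ) {B : ℝ} (hB0 : 0 ≤ B) (hB : ∀ x, |G x| ≤ B)
    (u : L4) (hχ : ∀ x, χ (x + u) = -χ x) (hχ1 : ∀ x, |χ x| ≤ 1)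
    (hG : ∀ x, x ∉ E0 → G (x + u) = G x) (hG' : ∀ x, x ∉ E1 → G x = 0) :
    Tendsto (fun s => s ^ (p + 1) * ∑' x, χ x * G x * ew H s x)
      (nhdsWithin (0 : ℝ) (Set.Ioi 0)) (nhds 0) := by
  have hb : ∀ x, |χ x * G x| ≤ B := fun x => by
    rw [abs_mul]
    calc _ ≤ 1 * B := by gcongr; exacts [hχ1 x, hB x]
      _ = B := one_mul B
  have := A.shift_compare h0 h1 (fun x => χ x * G x) (fun x => -(χ x * G x)) hB0 hb
    (fun x => by rw [abs_neg]; exact hb x) u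
    (fun x hx => by rw [hχ, hG x hx]; ring) (fun x hx => by rw [hG' x hx]; ring)
  have h2 := this.const_mul (1 / 2)
  rw [mul_zero] at h2
  refine h2.congr fun s => ?_
  simp only [neg_mul, tsum_neg]
  ring

/-- Locally only two functionals matter. -/
lemma AD.H_two (A : AD Y H) {K m : ℤ} {u x y1 y2 : L4} (hm : ∀ y ∈ Y, |dot y u| ≤ m)
    (hK : 2 * m ≤ K) (h1 : y1 ∈ Y) (h2 : y2 ∈ Y) (h12 : y1 ≠ y2)
    (n1 : near H K y1 x) (n2 : near H K y2 x) (hx : x ∉ tripS Y H K) :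
    H (x + u) = max (dot y1 (x + u)) (dot y2 (x + u)) := by
  obtain ⟨y, hy, hyx⟩ := A.ex (x + u)
  have hd := abs_le.mp (A.H_diff hm x)
  have hyu := abs_le.mp (hm y hy)
  have hny : near H K y x := by
    unfold near
    rw [dot_add] at hyx
    linarith
  have : y = y1 ∨ y = y2 := by
    by_contra hcon
    push Not at hcon
    exact hx ⟨y1, h1, y2, h2, y, hy, h12, hcon.1.symm, hcon.2.symm, n1, n2, hny⟩
  apply le_antisymm
  · rw [← hyx]
    rcases this with rfl | rfl
    · exact le_max_left _ _
    · exact le_max_right _ _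
  · exact max_le (A.le _ h1 _) (A.le _ h2 _)

lemma AD.H_one (A : AD Y H) {K m : ℤ} {u x y1 : L4} (hm : ∀ y ∈ Y, |dot y u| ≤ m)
    (hK : 2 * m ≤ K) (h1 : y1 ∈ Y)
    (n1 : near H K y1 x) (hx : x ∉ pairS Y H K) :
    H (x + u) = dot y1 (x + u) := by
  obtain ⟨y, hy, hyx⟩ := A.ex (x + u)
  have hd := abs_le.mp (A.H_diff hm x)
  have hyu := abs_le.mp (hm y hy)
  have hny : near H K y x := by
    unfold near
    rw [dot_add] at hyx
    linarith
  have : y = y1 := by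
    by_contra hcon
    exact hx ⟨y, hy, y1, h1, hcon, hny, n1⟩
  rw [← hyx, this]

end R4

namespace R4

variable {Y : Finset L4} {H : L4 → ℤ}

def zs (a : ZMod 2) : ℤ := if a = 0 then 1 else -1

lemma zs_add : ∀ a b : ZMod 2, zs (a + b) = zs a * zs b := by decide
lemma zs_abs : ∀ a : ZMod 2, |zs a| = 1 := by decide

def red (x : L4) : Fin 4 → ZMod 2 := fun i => (x i : ZMod 2)

def zchi (η v : Fin 4 → ZMod 2) : ℤ := zs (∑ i, η i * v i)

def chi (η : Fin 4 → ZMod 2) (x : L4) : ℝ := (zchi η (red x) : ℝ)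

set_option maxRecDepth 100000 in
lemma zchi_sum : ∀ v : Fin 4 → ZMod 2, ∑ η : Fin 4 → ZMod 2, zchi η v = if v = 0 then 16 else 0 := by
  decide

lemma red_add (x y : L4) : red (x + y) = red x + red y := by
  ext i; simp [red]
lemma red_sub (x y : L4) : red (x - y) = red x - red y := by
  ext i; simp [red]

lemma chi_add (η : Fin 4 → ZMod 2) (x u : L4) : chi η (x + u) = chi η x * chi η u := by
  unfold chi zchi
  rw [red_add]
  simp only [Pi.add_apply, mul_add, Finset.sum_add_distrib, zs_add]
  push_cast; rfl

lemma chi_abs (η : Fin 4 → ZMod 2) (x : L4) : |chi η x| = 1 := by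
  unfold chi zchi
  exact_mod_cast zs_abs _

lemma chi_red (n x : L4) : chi (red n) x = (zs (dot n x : ℤ) : ℝ) := by
  unfold chi zchi
  congr 2
  simp [dot, red]

lemma exists_u0 (n η : Fin 4 → ZMod 2) (hη : η ≠ 0) (hne : n ≠ η) :
    ∃ u : Fin 4 → ZMod 2, ∑ i, n i * u i = 0 ∧ ∑ i, η i * u i = 1 := by
  by_cases h0 : n = 0
  · obtain ⟨i, hi⟩ := Function.ne_iff.mp hη
    refine ⟨Pi.single i 1, by simp [h0], ?_⟩
    have : ∀ a : ZMod 2, a ≠ 0 → a = 1 := by decide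
    simpa [Pi.single_apply] using this _ hi
  obtain ⟨i, hi⟩ := Function.ne_iff.mp h0
  obtain ⟨j, hj⟩ := Function.ne_iff.mp hη
  obtain ⟨k, hk⟩ := Function.ne_iff.mp hne
  have d1 : ∀ a b : ZMod 2, a ≠ b → a ≠ 0 → b = 0 := by decide
  have d2 : ∀ a : ZMod 2, a ≠ 0 → a = 1 := by decide
  -- coordinates where n = 0, η = 1 or n=1, η=0
  by_cases hnk : n k = 0
  · refine ⟨Pi.single k 1, by simp [Pi.single_apply, hnk], ?_⟩
    simpa [Pi.single_apply] using d2 _ (fun h => hk (by rw [hnk]; exact h.symm))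
  · have hηk : η k = 0 := d1 _ _ hk hnk
    have hnk1 := d2 _ hnk
    have hj1 := d2 _ hj
    by_cases hnj : n j = 0
    · refine ⟨Pi.single j 1, by simp [Pi.single_apply, hnj], ?_⟩
      simpa [Pi.single_apply] using hj1
    · have hnj1 := d2 _ hnj
      refine ⟨Pi.single j 1 + Pi.single k 1, ?_, ?_⟩
      · simp [Pi.single_apply, mul_add, Finset.sum_add_distrib, hnk1, hnj1]; decide
      · simp [Pi.single_apply, mul_add, Finset.sum_add_distrib, hj1, hηk]

lemma exists_u (n z : L4) (hz : dot n z = 1) (η : Fin 4 → ZMod 2) (hη : η ≠ 0) (hne : red n ≠ η) :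
    ∃ u : L4, dot n u = 0 ∧ chi η u = -1 := by
  obtain ⟨u0, h1, h2⟩ := exists_u0 _ η hη hne
  set û : L4 := fun i => ((u0 i).val : ℤ) with hû
  have hr : red û = u0 := by
    ext i; simp [red, hû]
  have hev : ((dot n û : ℤ) : ZMod 2) = 0 := by
    rw [← h1, ← hr]; simp [dot, red]
  obtain ⟨k, hk⟩ := (ZMod.intCast_zmod_eq_zero_iff_dvd _ 2).mp hev
  refine ⟨û - (2 * k) • z, ?_, ?_⟩
  · rw [dot_sub, dot_smul, hz, hk]; push_cast; ring
  · have : red (û - (2 * k) • z) = u0 := by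
      rw [red_sub, hr]
      ext i
      have h2 : (2 : ZMod 2) = 0 := by decide
      simp [red, h2]
    rw [chi, zchi, this, h2]
    simp [zs]

lemma sum_Ioo_succ (m : ℕ) (hm : 1 ≤ m) (F : ℤ → ℤ) :
    ∑ k ∈ Finset.Ioo (-((m + 1 : ℕ) : ℤ)) ((m + 1 : ℕ) : ℤ), F k =
      F m + (F (-m) + ∑ k ∈ Finset.Ioo (-(m : ℤ)) (m : ℤ), F k) := by
  have : Finset.Ioo (-((m + 1 : ℕ) : ℤ)) ((m + 1 : ℕ) : ℤ) =
      insert (m : ℤ) (insert (-(m : ℤ)) (Finset.Ioo (-(m : ℤ)) (m : ℤ))) := by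
    ext k
    simp only [Finset.mem_Ioo, Finset.mem_insert]
    omega
  rw [this, Finset.sum_insert, Finset.sum_insert]
  · simp
  · simp only [Finset.mem_Ioo, Finset.mem_insert]; omega

lemma zs_succ (m : ℤ) : zs ((m + 1 : ℤ) : ZMod 2) = - zs (m : ZMod 2) := by
  have : ∀ a : ZMod 2, zs (a + 1) = - zs a := by decide
  push_cast
  exact this _

lemma zs_neg (m : ℤ) : zs ((-m : ℤ) : ZMod 2) = zs (m : ZMod 2) := by
  have : ∀ a : ZMod 2, zs (-a) = zs a := by decide
  push_cast
  exact this _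

lemma sum_zs (m : ℕ) : ∑ k ∈ Finset.Ioo (-((m + 1 : ℕ) : ℤ)) ((m + 1 : ℕ) : ℤ), zs (k : ZMod 2)
    = zs ((m : ℤ) : ZMod 2) := by
  induction m with
  | zero => decide
  | succ m ih =>
    rw [sum_Ioo_succ _ (by omega), ih, zs_neg]
    have := zs_succ m
    push_cast at this ⊢
    linarith

lemma sum_tent (m : ℕ) : ∑ k ∈ Finset.Ioo (-((m + 1 : ℕ) : ℤ)) ((m + 1 : ℕ) : ℤ),
    zs (k : ZMod 2) * (((m + 1 : ℕ) : ℤ) - |k|) = if zs ((m : ℤ) : ZMod 2) = 1 then 1 else 0 := by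
  induction m with
  | zero => decide
  | succ m ih =>
    have h1 : ∑ k ∈ Finset.Ioo (-((m + 1 + 1 : ℕ) : ℤ)) ((m + 1 + 1 : ℕ) : ℤ),
      zs (k : ZMod 2) * (((m + 1 + 1 : ℕ) : ℤ) - |k|) =
      ∑ k ∈ Finset.Ioo (-((m + 1 + 1 : ℕ) : ℤ)) ((m + 1 + 1 : ℕ) : ℤ),
      zs (k : ZMod 2) * (((m + 1 : ℕ) : ℤ) - |k|) +
      ∑ k ∈ Finset.Ioo (-((m + 1 + 1 : ℕ) : ℤ)) ((m + 1 + 1 : ℕ) : ℤ), zs (k : ZMod 2) := by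
      rw [← Finset.sum_add_distrib]
      refine Finset.sum_congr rfl fun k _ => ?_
      push_cast; ring
    rw [h1, sum_zs (m + 1), sum_Ioo_succ (m + 1) (by omega), ih, abs_neg,
      abs_of_nonneg (by positivity : (0 : ℤ) ≤ ((m + 1 : ℕ) : ℤ)), sub_self, mul_zero, mul_zero]
    have h2 := zs_succ m
    have h3 := zs_abs ((m : ℤ) : ZMod 2)
    push_cast at h2 h3 ⊢
    rw [h2]
    rcases abs_eq (by norm_num : (0 : ℤ) ≤ 1) |>.mp h3 with h | h <;> simp [h]

lemma sum_tent_odd (e : ℤ) (he : zs (e : ZMod 2) = -1) :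
    ∑ k ∈ Finset.Ioo (-|e|) |e|, zs (k : ZMod 2) * (|e| - |k|) = 1 := by
  have h1 : zs ((|e| : ℤ) : ZMod 2) = -1 := by
    rcases abs_choice e with h | h <;> rw [h]
    · exact he
    · rw [zs_neg]; exact he
  obtain ⟨m, hm⟩ : ∃ m : ℕ, |e| = ((m + 1 : ℕ) : ℤ) := by
    have h0 : |e| ≠ 0 := by
      intro h; rw [h] at h1; revert h1; decide
    have := abs_nonneg e
    exact ⟨(|e| - 1).toNat, by omega⟩
  rw [hm] at h1 ⊢
  rw [sum_tent]
  have := zs_succ m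
  push_cast at this h1
  rw [h1] at this
  rw [if_pos]
  push_cast
  linarith

/-- the wedge where both functionals attain the max -/
def wedge (H : L4 → ℤ) (y1 y2 : L4) : Set L4 := {x | dot y1 x = H x ∧ dot y2 x = H x}

open Classical in
def tent (H : L4 → ℤ) (K : ℤ) (y1 y2 n : L4) (e : ℤ) (x : L4) : ℤ :=
  if near H K y1 x ∧ near H K y2 x then max (|e| - |dot n x|) 0 else 0

lemma tent_abs (K : ℤ) (y1 y2 n : L4) (e : ℤ) (x : L4) : |(tent H K y1 y2 n e x : ℝ)| ≤ (|e| : ℤ) := by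
  have h : |tent H K y1 y2 n e x| ≤ |e| := by
    unfold tent
    split_ifs
    · rw [abs_of_nonneg (le_max_right _ _)]
      exact max_le (by linarith [abs_nonneg (dot n x)]) (abs_nonneg _)
    · simp
  exact_mod_cast h

lemma tent_zero {K : ℤ} {y1 y2 n : L4} {e : ℤ} {x : L4} (hx : ¬ |dot n x| ≤ |e|) :
    tent H K y1 y2 n e x = 0 := by
  unfold tent
  rw [max_eq_right (by linarith)]
  simp

lemma near_of_shift (A : AD Y H) {K m : ℤ} {u x y : L4} (hm : ∀ y ∈ Y, |dot y u| ≤ m) (hy : y ∈ Y)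
    (h : near H K y (x + u)) : near H (K + 2 * m) y x := by
  have h1 := abs_le.mp (A.H_diff hm x)
  have h2 := abs_le.mp (hm y hy)
  unfold near at *
  rw [dot_add] at h
  linarith

lemma near_mono {K K' : ℤ} (hK : K ≤ K') {x y : L4} (h : near H K y x) : near H K' y x := by
  unfold near at *; linarith

lemma H_self (A : AD Y H) {K : ℤ} (hK : 0 ≤ K) {x y1 y2 : L4} (h1 : y1 ∈ Y) (h2 : y2 ∈ Y)
    (h12 : y1 ≠ y2) (n1 : near H K y1 x) (n2 : near H K y2 x) (hx : x ∉ tripS Y H K) :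
    H x = max (dot y1 x) (dot y2 x) := by
  have := A.H_two (u := 0) (m := 0) (by intro y _; simp [dot]) (by simpa using hK) h1 h2 h12 n1 n2 hx
  simpa using this

lemma pair_off (A : AD Y H) {y1 y2 n z : L4} (h1 : y1 ∈ Y) (h2 : y2 ∈ Y) (h12 : y1 ≠ y2) {c : ℤ}
    (hc : y1 - y2 = c • n) (hz : dot n z = 1) {K : ℤ} (hK : 0 ≤ K) (e : ℤ)
    {η : Fin 4 → ZMod 2} (hη : η ≠ 0) (hne : red n ≠ η) :
    Tendsto (fun s => s ^ 3 * ∑' x, chi η x * (tent H K y1 y2 n e x : ℝ) * ew H s x)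
      (nhdsWithin (0 : ℝ) (Set.Ioi 0)) (nhds 0) := by
  obtain ⟨u, hu0, hu⟩ := exists_u n z hz η hη hne
  obtain ⟨m, hm0, hm⟩ := exists_dot_bound Y u
  have hn0 : n ≠ 0 := by rintro rfl; simp [dot] at hz
  refine A.cancel (p := 2) (A.D_trip (K + 2 * m)) (A.D_slab n hn0 |e| {x | |dot n x| ≤ |e|}
    fun x hx => hx) (chi η) _ (B := (|e| : ℤ)) (by positivity) (fun x => tent_abs _ _ _ _ _ _) u
    (fun x => by rw [chi_add, hu]; ring) (fun x => (chi_abs η x).le) (fun x hx => ?_)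
    (fun x hx => by rw [tent_zero hx]; simp)
  have hdu : dot y1 u = dot y2 u := by
    have := sub_dot y1 y2 u
    rw [hc, smul_dot, hu0] at this
    linarith
  congr 1
  unfold tent
  rw [dot_add, hu0, add_zero]
  have key : near H (K + 2 * m) y1 x → near H (K + 2 * m) y2 x → H (x + u) = H x + dot y1 u := by
    intro n1 n2
    have e1 := A.H_two hm (by linarith) h1 h2 h12 n1 n2 hx
    have e2 := H_self A (by linarith) h1 h2 h12 n1 n2 hx
    rw [e1, e2, dot_add, dot_add, hdu, max_add_add_right]
  have : (near H K y1 (x + u) ∧ near H K y2 (x + u)) ↔ (near H K y1 x ∧ near H K y2 x) := by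
    constructor
    · rintro ⟨a, b⟩
      have := key (near_of_shift A hm h1 a) (near_of_shift A hm h2 b)
      unfold near at *
      rw [dot_add] at a b
      constructor <;> linarith
    · rintro ⟨a, b⟩
      have := key (near_mono (by linarith) a) (near_mono (by linarith) b)
      unfold near at *
      rw [dot_add, dot_add]
      constructor <;> linarith
  by_cases hN : near H K y1 x ∧ near H K y2 x
  · rw [if_pos (this.mpr hN), if_pos hN]
  · rw [if_neg (fun h => hN (this.mp h)), if_neg hN]

lemma pair_on (A : AD Y H) {y1 y2 n z : L4} (h1 : y1 ∈ Y) (h2 : y2 ∈ Y) (h12 : y1 ≠ y2) {c : ℤ}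
    (hc : y1 - y2 = c • n) (hc0 : 0 < c) (hz : dot n z = 1) {K : ℤ} (hK : 0 ≤ K) (e : ℤ)
    (heK : c * |e| ≤ K) (he : zs (e : ZMod 2) = -1) {κ : ℝ}
    (hκ : Tendsto (fun s => s ^ 3 * ∑' x, (wedge H y1 y2).indicator (ew H s) x)
      (nhdsWithin (0 : ℝ) (Set.Ioi 0)) (nhds κ)) :
    Tendsto (fun s => s ^ 3 * ∑' x, chi (red n) x * (tent H K y1 y2 n e x : ℝ) * ew H s x)
      (nhdsWithin (0 : ℝ) (Set.Ioi 0)) (nhds κ) := by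
  classical
  have hn0 : n ≠ 0 := by rintro rfl; simp [dot] at hz
  set g : ℤ → L4 → ℝ := fun k x => if (near H K y1 x ∧ near H K y2 x) ∧ dot n x = k then 1 else 0
    with hg
  have hgb : ∀ k x, |g k x| ≤ 1 := by
    intro k x; simp only [hg]; split_ifs <;> simp
  set g' : L4 → ℝ := fun x => if x ∈ wedge H y1 y2 then 1 else 0 with hg'
  have hk : ∀ k ∈ Finset.Ioo (-|e|) |e|, Tendsto (fun s => s ^ 3 * ∑' x, g k x * ew H s x)
      (nhdsWithin (0 : ℝ) (Set.Ioi 0)) (nhds κ) := by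
    intro k hk
    have hk' : |k| < |e| := abs_lt.mpr (Finset.mem_Ioo.mp hk)
    obtain ⟨m, hm0, hm⟩ := exists_dot_bound Y (k • z)
    have hdz : dot y1 (k • z) = dot y2 (k • z) + c * k := by
      have := sub_dot y1 y2 (k • z)
      rw [hc, smul_dot, dot_smul, hz] at this
      linarith
    have hck : |c * k| ≤ K := by
      rw [abs_mul, abs_of_pos hc0]
      nlinarith
    have hck' := abs_le.mp hck
    have := A.shift_compare (p := 2) (A.D_trip (K + 2 * m)) (A.D_slab n hn0 0 {x | |dot n x| ≤ 0}
      fun x hx => hx) (g k) g' (B := 1) zero_le_one (hgb k)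
      (by intro x; simp only [hg']; split_ifs <;> simp) (k • z) (by
        intro x hx
        simp only [hg, hg']
        have hiff : ((near H K y1 (x + k • z) ∧ near H K y2 (x + k • z)) ∧ dot n (x + k • z) = k)
            ↔ x ∈ wedge H y1 y2 := by
          have hd : dot y1 x - dot y2 x = c * dot n x := by rw [← sub_dot, hc, smul_dot]
          rw [dot_add, dot_smul, hz]
          constructor
          · rintro ⟨⟨a, b⟩, hd0⟩
            have hd0' : dot n x = 0 := by linarith
            rw [hd0', mul_zero] at hd
            have := H_self A (by linarith) h1 h2 h12 (near_of_shift A hm h1 a)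
              (near_of_shift A hm h2 b) hx
            have h3 : dot y2 x = dot y1 x := by linarith
            rw [h3, max_self] at this
            exact ⟨this.symm, by rw [h3, this]⟩
          · rintro ⟨a, b⟩
            have hd0 : dot n x = 0 := by
              rw [a, b, sub_self] at hd
              exact (mul_eq_zero.mp hd.symm).resolve_left hc0.ne'
            have n1 : near H (K + 2 * m) y1 x := by unfold near; linarith
            have n2 : near H (K + 2 * m) y2 x := by unfold near; linarith
            have e1 := A.H_two hm (by linarith) h1 h2 h12 n1 n2 hx
            refine ⟨?_, by rw [hd0]; ring⟩
            unfold near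
            rw [e1, dot_add, dot_add, a, b, hdz]
            constructor
            · rw [sub_le_iff_le_add]
              exact max_le (by linarith) (by linarith)
            · rw [sub_le_iff_le_add]
              exact max_le (by linarith) (by linarith)
        simp only [hiff]) (by
        intro x hx
        simp only [hg']
        rw [if_neg]
        rintro ⟨a, b⟩
        apply hx
        have hd : dot y1 x - dot y2 x = c * dot n x := by rw [← sub_dot, hc, smul_dot]
        rw [a, b, sub_self] at hd
        have := (mul_eq_zero.mp hd.symm).resolve_left hc0.ne'
        simp [this])
    have h3 := this.add hκ
    rw [zero_add] at h3
    refine h3.congr fun s => ?_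
    have : ∀ x, (wedge H y1 y2).indicator (ew H s) x = g' x * ew H s x := by
      intro x; simp [hg', Set.indicator_apply]
    simp only [this]
    ring
  have hfin : Tendsto (fun s => ∑ k ∈ Finset.Ioo (-|e|) |e|,
      ((zs (k : ZMod 2) * (|e| - |k|) : ℤ) : ℝ) * (s ^ 3 * ∑' x, g k x * ew H s x))
      (nhdsWithin (0 : ℝ) (Set.Ioi 0)) (nhds κ) := by
    have := tendsto_finsetSum (Finset.Ioo (-|e|) |e|) (fun k hk' =>
      (hk k hk').const_mul ((zs (k : ZMod 2) * (|e| - |k|) : ℤ) : ℝ))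
    rw [← Finset.sum_mul, ← Int.cast_sum, sum_tent_odd e he] at this
    simpa using this
  refine hfin.congr' ?_
  filter_upwards [self_mem_nhdsWithin] with s hs
  have hs : 0 < s := hs
  have hpt : ∀ x, chi (red n) x * (tent H K y1 y2 n e x : ℝ) * ew H s x =
      ∑ k ∈ Finset.Ioo (-|e|) |e|,
        ((zs (k : ZMod 2) * (|e| - |k|) : ℤ) : ℝ) * (g k x * ew H s x) := by
    intro x
    simp only [hg]
    rw [chi_red]
    unfold tent
    by_cases hN : near H K y1 x ∧ near H K y2 x
    · simp only [hN, and_self, true_and, if_true]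
      by_cases hd : dot n x ∈ Finset.Ioo (-|e|) |e|
      · rw [Finset.sum_eq_single (dot n x)]
        · have : |dot n x| < |e| := abs_lt.mpr (Finset.mem_Ioo.mp hd)
          rw [max_eq_left (by linarith)]
          simp
        · intro b _ hb
          rw [if_neg (Ne.symm hb)]; simp
        · exact fun h => (h hd).elim
      · have : ¬ |dot n x| < |e| := fun h => hd (Finset.mem_Ioo.mpr (abs_lt.mp h))
        rw [max_eq_right (by linarith), Finset.sum_eq_zero]
        · simp
        · intro k hk
          rw [if_neg (by rintro rfl; exact hd hk)]; simp
    · simp [hN]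
  simp only [hpt]
  rw [Summable.tsum_finsetSum (fun k _ => (A.summable_mul hs (g k) (hgb k)).mul_left _),
    Finset.mul_sum]
  refine Finset.sum_congr rfl fun k _ => ?_
  rw [tsum_mul_left]
  ring

end R4

namespace R4

variable {Y : Finset L4} {H : L4 → ℤ}

lemma max_identity (a b α β : ℤ) :
    2 * (max (a + α) (b + β) + max (a - α) (b - β) - 2 * max a b) =
      max (|α - β| - |a - b|) 0 + max (|β - α| - |b - a|) 0 := by
  rw [abs_sub_comm β α, abs_sub_comm b a]
  rcases abs_cases (α - β) with ⟨h1, h1'⟩ | ⟨h1, h1'⟩ <;>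
  rcases abs_cases (a - b) with ⟨h2, h2'⟩ | ⟨h2, h2'⟩ <;> rw [h1, h2] <;>
  rcases max_cases (a + α) (b + β) with ⟨h3, h3'⟩ | ⟨h3, h3'⟩ <;> rw [h3] <;>
  rcases max_cases (a - α) (b - β) with ⟨h4, h4'⟩ | ⟨h4, h4'⟩ <;> rw [h4] <;>
  rcases max_cases a b with ⟨h5, h5'⟩ | ⟨h5, h5'⟩ <;> rw [h5] <;> omega

lemma tent_mul {K : ℤ} {y1 y2 n x : L4} {c : ℤ} (hc0 : 0 < c) (hc : y1 - y2 = c • n) (ε : L4)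
    (n1 : near H K y1 x) (n2 : near H K y2 x) :
    c * tent H K y1 y2 n (dot n ε) x =
      max (|dot y1 ε - dot y2 ε| - |dot y1 x - dot y2 x|) 0 := by
  unfold tent
  rw [if_pos ⟨n1, n2⟩, ← sub_dot, ← sub_dot, hc, smul_dot, smul_dot, abs_mul, abs_mul,
    abs_of_pos hc0, mul_max_of_nonneg _ _ hc0.le]
  ring_nf

lemma curvature (A : AD Y H) (cc : L4 → L4 → ℤ) (nn : L4 → L4 → L4)
    (hcc : ∀ y1 ∈ Y, ∀ y2 ∈ Y, y1 ≠ y2 → 0 < cc y1 y2 ∧ y1 - y2 = cc y1 y2 • nn y1 y2)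
    {ε : L4} {m : ℤ} (hm0 : 0 ≤ m) (hm : ∀ y ∈ Y, |dot y ε| ≤ m) {x : L4}
    (hx : x ∉ tripS Y H (2 * m)) :
    2 * (H (x + ε) + H (x - ε) - 2 * H x) = ∑ p ∈ Y.offDiag,
      cc p.1 p.2 * tent H (2 * m) p.1 p.2 (nn p.1 p.2) (dot (nn p.1 p.2) ε) x := by
  classical
  have hm' : ∀ y ∈ Y, |dot y (-ε)| ≤ m := fun y hy => by rw [dot_neg, abs_neg]; exact hm y hy
  by_cases hp : x ∈ pairS Y H (2 * m)
  · obtain ⟨y1, h1, y2, h2, h12, n1, n2⟩ := hp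
    have hsub : ({(y1, y2), (y2, y1)} : Finset (L4 × L4)) ⊆ Y.offDiag := by
      intro p hp
      rw [Finset.mem_insert, Finset.mem_singleton] at hp
      rcases hp with rfl | rfl
      · exact Finset.mem_offDiag.mpr ⟨h1, h2, h12⟩
      · exact Finset.mem_offDiag.mpr ⟨h2, h1, h12.symm⟩
    rw [← Finset.sum_subset hsub, Finset.sum_pair]
    · obtain ⟨hc0, hc⟩ := hcc y1 h1 y2 h2 h12
      obtain ⟨hc0', hc'⟩ := hcc y2 h2 y1 h1 h12.symm
      rw [tent_mul hc0 hc ε n1 n2, tent_mul hc0' hc' ε n2 n1,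
        A.H_two hm le_rfl h1 h2 h12 n1 n2 hx, sub_eq_add_neg x ε,
        A.H_two hm' le_rfl h1 h2 h12 n1 n2 hx, H_self A (by linarith) h1 h2 h12 n1 n2 hx,
        dot_add, dot_add, dot_add, dot_add, dot_neg, dot_neg, ← sub_eq_add_neg, ← sub_eq_add_neg]
      exact max_identity _ _ _ _
    · intro h
      exact h12 (congrArg Prod.fst h)
    · intro p hp hp'
      rw [Finset.mem_offDiag] at hp
      obtain ⟨hp1, hp2, hp12⟩ := hp
      have : ¬ (near H (2 * m) p.1 x ∧ near H (2 * m) p.2 x) := by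
        rintro ⟨a, b⟩
        have key : ∀ y ∈ Y, near H (2 * m) y x → y = y1 ∨ y = y2 := by
          intro y hy hn
          by_contra hcon
          push Not at hcon
          exact hx ⟨y1, h1, y2, h2, y, hy, h12, hcon.1.symm, hcon.2.symm, n1, n2, hn⟩
        apply hp'
        rw [Finset.mem_insert, Finset.mem_singleton, Prod.ext_iff, Prod.ext_iff]
        rcases key _ hp1 a with e | e <;> rcases key _ hp2 b with e' | e'
        · exact (hp12 (e.trans e'.symm)).elim
        · exact Or.inl ⟨e, e'⟩
        · exact Or.inr ⟨e, e'⟩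
        · exact (hp12 (e.trans e'.symm)).elim
      unfold tent
      rw [if_neg this, mul_zero]
  · obtain ⟨y, hy, hyx⟩ := A.ex x
    have hn : near H (2 * m) y x := by unfold near; linarith
    rw [A.H_one hm le_rfl hy hn hp, sub_eq_add_neg x ε, A.H_one hm' le_rfl hy hn hp, ← hyx,
      dot_add, dot_add, dot_neg, Finset.sum_eq_zero]
    · ring
    · intro p hp'
      rw [Finset.mem_offDiag] at hp'
      unfold tent
      rw [if_neg, mul_zero]
      rintro ⟨a, b⟩
      exact hp ⟨_, hp'.1, _, hp'.2.1, hp'.2.2, a, b⟩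

lemma exp_taylor {x : ℝ} (hx : |x| ≤ 1) : |Real.exp x - (1 + x + x ^ 2 / 2)| ≤ |x| ^ 3 := by
  have := Real.exp_bound hx (n := 3) (by norm_num)
  simp only [Finset.sum_range_succ, Finset.sum_range_zero] at this
  norm_num [Nat.factorial] at this
  have h3 : 0 ≤ |x| ^ 3 := by positivity
  linarith

structure PD (Y : Finset L4) (H : L4 → ℤ) (cc : L4 → L4 → ℤ) (nn zz : L4 → L4 → L4)
    (κ : L4 → L4 → ℝ) : Prop where
  hcc : ∀ y1 ∈ Y, ∀ y2 ∈ Y, y1 ≠ y2 → 0 < cc y1 y2 ∧ y1 - y2 = cc y1 y2 • nn y1 y2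
  hzz : ∀ y1 ∈ Y, ∀ y2 ∈ Y, y1 ≠ y2 → dot (nn y1 y2) (zz y1 y2) = 1
  hκ : ∀ y1 ∈ Y, ∀ y2 ∈ Y, y1 ≠ y2 →
    Tendsto (fun s => s ^ 3 * ∑' x, (wedge H y1 y2).indicator (ew H s) x)
      (nhdsWithin (0 : ℝ) (Set.Ioi 0)) (nhds (κ y1 y2))

lemma chi_neg {η : Fin 4 → ZMod 2} {ε : L4} (h : chi η ε = -1) : chi η (-ε) = -1 := by
  have h1 := chi_add η ε (-ε)
  have h2 : chi η 0 = 1 := by simp [chi, zchi, red, zs]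
  rw [add_neg_cancel, h2, h] at h1
  linarith

set_option maxHeartbeats 1000000 in
lemma Neta (A : AD Y H) {cc : L4 → L4 → ℤ} {nn zz : L4 → L4 → L4} {κ : L4 → L4 → ℝ}
    (P : PD Y H cc nn zz κ) {η : Fin 4 → ZMod 2} (hη : η ≠ 0) :
    Tendsto (fun s => s ^ 2 * ∑' x, chi η x * ew H s x)
      (nhdsWithin (0 : ℝ) (Set.Ioi 0))
      (nhds (1 / 8 * ∑ p ∈ Y.offDiag, (cc p.1 p.2 : ℝ) *
        if red (nn p.1 p.2) = η then κ p.1 p.2 else 0)) := by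
  classical
  obtain ⟨i, hi⟩ := Function.ne_iff.mp hη
  set ε : L4 := Pi.single i 1 with hε
  have hχε : chi η ε = -1 := by
    have : ∑ j, η j * red ε j = η i := by
      rw [Finset.sum_eq_single i]
      · simp [red, hε]
      · intro b _ hb; simp [red, hε, hb]
      · simp
    rw [chi, zchi, this, zs, if_neg (show ¬ η i = 0 from hi)]
    norm_num
  have hχε' := chi_neg hχε
  obtain ⟨m, hm0, hm⟩ := exists_dot_bound Y ε
  have hm' : ∀ y ∈ Y, |dot y (-ε)| ≤ m := fun y hy => by rw [dot_neg, abs_neg]; exact hm y hy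
  have hmR : (0 : ℝ) ≤ m := by exact_mod_cast hm0
  set a : L4 → ℝ := fun x => ((H (x + ε) - H x : ℤ) : ℝ) with ha
  set b : L4 → ℝ := fun x => ((H (x + -ε) - H x : ℤ) : ℝ) with hb
  have hab : ∀ x, |a x| ≤ m := fun x => by simp only [ha]; exact_mod_cast A.H_diff hm x
  have hbb : ∀ x, |b x| ≤ m := fun x => by simp only [hb]; exact_mod_cast A.H_diff hm' x
  have hD1 : ∀ x, |a x + b x| ≤ 2 * m := fun x =>
    (abs_add_le _ _).trans (by linarith [hab x, hbb x])
  have hsq : ∀ t : ℝ, |t| ≤ m → t ^ 2 ≤ m ^ 2 := fun t ht => by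
    rw [← sq_abs t]; gcongr
  have hD2 : ∀ x, |a x ^ 2 + b x ^ 2| ≤ 2 * (m : ℝ) ^ 2 := fun x => by
    rw [abs_of_nonneg (by positivity)]
    linarith [hsq _ (hab x), hsq _ (hbb x)]
  -- second order term
  have t2 : Tendsto (fun s => s ^ 4 * ∑' x, chi η x * (a x ^ 2 + b x ^ 2) * ew H s x)
      (nhdsWithin (0 : ℝ) (Set.Ioi 0)) (nhds 0) := by
    refine A.cancel (p := 3) (A.D_pair (4 * m)) A.D4 (chi η) _ (B := 2 * (m : ℝ) ^ 2)
      (by positivity) hD2 ε (fun x => by rw [chi_add, hχε]; ring) (fun x => (chi_abs η x).le)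
      (fun x hx => ?_) (fun x hx => (hx (Set.mem_univ x)).elim)
    obtain ⟨y, hy, hyx⟩ := A.ex x
    have hn : near H (4 * m) y x := by unfold near; linarith
    have e1 := A.H_one (K := 4 * m) hm (by linarith) hy hn hx
    have e2 := A.H_one (K := 4 * m) hm' (by linarith) hy hn hx
    have hm2 : ∀ y ∈ Y, |dot y (ε + ε)| ≤ 2 * m := fun y hy => by
      rw [dot_add]; exact (abs_add_le _ _).trans (by linarith [hm y hy])
    have e3 := A.H_one (K := 4 * m) hm2 (by linarith) hy hn hx
    simp only [ha, hb]
    rw [add_assoc, add_assoc, add_neg_cancel, add_zero, e1, e2, e3, ← hyx]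
    simp only [dot_add, dot_neg]
    push_cast
    ring
  -- remainder
  have t3 : Tendsto (fun s => s ^ 4 * ∑' x, chi η x * ((2 * ew H s x - ew H s (x + ε)
      - ew H s (x + -ε) - s * (a x + b x) * ew H s x + s ^ 2 / 2 * (a x ^ 2 + b x ^ 2) * ew H s x)
        / s ^ 2)) (nhdsWithin (0 : ℝ) (Set.Ioi 0)) (nhds 0) := by
    refine A.small (p := 3) Dempty A.D4 _ (C := 2 * (m : ℝ) ^ 3) (by positivity) ?_
    filter_upwards [ev_small m hmR] with s ⟨hs0, hs1, hsm⟩ x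
    have hw := ew_pos H s x
    have key : ∀ t : ℝ, |t| ≤ m →
        |Real.exp (-(s * t)) - (1 + -(s * t) + (-(s * t)) ^ 2 / 2)| ≤ (s * m) ^ 3 := by
      intro t ht
      have h1 : |-(s * t)| ≤ s * m := by rw [abs_neg, abs_mul, abs_of_pos hs0]; gcongr
      refine (exp_taylor (h1.trans hsm)).trans ?_
      gcongr
    have ka := key _ (hab x)
    have kb := key _ (hbb x)
    rw [abs_mul, chi_abs, one_mul, ew_add, ew_add, Set.indicator_empty, zero_add,
      Set.indicator_univ, abs_div, abs_of_pos (by positivity : 0 < s ^ 2),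
      div_le_iff₀ (by positivity)]
    have : 2 * ew H s x - Real.exp (-(s * a x)) * ew H s x - Real.exp (-(s * b x)) * ew H s x
        - s * (a x + b x) * ew H s x + s ^ 2 / 2 * (a x ^ 2 + b x ^ 2) * ew H s x =
        -((Real.exp (-(s * a x)) - (1 + -(s * a x) + (-(s * a x)) ^ 2 / 2)) +
          (Real.exp (-(s * b x)) - (1 + -(s * b x) + (-(s * b x)) ^ 2 / 2))) * ew H s x := by ring
    change |2 * ew H s x - Real.exp (-(s * a x)) * ew H s x - Real.exp (-(s * b x)) * ew H s x
        - s * (a x + b x) * ew H s x + s ^ 2 / 2 * (a x ^ 2 + b x ^ 2) * ew H s x| ≤ _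
    rw [this, abs_mul, abs_neg, abs_of_pos hw]
    calc _ ≤ ((s * m) ^ 3 + (s * m) ^ 3) * ew H s x := by
          gcongr
          exact (abs_add_le _ _).trans (add_le_add ka kb)
      _ = _ := by ring
  -- main term
  set R : L4 → ℝ := fun x => ∑ p ∈ Y.offDiag, (cc p.1 p.2 : ℝ) *
      (tent H (2 * m) p.1 p.2 (nn p.1 p.2) (dot (nn p.1 p.2) ε) x : ℝ) with hR
  set BR : ℝ := ∑ p ∈ Y.offDiag, (cc p.1 p.2 : ℝ) * ((|dot (nn p.1 p.2) ε| : ℤ) : ℝ) with hBR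
  have hBR0 : 0 ≤ BR := Finset.sum_nonneg fun p hp => by
    rw [Finset.mem_offDiag] at hp
    have h1 : (0 : ℝ) < cc p.1 p.2 := by exact_mod_cast (P.hcc _ hp.1 _ hp.2.1 hp.2.2).1
    have h2 : (0 : ℝ) ≤ ((|dot (nn p.1 p.2) ε| : ℤ) : ℝ) := by exact_mod_cast abs_nonneg _
    positivity
  have hRb : ∀ x, |R x| ≤ BR := fun x => by
    refine (Finset.abs_sum_le_sum_abs _ _).trans (Finset.sum_le_sum fun p hp => ?_)
    rw [Finset.mem_offDiag] at hp
    have h1 : (0 : ℝ) < cc p.1 p.2 := by exact_mod_cast (P.hcc _ hp.1 _ hp.2.1 hp.2.2).1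
    rw [abs_mul, abs_of_pos h1]
    exact mul_le_mul_of_nonneg_left (tent_abs _ _ _ _ _ _) h1.le
  have t1a : Tendsto (fun s => s ^ 3 * ∑' x, chi η x * (2 * (a x + b x) - R x) * ew H s x)
      (nhdsWithin (0 : ℝ) (Set.Ioi 0)) (nhds 0) := by
    refine A.small (p := 2) (A.D_trip (2 * m)) Dempty _ (C := 4 * m + BR) (by positivity) ?_
    filter_upwards [self_mem_nhdsWithin] with s hs x
    have hw := ew_pos H s x
    rw [abs_mul, abs_mul, chi_abs, one_mul, abs_of_pos hw, Set.indicator_empty, mul_zero, add_zero]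
    by_cases hx : x ∈ tripS Y H (2 * m)
    · rw [Set.indicator_of_mem hx]
      gcongr
      refine (abs_sub _ _).trans ?_
      rw [abs_mul, abs_two]
      linarith [hD1 x, hRb x]
    · have := curvature A cc nn P.hcc hm0 hm hx
      have h2 : 2 * (a x + b x) = R x := by
        simp only [ha, hb, hR]
        rw [← sub_eq_add_neg x ε]
        have h3 := congrArg (fun k : ℤ => (k : ℝ)) this
        push_cast at h3 ⊢
        rw [← h3]; ring
      rw [h2]
      simp [Set.indicator_of_notMem hx]
  have t1b : Tendsto (fun s => s ^ 3 * ∑' x, chi η x * R x * ew H s x)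
      (nhdsWithin (0 : ℝ) (Set.Ioi 0)) (nhds (∑ p ∈ Y.offDiag, (cc p.1 p.2 : ℝ) *
        if red (nn p.1 p.2) = η then κ p.1 p.2 else 0)) := by
    have hp : ∀ p ∈ Y.offDiag, Tendsto (fun s => s ^ 3 * ∑' x, chi η x *
        (tent H (2 * m) p.1 p.2 (nn p.1 p.2) (dot (nn p.1 p.2) ε) x : ℝ) * ew H s x)
        (nhdsWithin (0 : ℝ) (Set.Ioi 0))
        (nhds (if red (nn p.1 p.2) = η then κ p.1 p.2 else 0)) := by
      intro p hp
      obtain ⟨h1, h2, h12⟩ := Finset.mem_offDiag.mp hp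
      obtain ⟨hc0, hc⟩ := P.hcc _ h1 _ h2 h12
      have hz := P.hzz _ h1 _ h2 h12
      split_ifs with hif
      · have he : zs ((dot (nn p.1 p.2) ε : ℤ) : ZMod 2) = -1 := by
          rw [← hif, chi_red] at hχε
          exact_mod_cast hχε
        have heK : cc p.1 p.2 * |dot (nn p.1 p.2) ε| ≤ 2 * m := by
          rw [← abs_of_pos hc0, ← abs_mul, ← smul_dot, ← hc, sub_dot]
          refine (abs_sub _ _).trans ?_
          linarith [hm _ h1, hm _ h2]
        have := pair_on A h1 h2 h12 hc hc0 hz (by linarith) _ heK he (P.hκ _ h1 _ h2 h12)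
        rwa [hif] at this
      · exact pair_off A h1 h2 h12 hc hz (by linarith) _ hη hif
    have := tendsto_finsetSum Y.offDiag (fun p hp' => (hp p hp').const_mul (cc p.1 p.2 : ℝ))
    refine this.congr' ?_
    filter_upwards [self_mem_nhdsWithin] with s hs
    have hs : 0 < s := hs
    have hpt : ∀ x, chi η x * R x * ew H s x = ∑ p ∈ Y.offDiag, (cc p.1 p.2 : ℝ) * (chi η x *
        (tent H (2 * m) p.1 p.2 (nn p.1 p.2) (dot (nn p.1 p.2) ε) x : ℝ) * ew H s x) := by
      intro x
      simp only [hR, Finset.mul_sum, Finset.sum_mul]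
      exact Finset.sum_congr rfl fun p _ => by ring
    simp only [hpt]
    rw [Summable.tsum_finsetSum, Finset.mul_sum]
    · refine Finset.sum_congr rfl fun p _ => ?_
      rw [tsum_mul_left]; ring
    · intro p _
      refine Summable.mul_left _ (A.summable_mul hs (fun x => chi η x *
        (tent H (2 * m) p.1 p.2 (nn p.1 p.2) (dot (nn p.1 p.2) ε) x : ℝ))
        (B := ((|dot (nn p.1 p.2) ε| : ℤ) : ℝ)) fun x => ?_)
      rw [abs_mul, chi_abs, one_mul]
      exact tent_abs _ _ _ _ _ _
  -- assembly
  have hall := ((t1a.add t1b).const_mul (1 / 8)).add ((t3.sub (t2.const_mul (1 / 2))).const_mul (1 / 4))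
  rw [zero_add, mul_zero, sub_zero, mul_zero, add_zero] at hall
  refine hall.congr' ?_
  filter_upwards [self_mem_nhdsWithin] with s hs
  have hs : 0 < s := hs
  have sb : ∀ (G : L4 → ℝ) (B : ℝ), (∀ x, |G x| ≤ B) → Summable fun x => chi η x * G x * ew H s x := by
    intro G B hG
    refine A.summable_mul hs (fun x => chi η x * G x) (B := B) fun x => ?_
    rw [abs_mul, chi_abs, one_mul]; exact hG x
  have s0 : Summable fun x => chi η x * ew H s x := A.summable_mul hs _ (fun x => (chi_abs η x).le)
  have sh : ∀ u : L4, chi η u = -1 → Summable (fun x => chi η x * ew H s (x + u)) ∧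
      ∑' x, chi η x * ew H s (x + u) = - ∑' x, chi η x * ew H s x := by
    intro u hu
    have e1 : (fun x => chi η x * ew H s (x + u)) =
        fun x => -((fun x => chi η x * ew H s x) (Equiv.addRight u x)) := by
      funext x
      simp [chi_add, hu]
    have e2 : Summable fun x => (fun x => chi η x * ew H s x) (Equiv.addRight u x) :=
      (Equiv.addRight u).summable_iff.mpr s0
    rw [e1]
    refine ⟨e2.neg, ?_⟩
    rw [tsum_neg, (Equiv.addRight u).tsum_eq (fun x => chi η x * ew H s x)]
  obtain ⟨sp, ep⟩ := sh ε hχε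
  obtain ⟨sm, em⟩ := sh (-ε) hχε'
  have sR := sb R BR hRb
  have sD1 := sb (fun x => a x + b x) _ hD1
  have sD2 := sb (fun x => a x ^ 2 + b x ^ 2) _ hD2
  have q1 : ∑' x, chi η x * (2 * (a x + b x) - R x) * ew H s x =
      2 * ∑' x, chi η x * (a x + b x) * ew H s x - ∑' x, chi η x * R x * ew H s x := by
    rw [← tsum_mul_left, ← (sD1.mul_left 2).tsum_sub sR]
    exact tsum_congr fun x => by ring
  have q3 : ∑' x, chi η x * ((2 * ew H s x - ew H s (x + ε)
      - ew H s (x + -ε) - s * (a x + b x) * ew H s x + s ^ 2 / 2 * (a x ^ 2 + b x ^ 2) * ew H s x)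
        / s ^ 2) = 1 / s ^ 2 * (2 * ∑' x, chi η x * ew H s x - ∑' x, chi η x * ew H s (x + ε)
        - ∑' x, chi η x * ew H s (x + -ε) - s * ∑' x, chi η x * (a x + b x) * ew H s x
        + s ^ 2 / 2 * ∑' x, chi η x * (a x ^ 2 + b x ^ 2) * ew H s x) := by
    have hh := (((((s0.hasSum.mul_left 2).sub sp.hasSum).sub sm.hasSum).sub
      (sD1.hasSum.mul_left s)).add (sD2.hasSum.mul_left (s ^ 2 / 2))).mul_left (1 / s ^ 2)
    rw [← hh.tsum_eq]
    exact tsum_congr fun x => by field_simp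
  rw [q1, q3, ep, em]
  field_simp
  ring

lemma H_two_mul (A : AD Y H) (x : L4) : H ((2 : ℤ) • x) = 2 * H x := by
  obtain ⟨y, hy, hyx⟩ := A.ex x
  obtain ⟨y', hy', hyx'⟩ := A.ex ((2 : ℤ) • x)
  have h1 := A.le y hy ((2 : ℤ) • x)
  have h2 := A.le y' hy' x
  rw [dot_smul] at h1 hyx'
  linarith

theorem theoremA (A : AD Y H) {cc : L4 → L4 → ℤ} {nn zz : L4 → L4 → L4} {κ : L4 → L4 → ℝ}
    (P : PD Y H cc nn zz κ) :
    Tendsto (fun s => s ^ 2 * (16 * ∑' x, ew H (2 * s) x - ∑' x, ew H s x))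
      (nhdsWithin (0 : ℝ) (Set.Ioi 0))
      (nhds (1 / 8 * ∑ p ∈ Y.offDiag, (cc p.1 p.2 : ℝ) * κ p.1 p.2)) := by
  classical
  have h1 := tendsto_finsetSum ((Finset.univ : Finset (Fin 4 → ZMod 2)).erase 0)
    (fun η hη => Neta A P (Finset.ne_of_mem_erase hη))
  have hlim : ∑ η ∈ (Finset.univ : Finset (Fin 4 → ZMod 2)).erase 0,
      (1 / 8 * ∑ p ∈ Y.offDiag, (cc p.1 p.2 : ℝ) *
        if red (nn p.1 p.2) = η then κ p.1 p.2 else 0) =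
      1 / 8 * ∑ p ∈ Y.offDiag, (cc p.1 p.2 : ℝ) * κ p.1 p.2 := by
    rw [← Finset.mul_sum, Finset.sum_comm]
    congr 1
    refine Finset.sum_congr rfl fun p hp => ?_
    obtain ⟨h1, h2, h12⟩ := Finset.mem_offDiag.mp hp
    have hz := P.hzz _ h1 _ h2 h12
    rw [← Finset.mul_sum, Finset.sum_ite_eq, if_pos]
    refine Finset.mem_erase.mpr ⟨fun h => ?_, Finset.mem_univ _⟩
    have h3 := chi_red (nn p.1 p.2) (zz p.1 p.2)
    rw [h, hz] at h3
    have e1 : zs (((1 : ℤ)) : ZMod 2) = -1 := by decide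
    rw [e1] at h3
    simp [chi, zchi, zs] at h3
    norm_num at h3
  rw [hlim] at h1
  refine h1.congr' ?_
  filter_upwards [self_mem_nhdsWithin] with s hs
  have hs : 0 < s := hs
  rw [← Finset.mul_sum]
  congr 1
  have s0 : ∀ η, Summable fun x => chi η x * ew H s x := fun η =>
    A.summable_mul hs _ (fun x => (chi_abs η x).le)
  have e0 : ∑' x, chi 0 x * ew H s x = ∑' x, ew H s x :=
    tsum_congr fun x => by simp [chi, zchi, zs]
  rw [← e0, eq_sub_iff_add_eq, add_comm, Finset.add_sum_erase _
    (fun η => ∑' x, chi η x * ew H s x) (Finset.mem_univ 0),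
    ← Summable.tsum_finsetSum (fun η _ => s0 η)]
  have e1 : ∀ x, ∑ η, chi η x * ew H s x = if red x = 0 then 16 * ew H s x else 0 := by
    intro x
    rw [← Finset.sum_mul]
    have := zchi_sum (red x)
    have h3 : ∑ η, chi η x = ((∑ η, zchi η (red x) : ℤ) : ℝ) := by simp [chi]
    rw [h3, this]
    split_ifs <;> simp
  simp only [e1]
  have hinj : Function.Injective fun x : L4 => (2 : ℤ) • x := by
    intro x y h
    ext i
    have := congrFun h i
    simpa using this
  rw [← hinj.tsum_eq (f := fun x => if red x = 0 then 16 * ew H s x else 0), ← tsum_mul_left]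
  · refine tsum_congr fun x => ?_
    have h2 : (2 : ZMod 2) = 0 := by decide
    rw [if_pos (by ext i; simp [red, h2])]
    rw [ew, ew, H_two_mul A]
    congr 2
    push_cast
    ring
  · intro x hx
    rw [Function.mem_support] at hx
    have hr : red x = 0 := by
      by_contra h
      exact hx (if_neg h)
    have : ∀ i, ∃ k, x i = 2 * k := fun i => by
      have := congrFun hr i
      simp only [red, Pi.zero_apply] at this
      exact (ZMod.intCast_zmod_eq_zero_iff_dvd _ 2).mp this
    choose k hk using this
    exact ⟨k, by ext i; simp [hk]⟩

end R4

namespace R4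

variable {Y : Finset L4} {H : L4 → ℤ}

lemma fiber_sum (A : AD Y H) {s : ℝ} (hs : 0 < s) (E : Set L4) :
    ∑' x, E.indicator (ew H s) x =
      ∑' j : ℕ, ({x : L4 | x ∈ E ∧ H x = j}.ncard : ℝ) * Real.exp (-s) ^ j := by
  classical
  set kp : L4 → ℕ := fun x => (H x).toNat with hkp
  have hk : ∀ x, (kp x : ℤ) = H x := fun x => Int.toNat_of_nonneg (A.nonneg x)
  have hsum := A.summable_ind hs E
  have hsum' := (Equiv.sigmaFiberEquiv kp).summable_iff.mpr hsum
  rw [← (Equiv.sigmaFiberEquiv kp).tsum_eq (E.indicator (ew H s))]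
  refine (hsum'.tsum_sigma).trans ?_
  refine tsum_congr fun j => ?_
  have h1 : ∀ x : {x // kp x = j}, (E.indicator (ew H s) ∘ (Equiv.sigmaFiberEquiv kp)) ⟨j, x⟩ =
      E.indicator (fun _ => Real.exp (-s) ^ j) x.1 := by
    rintro ⟨x, hx⟩
    simp only [Function.comp, Equiv.sigmaFiberEquiv, Equiv.coe_fn_mk, Set.indicator_apply]
    split_ifs
    · rw [ew, ← hk, hx, ← Real.exp_nat_mul]
      congr 1
      push_cast
      ring
    · rfl
  refine (tsum_congr h1).trans ?_
  have h2 := tsum_subtype {x : L4 | kp x = j} (E.indicator (fun _ => Real.exp (-s) ^ j))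
  refine h2.trans ?_
  rw [Set.indicator_indicator]
  have h3 := tsum_subtype ({x : L4 | kp x = j} ∩ E) (fun _ => Real.exp (-s) ^ j)
  rw [← h3, tsum_const, Nat.card_coe_set_eq, nsmul_eq_mul]
  congr 3
  ext x
  constructor
  · rintro ⟨h, h'⟩
    have h : kp x = j := h
    exact ⟨h', by rw [← hk, h]⟩
  · rintro ⟨h, h'⟩
    refine ⟨?_, h⟩
    have := hk x
    rw [h'] at this
    exact_mod_cast this

lemma ch1 (n : ℕ) : (((n + 1).choose 1 : ℕ) : ℝ) = n + 1 := by simp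
lemma ch2 (n : ℕ) : (((n + 2).choose 2 : ℕ) : ℝ) = (n + 1) * (n + 2) / 2 := by
  have h := Nat.add_one_mul_choose_eq (n + 1) 1
  have h' : (((n + 1 + 1) * (n + 1).choose 1 : ℕ) : ℝ) = (((n + 1 + 1).choose 2 * 2 : ℕ) : ℝ) := by
    exact_mod_cast h
  push_cast at h'
  simp at h'
  push_cast
  rw [show n + 2 = n + 1 + 1 from rfl]
  linarith
lemma ch3 (n : ℕ) : (((n + 3).choose 3 : ℕ) : ℝ) = (n + 1) * (n + 2) * (n + 3) / 6 := by
  have h := Nat.add_one_mul_choose_eq (n + 2) 2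
  have h' : (((n + 2 + 1) * (n + 2).choose 2 : ℕ) : ℝ) = (((n + 2 + 1).choose 3 * 3 : ℕ) : ℝ) := by
    exact_mod_cast h
  push_cast at h'
  rw [ch2] at h'
  push_cast
  rw [show n + 3 = n + 2 + 1 from rfl]
  linarith

lemma hasSum_cube {q : ℝ} (h0 : 0 < q) (h1 : q < 1) :
    HasSum (fun n : ℕ => (n : ℝ) ^ 3 * q ^ n) (q * (1 + 4 * q + q ^ 2) / (1 - q) ^ 4) := by
  have hq : ‖q‖ < 1 := by rwa [Real.norm_of_nonneg h0.le]
  have e0 := hasSum_choose_mul_geometric_of_norm_lt_one 0 hq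
  have e1 := hasSum_choose_mul_geometric_of_norm_lt_one 1 hq
  have e2 := hasSum_choose_mul_geometric_of_norm_lt_one 2 hq
  have e3 := hasSum_choose_mul_geometric_of_norm_lt_one 3 hq
  have := (((e3.mul_left 6).sub (e2.mul_left 12)).add (e1.mul_left 7)).sub e0
  have hne : 1 - q ≠ 0 := by linarith
  have hval : q * (1 + 4 * q + q ^ 2) / (1 - q) ^ 4 = 6 * (1 / (1 - q) ^ (3 + 1)) -
      12 * (1 / (1 - q) ^ (2 + 1)) + 7 * (1 / (1 - q) ^ (1 + 1)) - 1 / (1 - q) ^ (0 + 1) := by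
    field_simp
    ring
  rw [hval]
  refine HasSum.congr_fun this ?_
  intro n
  rw [ch1, ch2, ch3]
  simp
  ring

lemma hasSum_lin {q : ℝ} (h0 : 0 < q) (h1 : q < 1) :
    HasSum (fun n : ℕ => (n : ℝ) * q ^ n) (q / (1 - q) ^ 2) := by
  have hq : ‖q‖ < 1 := by rwa [Real.norm_of_nonneg h0.le]
  exact hasSum_coe_mul_geometric_of_norm_lt_one hq

lemma tendsto_exp_neg : Tendsto (fun s : ℝ => Real.exp (-s)) (nhdsWithin 0 (Set.Ioi 0)) (nhds 1) := by
  have : Tendsto (fun s : ℝ => Real.exp (-s)) (nhds 0) (nhds (Real.exp (-0))) :=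
    (Real.continuous_exp.comp continuous_neg).tendsto 0
  simp only [neg_zero, Real.exp_zero] at this
  exact this.mono_left nhdsWithin_le_nhds

lemma tendsto_ratio : Tendsto (fun s : ℝ => s / (1 - Real.exp (-s))) (nhdsWithin 0 (Set.Ioi 0)) (nhds 1) := by
  have hd : HasDerivAt (fun s : ℝ => 1 - Real.exp (-s)) 1 0 := by
    have := ((hasDerivAt_neg (0 : ℝ)).exp).const_sub 1
    simpa using this
  have := (hasDerivAt_iff_tendsto_slope_zero.mp hd).mono_left
    (nhdsWithin_mono 0 (show Set.Ioi (0 : ℝ) ⊆ {0}ᶜ from fun x hx => ne_of_gt hx))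
  have h2 := this.inv₀ one_ne_zero
  rw [inv_one] at h2
  refine h2.congr fun s => ?_
  simp [div_eq_mul_inv, mul_comm]

lemma T_formula (A : AD Y H) {a b : ℝ} (hf0 : {x : L4 | H x = 0}.ncard = 1)
    (hf : ∀ j : ℕ, 1 ≤ j → ({x : L4 | H x = j}.ncard : ℝ) = a * j ^ 3 + b * j) {s : ℝ}
    (hs : 0 < s) : ∑' x, ew H s x = 1 + a * (Real.exp (-s) * (1 + 4 * Real.exp (-s)
      + Real.exp (-s) ^ 2) / (1 - Real.exp (-s)) ^ 4) +
      b * (Real.exp (-s) / (1 - Real.exp (-s)) ^ 2) := by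
  have h := fiber_sum A hs Set.univ
  rw [Set.indicator_univ] at h
  rw [h]
  have h0 : 0 < Real.exp (-s) := Real.exp_pos _
  have h1 : Real.exp (-s) < 1 := by rw [Real.exp_lt_one_iff]; linarith
  have e1 := ((hasSum_ite_eq (0 : ℕ) (1 : ℝ)).add ((hasSum_cube h0 h1).mul_left a)).add
    ((hasSum_lin h0 h1).mul_left b)
  rw [← e1.tsum_eq]
  refine tsum_congr fun j => ?_
  simp only [Set.mem_univ, true_and]
  rcases Nat.eq_zero_or_pos j with rfl | hj
  · simp [hf0]
  · rw [hf j hj, if_neg hj.ne']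
    ring

lemma T_limit (A : AD Y H) {a b : ℝ} (hf0 : {x : L4 | H x = 0}.ncard = 1)
    (hf : ∀ j : ℕ, 1 ≤ j → ({x : L4 | H x = j}.ncard : ℝ) = a * j ^ 3 + b * j) :
    Tendsto (fun s => s ^ 2 * (16 * ∑' x, ew H (2 * s) x - ∑' x, ew H s x))
      (nhdsWithin (0 : ℝ) (Set.Ioi 0)) (nhds (3 * b)) := by
  have hq := tendsto_exp_neg
  have hr := tendsto_ratio
  have hs : Tendsto (fun s : ℝ => s) (nhdsWithin 0 (Set.Ioi 0)) (nhds 0) :=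
    tendsto_id.mono_left nhdsWithin_le_nhds
  have h1q : Tendsto (fun s : ℝ => 1 + Real.exp (-s)) (nhdsWithin 0 (Set.Ioi 0)) (nhds (1 + 1)) :=
    tendsto_const_nhds.add hq
  have l1 : Tendsto (fun s : ℝ => s ^ 2 * (15 - a * (Real.exp (-s) *
      (1 - 4 * Real.exp (-s) + Real.exp (-s) ^ 2) / (1 + Real.exp (-s)) ^ 4)))
      (nhdsWithin 0 (Set.Ioi 0)) (nhds (0 ^ 2 * (15 - a * (1 *
      (1 - 4 * 1 + 1 ^ 2) / (1 + 1) ^ 4)))) := by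
    refine (hs.pow 2).mul (tendsto_const_nhds.sub (((hq.mul
      ((tendsto_const_nhds.sub (hq.const_mul 4)).add (hq.pow 2))).div (h1q.pow 4) (by norm_num)).const_mul a))
  have l2 : Tendsto (fun s : ℝ => b * ((s / (1 - Real.exp (-s))) ^ 2 *
      ((16 * Real.exp (-s) ^ 2 - Real.exp (-s) * (1 + Real.exp (-s)) ^ 2) / (1 + Real.exp (-s)) ^ 2)))
      (nhdsWithin 0 (Set.Ioi 0)) (nhds (b * (1 ^ 2 * ((16 * 1 ^ 2 - 1 * (1 + 1) ^ 2) / (1 + 1) ^ 2)))) := by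
    refine ((hr.pow 2).mul ((((hq.pow 2).const_mul 16).sub (hq.mul (h1q.pow 2))).div (h1q.pow 2)
      (by norm_num))).const_mul b
  have := l1.add l2
  have hval : (0 : ℝ) ^ 2 * (15 - a * (1 * (1 - 4 * 1 + 1 ^ 2) / (1 + 1) ^ 4)) +
      b * (1 ^ 2 * ((16 * 1 ^ 2 - 1 * (1 + 1) ^ 2) / (1 + 1) ^ 2)) = 3 * b := by ring
  rw [hval] at this
  refine this.congr' ?_
  filter_upwards [self_mem_nhdsWithin] with s hs
  have hs : 0 < s := hs
  rw [T_formula A hf0 hf hs, T_formula A hf0 hf (by positivity : 0 < 2 * s)]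
  have e2 : Real.exp (-(2 * s)) = Real.exp (-s) ^ 2 := by
    rw [← Real.exp_nat_mul]; congr 1; push_cast; ring
  rw [e2]
  have h0 : 0 < Real.exp (-s) := Real.exp_pos _
  have h1 : Real.exp (-s) < 1 := by rw [Real.exp_lt_one_iff]; linarith
  set q := Real.exp (-s)
  have n1 : 1 - q ≠ 0 := by linarith
  have n2 : 1 + q ≠ 0 := by linarith
  have n3 : 1 - q ^ 2 = (1 - q) * (1 + q) := by ring
  rw [n3]
  field_simp
  ring

/-- Abelian lemma -/
lemma abelian {f : ℕ → ℝ} {v : ℝ} (hf : Tendsto (fun m : ℕ => 2 * f m / (m : ℝ) ^ 2) atTop (nhds v)) :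
    Tendsto (fun s : ℝ => s ^ 3 * ∑' m, f m * Real.exp (-s) ^ m) (nhdsWithin 0 (Set.Ioi 0)) (nhds v) := by
  set g : ℕ → ℝ := fun m => ((m + 2).choose 2 : ℕ) with hg
  have hgp : ∀ m, 0 < g m := fun m => by
    simp only [hg]; exact_mod_cast Nat.choose_pos (by omega)
  have hgs : ∀ q : ℝ, 0 < q → q < 1 → HasSum (fun m => g m * q ^ m) (1 / (1 - q) ^ 3) := by
    intro q h0 h1
    exact hasSum_choose_mul_geometric_of_norm_lt_one 2 (by rwa [Real.norm_of_nonneg h0.le])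
  -- ratio of f to g
  have hfg : Tendsto (fun m => f m / g m - v) atTop (nhds 0) := by
    have hmg : Tendsto (fun m : ℕ => (m : ℝ) ^ 2 / (2 * g m)) atTop (nhds 1) := by
      have i1 : Tendsto (fun m : ℕ => (1 : ℝ) / (m : ℝ)) atTop (nhds 0) := tendsto_one_div_atTop_nhds_zero_nat
      have i2 : Tendsto (fun m : ℕ => 1 / ((1 + 1 / (m : ℝ)) * (1 + 2 * (1 / (m : ℝ))))) atTop
          (nhds (1 / ((1 + 0) * (1 + 2 * 0)))) :=
        tendsto_const_nhds.div ((tendsto_const_nhds.add i1).mul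
          (tendsto_const_nhds.add (i1.const_mul 2))) (by norm_num)
      norm_num at i2
      refine i2.congr' ?_
      filter_upwards [eventually_gt_atTop 0] with m hm
      have hm' : (0 : ℝ) < m := by exact_mod_cast hm
      simp only [hg]
      rw [ch2]
      field_simp
    have := (hf.mul hmg).sub_const v
    rw [mul_one, sub_self] at this
    refine this.congr' ?_
    filter_upwards [eventually_gt_atTop 0] with m hm
    have hm' : (0 : ℝ) < m := by exact_mod_cast hm
    have := (hgp m).ne'
    field_simp
  set c : ℕ → ℝ := fun m => f m - v * g m with hc
  have hcN : ∀ δ > 0, ∃ N : ℕ, ∀ m, N ≤ m → |c m| ≤ δ * g m := by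
    intro δ hδ
    obtain ⟨N, hN⟩ := Metric.tendsto_atTop.mp hfg δ hδ
    refine ⟨N, fun m hm => ?_⟩
    have h := hN m hm
    rw [Real.dist_eq, sub_zero] at h
    have e : c m = (f m / g m - v) * g m := by
      have := (hgp m).ne'
      simp only [hc]; field_simp
    rw [e, abs_mul, abs_of_pos (hgp m)]
    exact mul_le_mul_of_nonneg_right h.le (hgp m).le
  have hbd : ∀ δ > 0, ∃ B : ℝ, ∀ q : ℝ, 0 < q → q < 1 →
      Summable (fun m => c m * q ^ m) ∧ |∑' m, c m * q ^ m| ≤ δ * (1 / (1 - q) ^ 3) + B := by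
    intro δ hδ
    obtain ⟨N, hN⟩ := hcN δ hδ
    refine ⟨∑ m ∈ Finset.range N, |c m|, fun q h0 h1 => ?_⟩
    have hs1 := (hgs q h0 h1).mul_left δ
    have hs2 : HasSum (fun m => if m ∈ Finset.range N then |c m| else 0)
        (∑ m ∈ Finset.range N, |c m|) := by
      have := hasSum_sum_of_ne_finset_zero (f := fun m => if m ∈ Finset.range N then |c m| else 0)
        (s := Finset.range N) (L := SummationFilter.unconditional ℕ) (fun b hb => if_neg hb)
      rwa [Finset.sum_congr rfl (fun x hx => if_pos hx)] at this
    have hle : ∀ m, ‖c m * q ^ m‖ ≤ δ * (g m * q ^ m) +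
        (if m ∈ Finset.range N then |c m| else 0) := by
      intro m
      have hqm : 0 < q ^ m := pow_pos h0 m
      have hqm1 : q ^ m ≤ 1 := pow_le_one₀ h0.le h1.le
      rw [Real.norm_eq_abs, abs_mul, abs_of_pos hqm]
      split_ifs with h
      · have : |c m| * q ^ m ≤ |c m| := mul_le_of_le_one_right (abs_nonneg _) hqm1
        have := mul_pos hδ (mul_pos (hgp m) hqm)
        linarith
      · have := hN m (by simpa using h)
        nlinarith
    refine ⟨Summable.of_norm_bounded (hs1.add hs2).summable hle, ?_⟩
    have := tsum_of_norm_bounded (hs1.add hs2) hle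
    simpa using this
  have hlim0 : Tendsto (fun s : ℝ => s ^ 3 * ∑' m, c m * Real.exp (-s) ^ m)
      (nhdsWithin 0 (Set.Ioi 0)) (nhds 0) := by
    rw [Metric.tendsto_nhds]
    intro ε hε
    obtain ⟨B, hB⟩ := hbd (ε / 2) (by positivity)
    have hs : Tendsto (fun s : ℝ => s) (nhdsWithin 0 (Set.Ioi 0)) (nhds 0) :=
      tendsto_id.mono_left nhdsWithin_le_nhds
    have hl : Tendsto (fun s : ℝ => ε / 2 * (s / (1 - Real.exp (-s))) ^ 3 + s ^ 3 * B)
        (nhdsWithin 0 (Set.Ioi 0)) (nhds (ε / 2 * 1 ^ 3 + 0 ^ 3 * B)) :=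
      ((tendsto_ratio.pow 3).const_mul _).add ((hs.pow 3).mul_const B)
    have hlt : ε / 2 * 1 ^ 3 + 0 ^ 3 * B < ε := by norm_num; linarith
    filter_upwards [hl.eventually_lt_const hlt, self_mem_nhdsWithin] with s h1 h2
    have h2 : 0 < s := h2
    have h3 := (hB (Real.exp (-s)) (Real.exp_pos _) (by rw [Real.exp_lt_one_iff]; linarith)).2
    rw [Real.dist_eq, sub_zero, abs_mul, abs_of_pos (pow_pos h2 3)]
    refine lt_of_le_of_lt (mul_le_mul_of_nonneg_left h3 (pow_pos h2 3).le) (lt_of_eq_of_lt ?_ h1)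
    rw [div_pow]; ring
  have hv : Tendsto (fun s : ℝ => v * (s / (1 - Real.exp (-s))) ^ 3)
      (nhdsWithin 0 (Set.Ioi 0)) (nhds (v * 1 ^ 3)) := (tendsto_ratio.pow 3).const_mul v
  have hfin := hlim0.add hv
  rw [one_pow, mul_one, zero_add] at hfin
  refine hfin.congr' ?_
  filter_upwards [self_mem_nhdsWithin] with s h2
  have h2 : 0 < s := h2
  have q0 := Real.exp_pos (-s)
  have q1 : Real.exp (-s) < 1 := by rw [Real.exp_lt_one_iff]; linarith
  obtain ⟨B, hB⟩ := hbd 1 one_pos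
  have h4 := (hB _ q0 q1).1.hasSum.add ((hgs _ q0 q1).mul_left v)
  have h5 : HasSum (fun m => f m * Real.exp (-s) ^ m) (∑' m, c m * Real.exp (-s) ^ m +
      v * (1 / (1 - Real.exp (-s)) ^ 3)) := by
    refine HasSum.congr_fun h4 ?_
    intro m
    simp only [hc]; ring
  rw [h5.tsum_eq, div_pow]
  ring

end R4

namespace R4

/-- the integer lattice as a submodule -/
def LZ : Submodule ℤ E4 := Submodule.span ℤ (Set.range (Pi.basisFun ℝ (Fin 4)))

instance : DiscreteTopology LZ := by unfold LZ; infer_instance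

lemma mem_LZ {x : E4} : x ∈ LZ ↔ ∃ n : L4, coeLat n = x := by
  unfold LZ
  rw [Module.Basis.mem_span_iff_repr_mem]
  simp only [Pi.basisFun_repr, Set.mem_range]
  constructor
  · intro h
    choose n hn using h
    exact ⟨n, by ext i; simpa [coeLat] using hn i⟩
  · rintro ⟨n, rfl⟩ i
    exact ⟨n i, by simp [coeLat]⟩

lemma lattice_conv0 {E : Type*} [NormedAddCommGroup E] [NormedSpace ℝ E] [FiniteDimensional ℝ E]
    [MeasurableSpace E] [BorelSpace E] (L : Submodule ℤ E) [DiscreteTopology L] [IsZLattice ℝ L] {s : Set E}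
    (hsb : Bornology.IsBounded s) (hsc : IsClosed s) (hsconv : Convex ℝ s) :
    ∃ v : ℝ, Tendsto (fun n : ℕ ↦ (Nat.card (s ∩ (n : ℝ)⁻¹ • (L : Set E) : Set E) : ℝ)
      / (n : ℝ) ^ (Module.finrank ℝ E)) atTop (nhds v) := by
  have : Module.Finite ℤ L := ZLattice.module_finite ℝ L
  have : Module.Free ℤ L := ZLattice.module_free ℝ L
  obtain ⟨b⟩ : Nonempty (Module.Basis (Fin (Module.finrank ℝ E)) ℤ L) := ⟨Module.finBasisOfFinrankEq ℤ L (ZLattice.rank ℝ L)⟩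
  have hfr : volume (frontier ((b.ofZLatticeBasis ℝ).equivFun '' s)) = 0 :=
    Convex.addHaar_frontier volume (hsconv.is_linear_image (b.ofZLatticeBasis ℝ).equivFun.isLinear)
  have := ZLattice.covolume.tendsto_card_div_pow'' b hsb hsc.measurableSet hfr
  rw [Fintype.card_fin] at this
  exact ⟨_, this⟩

lemma lattice_conv {W : Submodule ℝ E4} {θ : Set E4} (hcompact : IsCompact θ) (hconv : Convex ℝ θ)
    (L : Submodule ℤ W) [DiscreteTopology L] [IsZLattice ℝ L] (u : E4) :
    ∃ v : ℝ, Tendsto (fun n : ℕ ↦ (Nat.card ({w : W | u + (w : E4) ∈ θ} ∩ (n : ℝ)⁻¹ • (L : Set W) : Set W) : ℝ)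
      / (n : ℝ) ^ (Module.finrank ℝ W)) atTop (nhds v) := by
  have hsb : Bornology.IsBounded {w : W | u + (w : E4) ∈ θ} := by
    obtain ⟨R, hR⟩ := hcompact.isBounded.exists_norm_le
    refine isBounded_iff_forall_norm_le.mpr ⟨R + ‖u‖, fun w hw => ?_⟩
    have := hR _ hw
    have h2 : (w : E4) = (u + (w : E4)) - u := by abel
    rw [Submodule.coe_norm, h2]
    exact (norm_sub_le _ _).trans (by linarith)
  have hsc : IsClosed {w : W | u + (w : E4) ∈ θ} := hcompact.isClosed.preimage
    (continuous_const.add continuous_subtype_val)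
  have hsconv : Convex ℝ {w : W | u + (w : E4) ∈ θ} := by
    intro x hx y hy a c ha hc hac
    have : u + ((a • x + c • y : W) : E4) = a • (u + (x : E4)) + c • (u + (y : E4)) := by
      simp only [smul_add, Submodule.coe_add, Submodule.coe_smul]
      have : u = a • u + c • u := by rw [← add_smul, hac, one_smul]
      conv_lhs => rw [this]
      abel
    show u + ((a • x + c • y : W) : E4) ∈ θ
    rw [this]
    exact hconv hx hy ha hc hac
  exact lattice_conv0 L hsb hsc hsconv

lemma lattice_count (U : Finset L4) (hU : U.Nonempty) {θ : Set E4}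
    (hθ : θ = convexHull ℝ (coeLat '' (U : Set L4))) : ∃ v : ℝ,
    Tendsto (fun m : ℕ => ((latticePoints ((m : ℝ) • θ)).ncard : ℝ) / (m : ℝ) ^ (dimSet θ))
      atTop (nhds v) := by
  obtain ⟨u0, hu0⟩ := hU
  have hu0θ : coeLat u0 ∈ θ := by
    rw [hθ]; exact subset_convexHull ℝ _ ⟨u0, hu0, rfl⟩
  set S : Set E4 := (fun x => x - coeLat u0) '' (coeLat '' (U : Set L4)) with hS
  set W : Submodule ℝ E4 := Submodule.span ℝ S with hW
  have hWd : (affineSpan ℝ θ).direction = W := by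
    rw [hθ, affineSpan_convexHull, direction_affineSpan,
      vectorSpan_eq_span_vsub_set_right ℝ (p := coeLat u0)
        (Set.mem_image_of_mem _ (Finset.mem_coe.mpr hu0))]
    rfl
  have hSL : S ⊆ LZ := by
    rintro _ ⟨_, ⟨u, _, rfl⟩, rfl⟩
    exact mem_LZ.mpr ⟨u - u0, coeLat_sub u u0⟩
  set L : Submodule ℤ W := ZLattice.comap ℝ LZ W.subtype with hL
  have : DiscreteTopology L := ZLattice.comap_discreteTopology ℝ LZ
    continuous_subtype_val Subtype.val_injective
  have : IsZLattice ℝ L := ⟨by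
    rw [eq_top_iff]
    refine (Submodule.span_span_coe_preimage (R := ℝ) (s := S)).symm.le.trans ?_
    exact Submodule.span_mono (fun x hx => hSL hx)⟩
  have hcompact : IsCompact θ := by
    rw [hθ]; exact (U.finite_toSet.image _).isCompact_convexHull ℝ
  have hconv : Convex ℝ θ := by rw [hθ]; exact convex_convexHull ℝ _
  obtain ⟨v, key⟩ := lattice_conv hcompact hconv L (coeLat u0)
  have hk : Module.finrank ℝ W = dimSet θ := by rw [dimSet, hWd]
  rw [hk] at key
  refine ⟨v, key.congr' ?_⟩
  filter_upwards [eventually_gt_atTop 0] with m hm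
  have hm0 : (m : ℝ) ≠ 0 := by exact_mod_cast hm.ne'
  congr 2
  rw [Nat.card_coe_set_eq]
  symm
  have hmem : ∀ x : L4, x ∈ latticePoints ((m : ℝ) • θ) → (m : ℝ)⁻¹ • coeLat x ∈ θ := by
    intro x hx
    exact (Set.mem_smul_set_iff_inv_smul_mem₀ hm0 _ _).mp hx
  have hmemW : ∀ x : L4, x ∈ latticePoints ((m : ℝ) • θ) →
      (m : ℝ)⁻¹ • coeLat x - coeLat u0 ∈ W := by
    intro x hx
    rw [← hWd, direction_affineSpan]
    exact vsub_mem_vectorSpan ℝ (hmem x hx) hu0θ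
  refine Set.ncard_congr (fun x hx => ⟨_, hmemW x hx⟩) ?_ ?_ ?_
  · intro x hx
    refine ⟨?_, ?_⟩
    · show coeLat u0 + ((m : ℝ)⁻¹ • coeLat x - coeLat u0) ∈ θ
      rw [add_sub_cancel]; exact hmem x hx
    · rw [Set.mem_inv_smul_set_iff₀ hm0]
      show (m : ℝ) • ((m : ℝ)⁻¹ • coeLat x - coeLat u0) ∈ LZ
      rw [mem_LZ]
      refine ⟨x - m • u0, ?_⟩
      rw [smul_sub, smul_inv_smul₀ hm0, coeLat_sub, coeLat_nsmul]
  · intro x y hx hy hxy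
    have h := congrArg Subtype.val hxy
    have h : (m : ℝ)⁻¹ • coeLat x - coeLat u0 = (m : ℝ)⁻¹ • coeLat y - coeLat u0 := h
    have h2 := sub_left_injective h
    exact coeLat_inj (smul_right_injective E4 (inv_ne_zero hm0) h2)
  · rintro w ⟨hw1, hw2⟩
    rw [Set.mem_inv_smul_set_iff₀ hm0] at hw2
    have hw2 : (m : ℝ) • (w : E4) ∈ LZ := hw2
    obtain ⟨n, hn⟩ := mem_LZ.mp hw2
    have e : (m : ℝ)⁻¹ • coeLat (n + m • u0) = (w : E4) + coeLat u0 := by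
      rw [coeLat_add, coeLat_nsmul, hn, ← smul_add, inv_smul_smul₀ hm0]
    refine ⟨n + m • u0, ?_, ?_⟩
    · show coeLat (n + m • u0) ∈ (m : ℝ) • θ
      rw [Set.mem_smul_set_iff_inv_smul_mem₀ hm0, e, add_comm]
      exact hw1
    · apply Subtype.ext
      show (m : ℝ)⁻¹ • coeLat (n + m • u0) - coeLat u0 = w
      rw [e, add_sub_cancel_right]

lemma volume_count {Δ : Set E4} (hc : IsCompact Δ) (hconv : Convex ℝ Δ) :
    Tendsto (fun m : ℕ => ((latticePoints ((m : ℝ) • Δ)).ncard : ℝ) / (m : ℝ) ^ 4)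
      atTop (nhds (volume Δ).toReal) := by
  have key := tendsto_card_div_pow_atTop_volume Δ hc.isBounded hc.isClosed.measurableSet
    (hconv.addHaar_frontier volume)
  rw [Fintype.card_fin] at key
  refine key.congr' ?_
  filter_upwards [eventually_gt_atTop 0] with m hm
  have hm0 : (m : ℝ) ≠ 0 := by exact_mod_cast hm.ne'
  congr 2
  rw [Nat.card_coe_set_eq]
  symm
  refine Set.ncard_congr (fun x _ => (m : ℝ)⁻¹ • coeLat x) ?_ ?_ ?_
  · intro x hx
    refine ⟨(Set.mem_smul_set_iff_inv_smul_mem₀ hm0 _ _).mp hx, ?_⟩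
    rw [Set.mem_inv_smul_set_iff₀ hm0, smul_inv_smul₀ hm0]
    exact mem_LZ.mpr ⟨x, rfl⟩
  · intro x y _ _ hxy
    exact coeLat_inj (smul_right_injective E4 (inv_ne_zero hm0) hxy)
  · rintro w ⟨hw1, hw2⟩
    rw [Set.mem_inv_smul_set_iff₀ hm0] at hw2
    obtain ⟨n, hn⟩ := mem_LZ.mp hw2
    refine ⟨n, ?_, ?_⟩
    · show coeLat n ∈ (m : ℝ) • Δ
      rw [Set.mem_smul_set_iff_inv_smul_mem₀ hm0, hn, inv_smul_smul₀ hm0]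
      exact hw1
    · show (m : ℝ)⁻¹ • coeLat n = w
      rw [hn, inv_smul_smul₀ hm0]

end R4

namespace R4

open Matrix in
/-- real pairing -/
def rd (y x : E4) : ℝ := y ⬝ᵥ x

lemma rd_def (y x : E4) : rd y x = ∑ i, y i * x i := rfl
lemma rd_add (y x z : E4) : rd y (x + z) = rd y x + rd y z := dotProduct_add y x z
lemma rd_sub (y x z : E4) : rd y (x - z) = rd y x - rd y z := dotProduct_sub y x z
lemma rd_smul (t : ℝ) (y x : E4) : rd y (t • x) = t * rd y x := dotProduct_smul t y x
lemma add_rd (y x z : E4) : rd (x + z) y = rd x y + rd z y := add_dotProduct x z y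
lemma sub_rd (y x z : E4) : rd (x - z) y = rd x y - rd z y := sub_dotProduct x z y
lemma smul_rd (t : ℝ) (y x : E4) : rd (t • y) x = t * rd y x := smul_dotProduct t y x
lemma neg_rd (y x : E4) : rd (-y) x = - rd y x := neg_dotProduct y x
lemma rd_zero (y : E4) : rd y 0 = 0 := dotProduct_zero y
lemma rd_cont (y : E4) : Continuous (rd y) := by
  unfold rd dotProduct; fun_prop
lemma rd_lat (y x : L4) : rd (coeLat y) (coeLat x) = (dot y x : ℝ) := by
  simp [rd_def, dot, coeLat]
lemma exists_rd (f : E4 →L[ℝ] ℝ) : ∃ y : E4, ∀ x, f x = rd y x := by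
  refine ⟨fun i => f (Pi.single i 1), fun x => ?_⟩
  conv_lhs => rw [← Finset.univ_sum_single x]
  rw [map_sum, rd_def]
  refine Finset.sum_congr rfl fun i _ => ?_
  have : Pi.single i (x i) = x i • (Pi.single i (1 : ℝ) : E4) := by
    rw [← Pi.single_smul, smul_eq_mul, mul_one]
  rw [this, map_smul, smul_eq_mul, mul_comm]

/-- the geometric data -/
structure Geo (Δ : Set E4) (V Y : Finset L4) (hh : E4 → ℝ) (H : L4 → ℤ) : Prop where
  hV : Δ = convexHull ℝ (coeLat '' (V : Set L4))
  h0 : (0 : E4) ∈ interior Δ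
  hQ : {y : E4 | ∀ x ∈ Δ, rd y x ≤ 1} = convexHull ℝ (coeLat '' (Y : Set L4))
  hext : ∀ y ∈ Y, coeLat y ∈ Set.extremePoints ℝ (convexHull ℝ (coeLat '' (Y : Set L4)))
  le : ∀ y ∈ Y, ∀ x, rd (coeLat y) x ≤ hh x
  ex : ∀ x, ∃ y ∈ Y, rd (coeLat y) x = hh x
  hH : ∀ x, (H x : ℝ) = hh (coeLat x)

lemma exists_geo {Δ : Set E4} (hΔ : IsReflexive Δ) : ∃ V Y hh H, Geo Δ V Y hh H := by
  classical
  obtain ⟨⟨V, hV⟩, h0, ⟨U, hU⟩⟩ := hΔ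
  have hQ : {y : E4 | ∀ x ∈ Δ, rd y x ≤ 1} = convexHull ℝ (coeLat '' ((U.image (-·) : Finset L4) : Set L4)) := by
    have h1 : coeLat '' ((U.image (-·) : Finset L4) : Set L4) = (-(LinearMap.id : E4 →ₗ[ℝ] E4)) '' (coeLat '' (U : Set L4)) := by
      rw [Finset.coe_image, Set.image_image, Set.image_image]
      refine Set.image_congr fun u _ => ?_
      ext i; simp [coeLat]
    rw [h1, ← LinearMap.image_convexHull, ← hU]
    ext y
    simp only [Set.mem_image, LinearMap.neg_apply, LinearMap.id_apply]
    constructor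
    · intro h
      refine ⟨-y, fun x hx => ?_, by simp⟩
      have := h x hx
      rw [← rd_def, neg_rd]; linarith
    · rintro ⟨z, hz, rfl⟩ x hx
      have := hz x hx
      rw [← rd_def] at this
      rw [neg_rd]; linarith
  set Q : Set E4 := {y : E4 | ∀ x ∈ Δ, rd y x ≤ 1} with hQdef
  set Y : Finset L4 := (U.image (-·)).filter (fun y => coeLat y ∈ Q.extremePoints ℝ) with hY
  have hYext : coeLat '' (Y : Set L4) = Q.extremePoints ℝ := by
    ext z
    constructor
    · rintro ⟨y, hy, rfl⟩
      exact (Finset.mem_filter.mp hy).2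
    · intro hz
      have h2 : Q.extremePoints ℝ ⊆ coeLat '' ((U.image (-·) : Finset L4) : Set L4) := by
        rw [hQ]; exact extremePoints_convexHull_subset
      obtain ⟨y, hy, rfl⟩ := h2 hz
      exact ⟨y, Finset.mem_filter.mpr ⟨hy, hz⟩, rfl⟩
  have hQc : IsCompact Q := by
    rw [hQ]; exact ((Finset.finite_toSet _).image _).isCompact_convexHull ℝ
  have hQconv : Convex ℝ Q := by rw [hQ]; exact convex_convexHull ℝ _
  have hQY : Q = convexHull ℝ (coeLat '' (Y : Set L4)) := by
    have := closure_convexHull_extremePoints hQc hQconv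
    rw [← hYext, (((Finset.finite_toSet Y).image _).isClosed_convexHull ℝ).closure_eq] at this
    exact this.symm
  have hne : Y.Nonempty := by
    by_contra h
    rw [Finset.not_nonempty_iff_eq_empty] at h
    have h0Q : (0 : E4) ∈ Q := fun x _ => by simp [rd_def]
    rw [hQY, h] at h0Q
    simp at h0Q
  refine ⟨V, Y, fun x => Y.sup' hne (fun y => rd (coeLat y) x), fun x => Y.sup' hne (fun y => dot y x),
    hV, h0, hQY, ?_, ?_, ?_, ?_⟩
  · intro y hy
    rw [← hQY, ← hYext]; exact ⟨y, hy, rfl⟩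
  · intro y hy x
    exact Finset.le_sup' (fun y => rd (coeLat y) x) hy
  · intro x
    obtain ⟨y, hy, h⟩ := Finset.exists_mem_eq_sup' hne (fun y => rd (coeLat y) x)
    exact ⟨y, hy, h.symm⟩
  · intro x
    apply le_antisymm
    · obtain ⟨y, hy, h⟩ := Finset.exists_mem_eq_sup' hne (fun y => dot y x)
      rw [h, ← rd_lat]
      exact Finset.le_sup' (fun y => rd (coeLat y) (coeLat x)) hy
    · obtain ⟨y, hy, h⟩ := Finset.exists_mem_eq_sup' hne (fun y => rd (coeLat y) (coeLat x))
      rw [h, rd_lat]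
      exact_mod_cast Finset.le_sup' (fun y => dot y x) hy

variable {Δ : Set E4} {V Y : Finset L4} {hh : E4 → ℝ} {H : L4 → ℤ}

lemma Geo.compact (G : Geo Δ V Y hh H) : IsCompact Δ := by
  rw [G.hV]; exact ((Finset.finite_toSet _).image _).isCompact_convexHull ℝ
lemma Geo.convex (G : Geo Δ V Y hh H) : Convex ℝ Δ := by
  rw [G.hV]; exact convex_convexHull ℝ _
lemma Geo.memQ (G : Geo Δ V Y hh H) {y : L4} (hy : y ∈ Y) : ∀ x ∈ Δ, rd (coeLat y) x ≤ 1 := by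
  have : coeLat y ∈ {y : E4 | ∀ x ∈ Δ, rd y x ≤ 1} := by
    rw [G.hQ]; exact subset_convexHull ℝ _ ⟨y, hy, rfl⟩
  exact this
lemma Geo.le_iff (G : Geo Δ V Y hh H) {x : E4} {t : ℝ} : hh x ≤ t ↔ ∀ y ∈ Y, rd (coeLat y) x ≤ t := by
  constructor
  · intro h y hy; exact (G.le y hy x).trans h
  · intro h; obtain ⟨y, hy, e⟩ := G.ex x; rw [← e]; exact h y hy
lemma Geo.lt_iff (G : Geo Δ V Y hh H) {x : E4} {t : ℝ} : hh x < t ↔ ∀ y ∈ Y, rd (coeLat y) x < t := by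
  constructor
  · intro h y hy; exact (G.le y hy x).trans_lt h
  · intro h; obtain ⟨y, hy, e⟩ := G.ex x; rw [← e]; exact h y hy

/-- conv Y functional bound -/
lemma Geo.conv_le (G : Geo Δ V Y hh H) {y x : E4} (hy : y ∈ convexHull ℝ (coeLat '' (Y : Set L4))) :
    rd y x ≤ hh x := by
  have hc : Convex ℝ {y : E4 | rd y x ≤ hh x} := by
    intro a ha b hb s t hs ht hst
    have ha : rd a x ≤ hh x := ha
    have hb : rd b x ≤ hh x := hb
    show rd (s • a + t • b) x ≤ hh x
    rw [add_rd, smul_rd, smul_rd]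
    calc s * rd a x + t * rd b x ≤ s * hh x + t * hh x := by gcongr
      _ = hh x := by rw [← add_mul, hst, one_mul]
  refine convexHull_min ?_ hc hy
  rintro _ ⟨y, hy, rfl⟩
  exact G.le y hy x

lemma Geo.mem_iff (G : Geo Δ V Y hh H) {x : E4} : x ∈ Δ ↔ hh x ≤ 1 := by
  constructor
  · intro hx; rw [G.le_iff]; exact fun y hy => G.memQ hy x hx
  · intro h
    by_contra hx
    obtain ⟨f, u, hf1, hf2⟩ := geometric_hahn_banach_closed_point G.convex G.compact.isClosed hx
    obtain ⟨w, hw⟩ := exists_rd f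
    have hu : 0 < u := by
      have := hf1 0 (interior_subset G.h0); simpa using this
    have hy : u⁻¹ • w ∈ {y : E4 | ∀ x ∈ Δ, rd y x ≤ 1} := by
      intro z hz
      have := hf1 z hz
      rw [hw] at this
      rw [smul_rd, inv_mul_le_iff₀ hu]; linarith
    rw [G.hQ] at hy
    have h2 := (G.conv_le (x := x) hy).trans h
    rw [smul_rd, inv_mul_le_iff₀ hu, ← hw] at h2
    linarith

lemma Geo.hom (G : Geo Δ V Y hh H) (t : ℝ) (x : E4) (ht : 0 ≤ t) : hh (t • x) = t * hh x := by
  apply le_antisymm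
  · rw [G.le_iff]; intro y hy; rw [rd_smul]; exact mul_le_mul_of_nonneg_left (G.le y hy x) ht
  · obtain ⟨y, hy, e⟩ := G.ex x; rw [← e, ← rd_smul]; exact G.le y hy _

lemma Geo.zero (G : Geo Δ V Y hh H) : hh 0 = 0 := by
  obtain ⟨y, _, e⟩ := G.ex 0; rw [← e, rd_zero]

lemma Geo.mem_smul_iff (G : Geo Δ V Y hh H) {x : E4} {t : ℝ} (ht : 0 < t) : x ∈ t • Δ ↔ hh x ≤ t := by
  rw [Set.mem_smul_set_iff_inv_smul_mem₀ ht.ne', G.mem_iff, G.hom _ _ (by positivity),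
    inv_mul_le_iff₀ ht, mul_one]

lemma Geo.pos (G : Geo Δ V Y hh H) : ∃ c : ℝ, 0 < c ∧ ∀ x, c * ∑ i, |x i| ≤ hh x := by
  obtain ⟨R, hR⟩ := G.compact.isBounded.exists_pos_norm_le
  obtain ⟨hR0, hR⟩ := hR
  have h1 : ∀ x : E4, ∀ t : ℝ, 0 < t → hh x ≤ t → ∀ i, |x i| ≤ R * t := by
    intro x t ht hx i
    have := hR _ ((Set.mem_smul_set_iff_inv_smul_mem₀ ht.ne' _ _).mp ((G.mem_smul_iff ht).mpr hx))
    rw [norm_smul, Real.norm_of_nonneg (by positivity), inv_mul_le_iff₀ ht] at this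
    have h2 := norm_le_pi_norm x i
    rw [Real.norm_eq_abs] at h2
    linarith
  have h2 : ∀ x : E4, 0 ≤ hh x := by
    intro x
    by_contra hx
    push Not at hx
    have : x = 0 := by
      ext i
      by_contra hi
      have hi' : 0 < |x i| := abs_pos.mpr hi
      have h3 := h1 x (|x i| / (2 * R)) (by positivity) (hx.le.trans (by positivity)) i
      have h4 : R * (|x i| / (2 * R)) = |x i| / 2 := by field_simp
      linarith
    rw [this, G.zero] at hx
    exact lt_irrefl _ hx
  refine ⟨1 / (4 * R), by positivity, fun x => ?_⟩
  have h3 : ∀ i, |x i| ≤ R * hh x := by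
    intro i
    refine le_of_forall_pos_le_add fun ε hε => ?_
    have := h1 x (hh x + ε / R) (by have := h2 x; positivity) (by have : 0 < ε / R := by positivity
                                                                  linarith) i
    rw [mul_add, mul_div_cancel₀ _ hR0.ne'] at this
    exact this
  have h4 : ∑ i, |x i| ≤ ∑ _i : Fin 4, R * hh x := Finset.sum_le_sum fun i _ => h3 i
  simp at h4
  rw [one_div, inv_mul_le_iff₀ (by positivity)]
  linarith

lemma Geo.nonneg (G : Geo Δ V Y hh H) (x : E4) : 0 ≤ hh x := by
  obtain ⟨c, hc, h⟩ := G.pos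
  refine le_trans ?_ (h x)
  exact mul_nonneg hc.le (Finset.sum_nonneg fun i _ => abs_nonneg _)

lemma Geo.eq_zero (G : Geo Δ V Y hh H) {x : E4} (hx : hh x = 0) : x = 0 := by
  obtain ⟨c, hc, h⟩ := G.pos
  have h1 := h x
  rw [hx] at h1
  ext i
  have h2 : |x i| ≤ ∑ i, |x i| := Finset.single_le_sum (f := fun i => |x i|) (fun i _ => abs_nonneg _) (Finset.mem_univ i)
  have h3 : ∑ i, |x i| ≤ 0 := by
    by_contra h4
    push Not at h4
    have := mul_pos hc h4
    linarith
  exact abs_nonpos_iff.mp (h2.trans h3)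

lemma Geo.frontier_eq (G : Geo Δ V Y hh H) : frontier Δ = {x | hh x = 1} := by
  have hinterior : interior Δ = {x | hh x < 1} := by
    apply Set.Subset.antisymm
    · intro x hx
      have hc : Continuous (fun t : ℝ => t • x) := by fun_prop
      have h1 : (fun t : ℝ => t • x) ⁻¹' (interior Δ) ∈ nhds (1 : ℝ) :=
        (isOpen_interior.preimage hc).mem_nhds (by simpa using hx)
      obtain ⟨ε, hε, hb⟩ := Metric.mem_nhds_iff.mp h1
      have h2 : (1 + ε / 2) ∈ Metric.ball (1 : ℝ) ε := by
        rw [Metric.mem_ball, Real.dist_eq]; rw [abs_of_pos] <;> linarith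
      have h3 := interior_subset (hb h2)
      rw [G.mem_iff, G.hom _ _ (by linarith)] at h3
      show hh x < 1
      have := G.nonneg x
      nlinarith
    · refine interior_maximal ?_ ?_
      · intro x hx; exact G.mem_iff.mpr (le_of_lt hx)
      · have : {x | hh x < 1} = ⋂ y ∈ Y, {x | rd (coeLat y) x < 1} := by
          ext x; simp only [Set.mem_iInter, Set.mem_ofPred_eq]; exact G.lt_iff
        rw [this]
        exact isOpen_biInter_finset fun y _ => isOpen_lt (rd_cont _) continuous_const
  rw [G.compact.isClosed.frontier_eq, hinterior]
  ext x
  simp only [Set.mem_diff, Set.mem_ofPred_eq, G.mem_iff, not_lt]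
  exact ⟨fun h => le_antisymm h.1 h.2, fun h => ⟨h.le, h.ge⟩⟩

lemma Geo.gauge (G : Geo Δ V Y hh H) : Gauge V hh where
  sub x y := by
    rw [G.le_iff]; intro z hz; rw [rd_add]; exact add_le_add (G.le z hz x) (G.le z hz y)
  hom := G.hom
  le_one v hv := by
    rw [← G.mem_iff, G.hV]; exact subset_convexHull ℝ _ ⟨v, hv, rfl⟩
  rep z := by
    classical
    rcases (G.nonneg z).eq_or_lt with h | h
    · refine ⟨0, fun _ => le_rfl, ?_, ?_⟩
      · simp [G.eq_zero h.symm]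
      · simp [← h]
    · have h1 := (Set.mem_smul_set_iff_inv_smul_mem₀ h.ne' _ _).mp ((G.mem_smul_iff h).mpr le_rfl)
      rw [G.hV, ← Finset.coe_image, Finset.mem_convexHull'] at h1
      obtain ⟨w, hw0, hw1, hw⟩ := h1
      have hinj : Set.InjOn (coeLat (d := 4)) (V : Set L4) := fun a _ b _ h => coeLat_inj h
      rw [Finset.sum_image hinj] at hw1 hw
      refine ⟨fun v => if v ∈ V then hh z * w (coeLat v) else 0, ?_, ?_, ?_⟩
      · intro v
        dsimp only
        split_ifs with hv
        · exact mul_nonneg h.le (hw0 _ (Finset.mem_image_of_mem _ hv))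
        · exact le_rfl
      · have : ∑ v ∈ V, (if v ∈ V then hh z * w (coeLat v) else 0) • coeLat v =
            hh z • ∑ v ∈ V, w (coeLat v) • coeLat v := by
          rw [Finset.smul_sum]
          exact Finset.sum_congr rfl fun v hv => by rw [if_pos hv, mul_smul]
        rw [this, hw, smul_inv_smul₀ h.ne']
      · rw [Finset.sum_congr rfl (fun v hv => if_pos hv), ← Finset.mul_sum, hw1, mul_one]
  int x := by
    have := G.nonneg (coeLat x)
    rw [← G.hH] at this ⊢
    have h2 : 0 ≤ H x := by exact_mod_cast this
    exact ⟨(H x).toNat, by rw [← Int.cast_natCast, Int.toNat_of_nonneg h2]⟩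
  fin C := by
    obtain ⟨c, hc, h⟩ := G.pos
    obtain ⟨N, hN⟩ := exists_nat_ge (C / c)
    refine (Set.finite_Icc (fun _ => -(N : ℤ) : L4) (fun _ => (N : ℤ))).subset ?_
    intro x hx
    have hx : hh (coeLat x) ≤ C := hx
    have h2 : ∀ i, |x i| ≤ (N : ℤ) := by
      intro i
      have h2 : |coeLat x i| ≤ ∑ i, |coeLat x i| := Finset.single_le_sum (f := fun i => |coeLat x i|)
        (fun i _ => abs_nonneg _) (Finset.mem_univ i)
      have h3 : |coeLat x i| ≤ C / c := by
        rw [le_div_iff₀' hc]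
        exact (mul_le_mul_of_nonneg_left h2 hc.le).trans ((h _).trans hx)
      have h4 := h3.trans hN
      simp only [coeLat] at h4
      exact_mod_cast h4
    exact ⟨fun i => (abs_le.mp (h2 i)).1, fun i => (abs_le.mp (h2 i)).2⟩

lemma Geo.three (G : Geo Δ V Y hh H) {y1 y2 y3 : L4} (h1 : y1 ∈ Y) (h2 : y2 ∈ Y) (h3 : y3 ∈ Y)
    (h12 : y1 ≠ y2) (h13 : y1 ≠ y3) {t : ℝ} (ht0 : 0 < t) (ht1 : t < 1)
    (e : coeLat y1 = (1 - t) • coeLat y2 + t • coeLat y3) : False := by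
  have := (G.hext y1 h1).2 (subset_convexHull ℝ _ ⟨y2, h2, rfl⟩) (subset_convexHull ℝ _ ⟨y3, h3, rfl⟩)
    ⟨1 - t, t, by linarith, ht0, by ring, e.symm⟩
  exact h12 (coeLat_inj this).symm

lemma Geo.line (G : Geo Δ V Y hh H) {y1 y2 y3 : L4} (h1 : y1 ∈ Y) (h2 : y2 ∈ Y) (h3 : y3 ∈ Y)
    (h12 : y1 ≠ y2) (h13 : y1 ≠ y3) (h23 : y2 ≠ y3) {t : ℝ}
    (e : coeLat y3 = (1 - t) • coeLat y1 + t • coeLat y2) : False := by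
  rcases lt_trichotomy t 0 with ht | ht | ht
  · have hp : 0 < 1 - t := by linarith
    refine G.three h1 h2 h3 h12 h13 (t := 1 / (1 - t)) (by positivity) ?_ ?_
    · rw [div_lt_one hp]; linarith
    · rw [e]; ext i
      simp only [Pi.add_apply, Pi.smul_apply, smul_eq_mul]
      field_simp
      ring
  · rw [ht] at e; simp at e; exact h13 (coeLat_inj e).symm
  · rcases lt_trichotomy t 1 with h | h | h
    · exact G.three h3 h1 h2 h13.symm h23.symm ht h e
    · rw [h] at e; simp at e; exact h23 (coeLat_inj e).symm
    · refine G.three h2 h1 h3 h12.symm h23 (t := 1 / t) (by positivity) ?_ ?_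
      · rw [div_lt_one ht]; exact h
      · rw [e]; ext i
        simp only [Pi.add_apply, Pi.smul_apply, smul_eq_mul]
        field_simp
        ring

lemma Geo.AD (G : Geo Δ V Y hh H) : AD Y H where
  le y hy x := by
    have := G.le y hy (coeLat x); rw [rd_lat, ← G.hH] at this; exact_mod_cast this
  ex x := by
    obtain ⟨y, hy, e⟩ := G.ex (coeLat x); rw [rd_lat, ← G.hH] at e; exact ⟨y, hy, by exact_mod_cast e⟩
  pos := by
    obtain ⟨c, hc, h⟩ := G.pos
    exact ⟨c, hc, fun x => by rw [G.hH]; exact h (coeLat x)⟩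
  indep y1 h1 y2 h2 y3 h3 h12 h13 h23 := by
    by_contra hcon
    push Not at hcon
    have hne : ∃ j, (y1 - y2) j ≠ 0 := by
      by_contra h
      push Not at h
      apply h12
      ext j
      have := h j
      simp at this
      linarith
    obtain ⟨j, hj⟩ := hne
    have hj' : ((y1 j : ℝ) - y2 j) ≠ 0 := by
      have h : (((y1 - y2) j : ℤ) : ℝ) ≠ 0 := by exact_mod_cast hj
      simpa using h
    refine G.line h1 h2 h3 h12 h13 h23 (t := ((y1 j : ℝ) - y3 j) / ((y1 j : ℝ) - y2 j)) ?_
    ext i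
    have h := hcon i j
    have h' : (((y1 - y2) i * (y1 - y3) j : ℤ) : ℝ) = (((y1 - y2) j * (y1 - y3) i : ℤ) : ℝ) := by
      exact_mod_cast h
    simp only [Pi.sub_apply] at h'
    push_cast at h'
    simp only [coeLat, Pi.add_apply, Pi.smul_apply, smul_eq_mul]
    field_simp
    linarith

end R4

namespace R4
variable {Δ : Set E4} {V Y : Finset L4} {hh : E4 → ℝ} {H : L4 → ℤ}

lemma Geo.level_eq (G : Geo Δ V Y hh H) (j : ℕ) :
    {x : L4 | hh (coeLat x) = j} = {x : L4 | H x = j} := by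
  ext x
  simp only [Set.mem_ofPred_eq, ← G.hH]
  exact_mod_cast Iff.rfl

lemma Geo.level_zero (G : Geo Δ V Y hh H) : {x : L4 | H x = 0}.ncard = 1 := by
  rw [Set.ncard_eq_one]
  refine ⟨0, ?_⟩
  ext x
  simp only [Set.mem_ofPred_eq, Set.mem_singleton_iff]
  constructor
  · intro h
    have h1 : hh (coeLat x) = 0 := by rw [← G.hH, h]; simp
    exact coeLat_inj ((G.eq_zero h1).trans coeLat_zero.symm)
  · rintro rfl
    have := G.hH 0
    rw [coeLat_zero, G.zero] at this
    exact_mod_cast this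

lemma Geo.count_sum (G : Geo Δ V Y hh H) {m : ℕ} (hm : 0 < m) :
    (latticePoints ((m : ℝ) • Δ)).ncard = ∑ j ∈ Finset.range (m + 1), {x : L4 | H x = j}.ncard := by
  classical
  have hm' : (0 : ℝ) < m := by exact_mod_cast hm
  have hset : latticePoints ((m : ℝ) • Δ) = {x : L4 | hh (coeLat x) ≤ m} := by
    ext x; exact G.mem_smul_iff hm'
  have hfin := G.gauge.fin m
  have hcast : ∀ x : L4, hh (coeLat x) ≤ m ↔ H x ≤ m := by
    intro x; rw [← G.hH]; exact_mod_cast Iff.rfl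
  rw [hset, Set.ncard_eq_toFinset_card _ hfin,
    Finset.card_eq_sum_card_fiberwise (f := fun x => (H x).toNat) (t := Finset.range (m + 1))]
  · refine Finset.sum_congr rfl fun j hj => ?_
    rw [← Set.ncard_coe_finset]
    congr 1
    ext x
    have h0 := G.AD.nonneg x
    have hj := Finset.mem_range.mp hj
    simp only [Finset.coe_filter, Set.Finite.mem_toFinset, Set.mem_ofPred_eq, hcast]
    constructor
    · rintro ⟨_, h⟩; omega
    · intro h; omega
  · intro x hx
    have h0 := G.AD.nonneg x
    simp only [Finset.mem_coe, Set.Finite.mem_toFinset, Set.mem_ofPred_eq, hcast] at hx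
    simp only [Finset.coe_range, Set.mem_Iio]
    omega

lemma sum_ab (a b : ℝ) (m : ℕ) : ∑ j ∈ Finset.range (m + 1), (a * (j : ℝ) ^ 3 + b * j) =
    a * ((m : ℝ) ^ 2 * (m + 1) ^ 2) / 4 + b * (m * (m + 1)) / 2 := by
  induction m with
  | zero => simp
  | succ n ih => rw [Finset.sum_range_succ, ih]; push_cast; ring

lemma Geo.main_count (G : Geo Δ V Y hh H) : ∃ b : ℝ,
    (∀ j : ℕ, 1 ≤ j → ({x : L4 | H x = j}.ncard : ℝ) = 4 * (volume Δ).toReal * j ^ 3 + b * j) := by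
  obtain ⟨a, b, hab⟩ := ehrhart_odd G.gauge
  simp only [G.level_eq] at hab
  have hvol := volume_count G.compact G.convex
  have hlim : Tendsto (fun m : ℕ => ((latticePoints ((m : ℝ) • Δ)).ncard : ℝ) / (m : ℝ) ^ 4)
      atTop (nhds (a / 4)) := by
    have i1 : Tendsto (fun m : ℕ => (1 : ℝ) / (m : ℝ)) atTop (nhds 0) := tendsto_one_div_atTop_nhds_zero_nat
    have i2 : Tendsto (fun m : ℕ => (1 / (m : ℝ)) ^ 4 + a * (1 + 1 / (m : ℝ)) ^ 2 / 4 +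
        b * ((1 / (m : ℝ)) ^ 2 * (1 + 1 / (m : ℝ))) / 2) atTop
        (nhds (0 ^ 4 + a * (1 + 0) ^ 2 / 4 + b * (0 ^ 2 * (1 + 0)) / 2)) :=
      ((i1.pow 4).add ((((tendsto_const_nhds.add i1).pow 2).const_mul a).div_const 4)).add
        ((((i1.pow 2).mul (tendsto_const_nhds.add i1)).const_mul b).div_const 2)
    norm_num at i2
    refine i2.congr' ?_
    filter_upwards [eventually_gt_atTop 0] with m hm
    have hm' : (m : ℝ) ≠ 0 := by exact_mod_cast hm.ne'
    rw [G.count_sum hm, Finset.sum_range_succ']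
    have h0 : {x : L4 | H x = ((0 : ℕ) : ℤ)}.ncard = 1 := by
      simpa using G.level_zero
    rw [h0]
    have h1 := sum_ab a b m
    rw [Finset.sum_range_succ'] at h1
    push_cast
    have h2 : ∑ j ∈ Finset.range m, ({x : L4 | H x = (j : ℤ) + 1}.ncard : ℝ) =
        ∑ j ∈ Finset.range m, (a * ((j : ℝ) + 1) ^ 3 + b * ((j : ℝ) + 1)) := by
      refine Finset.sum_congr rfl fun j _ => ?_
      have := hab (j + 1) (by omega)
      push_cast at this
      exact this
    rw [h2]
    push_cast at h1
    have h3 : ∑ j ∈ Finset.range m, (a * ((j : ℝ) + 1) ^ 3 + b * ((j : ℝ) + 1)) =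
        a * ((m : ℝ) ^ 2 * (m + 1) ^ 2) / 4 + b * (m * (m + 1)) / 2 := by
      rw [← h1]; simp
    rw [h3]
    field_simp
    ring
  have := tendsto_nhds_unique hvol hlim
  refine ⟨b, fun j hj => ?_⟩
  rw [hab j hj, this]
  ring

lemma Geo.frontier_count (G : Geo Δ V Y hh H) :
    (latticePoints (frontier Δ)).ncard = {x : L4 | H x = (1 : ℕ)}.ncard := by
  rw [← G.level_eq, G.frontier_eq]
  congr 1
  ext x
  show hh (coeLat x) = 1 ↔ hh (coeLat x) = ((1 : ℕ) : ℝ)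
  simp

end R4

namespace R4
variable {Δ : Set E4} {V Y : Finset L4} {hh : E4 → ℝ} {H : L4 → ℤ}

/-- codimension-two slice -/
def th (Δ : Set E4) (y1 y2 : L4) : Set E4 := {x | x ∈ Δ ∧ rd (coeLat y1) x = 1 ∧ rd (coeLat y2) x = 1}

lemma th_comm (Δ : Set E4) (y1 y2 : L4) : th Δ y1 y2 = th Δ y2 y1 := by
  ext x; simp only [th, Set.mem_ofPred_eq]; tauto

lemma rd_sum_left {ι : Type*} (s : Finset ι) (w : ι → ℝ) (y : ι → E4) (x : E4) :
    rd (∑ i ∈ s, w i • y i) x = ∑ i ∈ s, w i * rd (y i) x := by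
  unfold rd
  rw [sum_dotProduct]
  exact Finset.sum_congr rfl fun i _ => smul_dotProduct _ _ _

lemma rd_sum_right {ι : Type*} (s : Finset ι) (w : ι → ℝ) (y : ι → E4) (x : E4) :
    rd x (∑ i ∈ s, w i • y i) = ∑ i ∈ s, w i * rd x (y i) := by
  unfold rd
  rw [dotProduct_sum]
  exact Finset.sum_congr rfl fun i _ => dotProduct_smul _ _ _

lemma conv_lat {U : Finset L4} {p : E4} (hp : p ∈ convexHull ℝ (coeLat '' (U : Set L4))) :
    ∃ w : L4 → ℝ, (∀ v ∈ U, 0 ≤ w v) ∧ ∑ v ∈ U, w v = 1 ∧ ∑ v ∈ U, w v • coeLat v = p := by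
  classical
  rw [← Finset.coe_image, Finset.mem_convexHull'] at hp
  obtain ⟨w, hw0, hw1, hw⟩ := hp
  have hinj : Set.InjOn (coeLat (d := 4)) (U : Set L4) := fun a _ b _ h => coeLat_inj h
  rw [Finset.sum_image hinj] at hw1 hw
  exact ⟨fun v => w (coeLat v), fun v hv => hw0 _ (Finset.mem_image_of_mem _ hv), hw1, hw⟩

/-- complementary slackness -/
lemma slack {U : Finset L4} {w g : L4 → ℝ} (hw : ∀ v ∈ U, 0 ≤ w v) (h1 : ∑ v ∈ U, w v = 1)
    (hg : ∀ v ∈ U, g v ≤ 1) (hs : ∑ v ∈ U, w v * g v = 1) {v : L4} (hv : v ∈ U) (hne : w v ≠ 0) : g v = 1 := by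
  have h0 : ∑ v ∈ U, w v * (1 - g v) = 0 := by
    simp only [mul_sub, mul_one, Finset.sum_sub_distrib, h1, hs, sub_self]
  rw [Finset.sum_eq_zero_iff_of_nonneg (fun v hv => mul_nonneg (hw v hv) (by linarith [hg v hv]))] at h0
  have := h0 v hv
  rcases mul_eq_zero.mp this with h | h
  · exact absurd h hne
  · linarith

lemma Geo.th_hull (G : Geo Δ V Y hh H) {y1 y2 : L4} (h1 : y1 ∈ Y) (h2 : y2 ∈ Y) :
    ∃ U : Finset L4, th Δ y1 y2 = convexHull ℝ (coeLat '' (U : Set L4)) := by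
  classical
  refine ⟨V.filter (fun v => coeLat v ∈ th Δ y1 y2), ?_⟩
  apply Set.Subset.antisymm
  · rintro x ⟨hx, e1, e2⟩
    rw [G.hV] at hx
    obtain ⟨w, hw0, hw1, rfl⟩ := conv_lat hx
    have hVΔ : ∀ v ∈ V, coeLat v ∈ Δ := fun v hv => by
      rw [G.hV]; exact subset_convexHull ℝ _ ⟨v, hv, rfl⟩
    rw [rd_sum_right] at e1 e2
    have k1 := fun v (hv : v ∈ V) (hne : w v ≠ 0) =>
      slack hw0 hw1 (fun v hv => G.memQ h1 _ (hVΔ v hv)) e1 hv hne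
    have k2 := fun v (hv : v ∈ V) (hne : w v ≠ 0) =>
      slack hw0 hw1 (fun v hv => G.memQ h2 _ (hVΔ v hv)) e2 hv hne
    have hz : ∀ v ∈ V, v ∉ V.filter (fun v => coeLat v ∈ th Δ y1 y2) → w v = 0 := by
      intro v hv hv2
      by_contra hne
      exact hv2 (Finset.mem_filter.mpr ⟨hv, hVΔ v hv, k1 v hv hne, k2 v hv hne⟩)
    rw [← Finset.sum_subset (Finset.filter_subset _ _) hz] at hw1
    rw [← Finset.sum_subset (Finset.filter_subset (fun v => coeLat v ∈ th Δ y1 y2) _)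
      (fun v hv hv2 => by rw [hz v hv hv2, zero_smul])]
    refine (convex_convexHull ℝ _).sum_mem (fun v hv => hw0 v (Finset.mem_of_mem_filter v hv)) hw1 ?_
    intro v hv
    exact subset_convexHull ℝ _ ⟨v, hv, rfl⟩
  · refine convexHull_min ?_ ?_
    · rintro _ ⟨v, hv, rfl⟩
      exact (Finset.mem_filter.mp hv).2
    · intro a ha b hb s t hs ht hst
      refine ⟨G.convex ha.1 hb.1 hs ht hst, ?_, ?_⟩
      · rw [rd_add, rd_smul, rd_smul, ha.2.1, hb.2.1]; linarith
      · rw [rd_add, rd_smul, rd_smul, ha.2.2, hb.2.2]; linarith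

lemma dimSet_empty : dimSet (∅ : Set E4) = 0 := by
  simp [dimSet]

/-- wedge levels -/
lemma Geo.wedge_level (G : Geo Δ V Y hh H) {y1 y2 : L4} (h1 : y1 ∈ Y) {m : ℕ} (hm : 0 < m) :
    {x : L4 | x ∈ wedge H y1 y2 ∧ H x = m} = latticePoints ((m : ℝ) • th Δ y1 y2) := by
  have hm' : (0 : ℝ) < m := by exact_mod_cast hm
  ext x
  show (x ∈ wedge H y1 y2 ∧ H x = m) ↔ coeLat x ∈ (m : ℝ) • th Δ y1 y2
  rw [Set.mem_smul_set_iff_inv_smul_mem₀ hm'.ne']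
  show (x ∈ wedge H y1 y2 ∧ H x = m) ↔ (m : ℝ)⁻¹ • coeLat x ∈ Δ ∧
    rd (coeLat y1) ((m : ℝ)⁻¹ • coeLat x) = 1 ∧ rd (coeLat y2) ((m : ℝ)⁻¹ • coeLat x) = 1
  rw [G.mem_iff, G.hom _ _ (by positivity), rd_smul, rd_smul, rd_lat, rd_lat, ← G.hH,
    inv_mul_le_iff₀ hm', inv_mul_eq_iff_eq_mul₀ hm'.ne', inv_mul_eq_iff_eq_mul₀ hm'.ne', mul_one]
  have c1 : (H x : ℝ) ≤ m ↔ H x ≤ m := by exact_mod_cast Iff.rfl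
  have c2 : (dot y1 x : ℝ) = m ↔ dot y1 x = m := by exact_mod_cast Iff.rfl
  have c3 : (dot y2 x : ℝ) = m ↔ dot y2 x = m := by exact_mod_cast Iff.rfl
  rw [c1, c2, c3]
  have hle := G.AD.le y1 h1 x
  simp only [wedge, Set.mem_ofPred_eq]
  omega

lemma Geo.kappa_pos (G : Geo Δ V Y hh H) {y1 y2 : L4} (h1 : y1 ∈ Y) (h2 : y2 ∈ Y)
    (hd : dimSet (th Δ y1 y2) = 2) :
    Tendsto (fun s => s ^ 3 * ∑' x, (wedge H y1 y2).indicator (ew H s) x)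
      (nhdsWithin (0 : ℝ) (Set.Ioi 0)) (nhds (normVol 2 (th Δ y1 y2))) := by
  obtain ⟨U, hU⟩ := G.th_hull h1 h2
  have hne : U.Nonempty := by
    by_contra h
    rw [Finset.not_nonempty_iff_eq_empty] at h
    rw [h] at hU
    simp only [Finset.coe_empty, Set.image_empty, convexHull_empty] at hU
    rw [hU, dimSet_empty] at hd
    omega
  obtain ⟨v, hv⟩ := lattice_count U hne hU
  rw [hd] at hv
  have hlim : Tendsto (fun m : ℕ => (Nat.factorial 2 : ℝ) *
      (latticePoints ((m : ℝ) • th Δ y1 y2)).ncard / (m : ℝ) ^ 2) atTop (nhds (2 * v)) := by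
    refine (hv.const_mul 2).congr fun m => ?_
    simp [mul_div_assoc]
  have hnv : normVol 2 (th Δ y1 y2) = 2 * v := hlim.limUnder_eq
  rw [hnv]
  have hab : Tendsto (fun m : ℕ => 2 * ({x : L4 | x ∈ wedge H y1 y2 ∧ H x = m}.ncard : ℝ) / (m : ℝ) ^ 2)
      atTop (nhds (2 * v)) := by
    refine hlim.congr' ?_
    filter_upwards [eventually_gt_atTop 0] with m hm
    rw [G.wedge_level h1 hm]
    norm_num
  refine (abelian hab).congr' ?_
  filter_upwards [self_mem_nhdsWithin] with s hs
  rw [fiber_sum G.AD hs]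

end R4

namespace R4
variable {Δ : Set E4} {V Y : Finset L4} {hh : E4 → ℝ} {H : L4 → ℤ}

/-- orthogonal complement for the standard pairing -/
def perp (K : Submodule ℝ E4) : Submodule ℝ E4 :=
  K.dualAnnihilator.map (dotProductEquiv ℝ (Fin 4)).symm.toLinearMap

lemma mem_perp {K : Submodule ℝ E4} {y : E4} : y ∈ perp K ↔ ∀ x ∈ K, rd y x = 0 := by
  unfold perp
  rw [Submodule.mem_map]
  constructor
  · rintro ⟨f, hf, rfl⟩ x hx
    have h1 := (Submodule.mem_dualAnnihilator f).mp hf x hx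
    have h2 : dotProductEquiv ℝ (Fin 4) ((dotProductEquiv ℝ (Fin 4)).symm f) = f := LinearEquiv.apply_symm_apply _ _
    rw [← h2] at h1
    exact h1
  · intro h
    refine ⟨dotProductEquiv ℝ (Fin 4) y, ?_, ?_⟩
    · rw [Submodule.mem_dualAnnihilator]
      exact h
    · exact LinearEquiv.symm_apply_apply _ _

lemma finrank_perp (K : Submodule ℝ E4) : Module.finrank ℝ K + Module.finrank ℝ (perp K) = 4 := by
  have h1 : Module.finrank ℝ (perp K) = Module.finrank ℝ K.dualAnnihilator :=
    LinearEquiv.finrank_map_eq (dotProductEquiv ℝ (Fin 4)).symm K.dualAnnihilator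
  rw [h1, Subspace.finrank_add_finrank_dualAnnihilator_eq]
  simp

lemma finrank_span_eq {θ : Set E4} (hne : θ.Nonempty) {y : E4} (hy : ∀ x ∈ θ, rd y x = 1) :
    Module.finrank ℝ (Submodule.span ℝ θ) = dimSet θ + 1 := by
  obtain ⟨p, hp⟩ := hne
  have hD : (affineSpan ℝ θ).direction = Submodule.span ℝ ((fun x => x - p) '' θ) := by
    rw [direction_affineSpan, vectorSpan_eq_span_vsub_set_right ℝ hp]
    rfl
  set D := Submodule.span ℝ ((fun x => x - p) '' θ) with hDdef
  have hyD : ∀ z ∈ D, rd y z = 0 := by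
    intro z hz
    refine Submodule.span_induction (p := fun z _ => rd y z = 0) ?_ (rd_zero y) ?_ ?_ hz
    · rintro _ ⟨x, hx, rfl⟩
      rw [rd_sub, hy x hx, hy p hp, sub_self]
    · intro a b _ _ ha hb; rw [rd_add, ha, hb, add_zero]
    · intro t a _ ha; rw [rd_smul, ha, mul_zero]
  have hpD : p ∉ D := fun h => by
    have := hyD p h
    rw [hy p hp] at this
    exact one_ne_zero this
  have hsup : Submodule.span ℝ θ = D ⊔ Submodule.span ℝ {p} := by
    apply le_antisymm
    · rw [Submodule.span_le]
      intro x hx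
      have h1 : x - p ∈ D := Submodule.subset_span ⟨x, hx, rfl⟩
      have := Submodule.add_mem_sup h1 (Submodule.mem_span_singleton_self p)
      rwa [sub_add_cancel] at this
    · refine sup_le ?_ ?_
      · rw [hDdef, Submodule.span_le]
        rintro _ ⟨x, hx, rfl⟩
        exact Submodule.sub_mem _ (Submodule.subset_span hx) (Submodule.subset_span hp)
      · rw [Submodule.span_singleton_le_iff_mem]; exact Submodule.subset_span hp
  have hdim : dimSet θ = Module.finrank ℝ D := by rw [dimSet, hD]
  have hinf : D ⊓ Submodule.span ℝ {p} = ⊥ := by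
    rw [eq_bot_iff]
    rintro z ⟨hz1, hz2⟩
    obtain ⟨t, rfl⟩ := Submodule.mem_span_singleton.mp hz2
    have := hyD _ hz1
    rw [rd_smul, hy p hp, mul_one] at this
    simp [this]
  have hp0 : p ≠ 0 := fun h => hpD (by rw [h]; exact D.zero_mem)
  have := Submodule.finrank_sup_add_finrank_inf_eq D (Submodule.span ℝ {p})
  rw [hinf, finrank_bot, add_zero, ← hsup, finrank_span_singleton hp0] at this
  rw [this, hdim]

lemma perp_span {θ : Set E4} {y : E4} (h : ∀ x ∈ θ, rd y x = 0) : y ∈ perp (Submodule.span ℝ θ) := by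
  rw [mem_perp]
  intro z hz
  refine Submodule.span_induction (p := fun z _ => rd y z = 0) h (rd_zero y) ?_ ?_ hz
  · intro a b _ _ ha hb; rw [rd_add, ha, hb, add_zero]
  · intro t a _ ha; rw [rd_smul, ha, mul_zero]

/-- at most two vertices of the dual on a 2-face -/
lemma Geo.two (G : Geo Δ V Y hh H) {θ : Set E4} (hne : θ.Nonempty) (hd : dimSet θ = 2)
    {y1 y2 y3 : L4} (h1 : y1 ∈ Y) (h2 : y2 ∈ Y) (h3 : y3 ∈ Y) (h12 : y1 ≠ y2)
    (e1 : ∀ x ∈ θ, rd (coeLat y1) x = 1) (e2 : ∀ x ∈ θ, rd (coeLat y2) x = 1)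
    (e3 : ∀ x ∈ θ, rd (coeLat y3) x = 1) : y3 = y1 ∨ y3 = y2 := by
  by_contra hcon
  push Not at hcon
  have hr := finrank_span_eq hne e1
  have hp := finrank_perp (Submodule.span ℝ θ)
  rw [hr, hd] at hp
  have hp1 : Module.finrank ℝ (perp (Submodule.span ℝ θ)) = 1 := by omega
  have m2 : coeLat y1 - coeLat y2 ∈ perp (Submodule.span ℝ θ) :=
    perp_span fun x hx => by rw [sub_rd, e1 x hx, e2 x hx, sub_self]
  have m3 : coeLat y1 - coeLat y3 ∈ perp (Submodule.span ℝ θ) :=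
    perp_span fun x hx => by rw [sub_rd, e1 x hx, e3 x hx, sub_self]
  have hne2 : (⟨_, m2⟩ : perp (Submodule.span ℝ θ)) ≠ 0 := by
    intro h
    have h := congrArg Subtype.val h
    exact h12 (coeLat_inj (sub_eq_zero.mp h))
  obtain ⟨t, ht⟩ := (finrank_eq_one_iff_of_nonzero' _ hne2).mp hp1 ⟨_, m3⟩
  have ht : t • (coeLat y1 - coeLat y2) = coeLat y1 - coeLat y3 := congrArg Subtype.val ht
  refine G.line h1 h2 h3 h12 hcon.1.symm hcon.2.symm (t := t) ?_
  have : coeLat y3 = coeLat y1 - t • (coeLat y1 - coeLat y2) := by rw [ht]; abel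
  rw [this, sub_smul, one_smul, smul_sub]
  abel

lemma Geo.kappa_zero (G : Geo Δ V Y hh H) {y1 y2 : L4} (h1 : y1 ∈ Y)
    (h12 : y1 ≠ y2) (hd : dimSet (th Δ y1 y2) ≠ 2) :
    Tendsto (fun s => s ^ 3 * ∑' x, (wedge H y1 y2).indicator (ew H s) x)
      (nhdsWithin (0 : ℝ) (Set.Ioi 0)) (nhds 0) := by
  set K := Submodule.span ℝ (th Δ y1 y2) with hK
  have hKle : Module.finrank ℝ K ≤ 2 := by
    rcases Set.eq_empty_or_nonempty (th Δ y1 y2) with h | h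
    · rw [hK, h, Submodule.span_empty, finrank_bot]; omega
    · have hr : Module.finrank ℝ K = _ := finrank_span_eq h (y := coeLat y1) (fun x hx => hx.2.1)
      have hp := finrank_perp K
      have m2 : coeLat y1 - coeLat y2 ∈ perp K :=
        perp_span fun x hx => by rw [sub_rd, hx.2.1, hx.2.2, sub_self]
      have hpos : 0 < Module.finrank ℝ (perp K) := by
        rw [Module.finrank_pos_iff_exists_ne_zero]
        refine ⟨⟨_, m2⟩, fun h => ?_⟩
        have h := congrArg Subtype.val h
        exact h12 (coeLat_inj (sub_eq_zero.mp h))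
      omega
  have hperp : 2 ≤ Module.finrank ℝ (perp K) := by
    have := finrank_perp K; omega
  obtain ⟨⟨a, ha⟩, ha0⟩ : ∃ a : perp K, a ≠ 0 := by
    rw [← Module.finrank_pos_iff_exists_ne_zero (R := ℝ)]; omega
  have ha0 : a ≠ 0 := fun h => ha0 (Subtype.ext h)
  obtain ⟨b, hb, hba⟩ : ∃ b ∈ perp K, b ∉ Submodule.span ℝ {a} := by
    by_contra h
    push Not at h
    have := Submodule.finrank_mono (show perp K ≤ Submodule.span ℝ {a} from h)
    rw [finrank_span_singleton ha0] at this
    omega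
  obtain ⟨i, hi⟩ : ∃ i, a i ≠ 0 := by
    by_contra h; push Not at h; exact ha0 (funext h)
  obtain ⟨j, hj⟩ : ∃ j, a i * b j ≠ a j * b i := by
    by_contra h; push Not at h
    apply hba
    rw [Submodule.mem_span_singleton]
    refine ⟨b i / a i, ?_⟩
    ext j
    have := h j
    simp only [Pi.smul_apply, smul_eq_mul]
    field_simp
    linarith
  have hD : Dd H 2 (wedge H y1 y2) := by
    refine G.AD.D2 a b i j hj _ {(0, 0)} ?_
    intro x hx
    have hxK : coeLat x ∈ K := by
      obtain ⟨m, hm⟩ := Int.eq_ofNat_of_zero_le (G.AD.nonneg x)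
      rcases Nat.eq_zero_or_pos m with h0 | h0
      · have : hh (coeLat x) = 0 := by rw [← G.hH, hm, h0]; simp
        rw [G.eq_zero this]; exact K.zero_mem
      · have hmem : x ∈ {x : L4 | x ∈ wedge H y1 y2 ∧ H x = m} := ⟨hx, hm⟩
        rw [G.wedge_level h1 h0] at hmem
        obtain ⟨z, hz, e⟩ := hmem
        rw [← e]
        exact K.smul_mem _ (Submodule.subset_span hz)
    rw [Finset.mem_singleton, Prod.mk.injEq]
    exact ⟨mem_perp.mp ha _ hxK, mem_perp.mp hb _ hxK⟩
  refine G.AD.small hD Dempty (fun s => (wedge H y1 y2).indicator (ew H s)) (C := 1) zero_le_one ?_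
  filter_upwards with s x
  have hn : 0 ≤ (wedge H y1 y2).indicator (ew H s) x :=
    Set.indicator_nonneg (fun x _ => (Real.exp_pos _).le) x
  rw [abs_of_nonneg hn]
  simp

end R4

namespace R4
variable {Δ : Set E4} {V Y : Finset L4} {hh : E4 → ℝ} {H : L4 → ℤ}

/-- the functional of a vector as a continuous linear map -/
def rdL (y : E4) : E4 →L[ℝ] ℝ := LinearMap.toContinuousLinearMap (dotProductEquiv ℝ (Fin 4) y)

lemma rdL_apply (y x : E4) : rdL y x = rd y x := rfl

lemma Geo.face_of_pair (G : Geo Δ V Y hh H) {y1 y2 : L4} (h1 : y1 ∈ Y) (h2 : y2 ∈ Y)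
    (hd : dimSet (th Δ y1 y2) = 2) : IsFaceOfDim Δ 2 (th Δ y1 y2) := by
  have hne : (th Δ y1 y2).Nonempty := by
    by_contra h
    rw [Set.not_nonempty_iff_eq_empty] at h
    rw [h, dimSet_empty] at hd
    omega
  refine ⟨fun _ => ⟨rdL (coeLat y1 + coeLat y2), ?_⟩, hne, hd⟩
  obtain ⟨p, hp⟩ := hne
  ext x
  simp only [rdL_apply, add_rd, Set.mem_ofPred_eq]
  constructor
  · rintro ⟨hx, e1, e2⟩
    refine ⟨hx, fun z hz => ?_⟩
    rw [e1, e2]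
    exact add_le_add (G.memQ h1 z hz) (G.memQ h2 z hz)
  · rintro ⟨hx, hmax⟩
    have h := hmax p hp.1
    rw [hp.2.1, hp.2.2] at h
    have a1 := G.memQ h1 x hx
    have a2 := G.memQ h2 x hx
    exact ⟨hx, by linarith, by linarith⟩

/-- weights of a dual point touching θ are supported on common vertices -/
lemma Geo.supp (G : Geo Δ V Y hh H) {θ : Set E4} (hθ : θ ⊆ Δ) {y : E4}
    (hyQ : ∀ x ∈ Δ, rd y x ≤ 1) (hy : ∀ x ∈ θ, rd y x = 1) :
    ∃ w : L4 → ℝ, (∀ v ∈ Y, 0 ≤ w v) ∧ ∑ v ∈ Y, w v = 1 ∧ ∑ v ∈ Y, w v • coeLat v = y ∧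
      ∀ v ∈ Y, w v ≠ 0 → ∀ x ∈ θ, rd (coeLat v) x = 1 := by
  have hmem : y ∈ {y : E4 | ∀ x ∈ Δ, rd y x ≤ 1} := hyQ
  rw [G.hQ] at hmem
  obtain ⟨w, hw0, hw1, hw⟩ := conv_lat hmem
  refine ⟨w, hw0, hw1, hw, fun v hv hne x hx => ?_⟩
  have h := hy x hx
  rw [← hw, rd_sum_left] at h
  exact slack hw0 hw1 (fun v hv => G.memQ hv x (hθ hx)) h hv hne

lemma Geo.exposed_normal (G : Geo Δ V Y hh H) (hdim : dimSet Δ = 4) {θ : Set E4}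
    (hθ : IsFaceOfDim Δ 2 θ) : ∃ y : E4, (∀ x ∈ Δ, rd y x ≤ 1) ∧ θ = {x | x ∈ Δ ∧ rd y x = 1} := by
  obtain ⟨hexp, hne, hd⟩ := hθ
  obtain ⟨l, hl⟩ := hexp hne
  obtain ⟨w, hw⟩ := exists_rd l
  obtain ⟨p, hp⟩ := hne
  have hp' := hp
  rw [hl] at hp'
  obtain ⟨hpΔ, hpmax⟩ := hp'
  simp only [hw] at hpmax hl
  have hc0 : 0 ≤ rd w p := by
    have := hpmax 0 (interior_subset G.h0); rwa [rd_zero] at this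
  have hc : 0 < rd w p := by
    rcases hc0.eq_or_lt with h | h
    · exfalso
      have hle : ∀ x, rd w x ≤ 0 := by
        intro x
        have hx := G.nonneg x
        have hmem : (hh x + 1)⁻¹ • x ∈ Δ := by
          rw [G.mem_iff, G.hom _ _ (by positivity), inv_mul_le_iff₀ (by positivity)]; linarith
        have := hpmax _ hmem
        rw [← h, rd_smul] at this
        by_contra hcon
        push Not at hcon
        have : 0 < (hh x + 1)⁻¹ * rd w x := by positivity
        linarith
      have heq : ∀ x, rd w x = 0 := by
        intro x
        have h1 := hle x
        have h2 := hle ((-1 : ℝ) • x)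
        rw [rd_smul] at h2
        linarith
      have : θ = Δ := by
        rw [hl]; ext x; simp [heq]
      rw [this, hdim] at hd
      omega
    · exact h
  refine ⟨(rd w p)⁻¹ • w, fun x hx => ?_, ?_⟩
  · rw [smul_rd, inv_mul_le_iff₀ hc, mul_one]; exact hpmax x hx
  · rw [hl]
    ext x
    simp only [Set.mem_ofPred_eq, smul_rd, inv_mul_eq_iff_eq_mul₀ hc.ne', mul_one]
    constructor
    · rintro ⟨hx, h⟩; exact ⟨hx, le_antisymm (hpmax x hx) (h p hpΔ)⟩
    · rintro ⟨hx, h⟩; exact ⟨hx, fun z hz => by rw [h]; exact hpmax z hz⟩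

/-- a single vertex gives a facet -/
lemma Geo.facet (G : Geo Δ V Y hh H) {θ : Set E4} (hne : θ.Nonempty) {y0 : L4}
    (hθ : θ = {x | x ∈ Δ ∧ rd (coeLat y0) x = 1})
    (honly : ∀ y ∈ Y, (∀ x ∈ θ, rd (coeLat y) x = 1) → y = y0) : dimSet θ ≠ 2 := by
  classical
  intro hd
  have hex : ∀ y : L4, ∃ x ∈ θ, y ∈ Y → y ≠ y0 → rd (coeLat y) x < 1 := by
    intro y
    by_cases hy : y ∈ Y ∧ y ≠ y0
    · by_contra hcon
      push Not at hcon
      apply hy.2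
      refine honly y hy.1 fun x hx => le_antisymm ?_ (hcon x hx).2.2
      rw [hθ] at hx
      exact G.memQ hy.1 x hx.1
    · obtain ⟨p, hp⟩ := hne
      exact ⟨p, hp, fun h1 h2 => absurd ⟨h1, h2⟩ hy⟩
  choose f hfθ hf using hex
  have hYne : Y.Nonempty := by
    obtain ⟨y, hy, _⟩ := G.ex 0; exact ⟨y, hy⟩
  have hN : (0 : ℝ) < Y.card := by exact_mod_cast Finset.card_pos.mpr hYne
  have hθconv : Convex ℝ θ := by
    rw [hθ]
    intro a ha b hb s t hs ht hst
    refine ⟨G.convex ha.1 hb.1 hs ht hst, ?_⟩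
    rw [rd_add, rd_smul, rd_smul, ha.2, hb.2]; linarith
  set p : E4 := ∑ y ∈ Y, (Y.card : ℝ)⁻¹ • f y with hp
  have hpθ : p ∈ θ := by
    refine hθconv.sum_mem (fun _ _ => by positivity) ?_ (fun y _ => hfθ y)
    rw [Finset.sum_const, nsmul_eq_mul, mul_inv_cancel₀ hN.ne']
  have hplt : ∀ y ∈ Y, y ≠ y0 → rd (coeLat y) p < 1 := by
    intro y hy hyne
    rw [hp, rd_sum_right]
    have : ∑ _z ∈ Y, (Y.card : ℝ)⁻¹ = 1 := by
      rw [Finset.sum_const, nsmul_eq_mul, mul_inv_cancel₀ hN.ne']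
    rw [← this]
    have hΔ : ∀ z, f z ∈ Δ := fun z => by
      have := hfθ z; rw [hθ] at this; exact this.1
    refine Finset.sum_lt_sum (fun z _ => ?_) ⟨y, hy, ?_⟩
    · exact mul_le_of_le_one_right (by positivity) (G.memQ hy _ (hΔ z))
    · exact mul_lt_of_lt_one_right (by positivity) (hf y hy hyne)
  have hpθ' := hpθ
  rw [hθ] at hpθ'
  -- everything in the kernel of y0 lies in the direction
  have hker : ∀ z : E4, rd (coeLat y0) z = 0 → z ∈ (affineSpan ℝ θ).direction := by
    intro z hz
    have hopen : IsOpen (⋂ y ∈ Y.erase y0, {t : ℝ | rd (coeLat y) (p + t • z) < 1}) := by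
      refine isOpen_biInter_finset fun y _ => ?_
      refine isOpen_lt ?_ continuous_const
      exact (rd_cont _).comp (by fun_prop)
    have h0 : (0 : ℝ) ∈ ⋂ y ∈ Y.erase y0, {t : ℝ | rd (coeLat y) (p + t • z) < 1} := by
      simp only [Set.mem_iInter, Set.mem_ofPred_eq, zero_smul, add_zero]
      intro y hy
      exact hplt y (Finset.mem_of_mem_erase hy) (Finset.ne_of_mem_erase hy)
    obtain ⟨ε, hε, hb⟩ := Metric.isOpen_iff.mp hopen 0 h0
    have hm : ε / 2 ∈ Metric.ball (0 : ℝ) ε := by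
      rw [Metric.mem_ball, Real.dist_eq, sub_zero, abs_of_pos] <;> linarith
    have hin := hb hm
    simp only [Set.mem_iInter, Set.mem_ofPred_eq] at hin
    have e0 : rd (coeLat y0) (p + (ε / 2) • z) = 1 := by
      rw [rd_add, rd_smul, hz, hpθ'.2]; ring
    have hmem : p + (ε / 2) • z ∈ θ := by
      rw [hθ]
      refine ⟨?_, e0⟩
      rw [G.mem_iff, G.le_iff]
      intro y hy
      by_cases hyy : y = y0
      · rw [hyy, e0]
      · exact (hin y (Finset.mem_erase.mpr ⟨hyy, hy⟩)).le
    have h3 := vsub_mem_vectorSpan ℝ hmem hpθ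
    rw [vsub_eq_sub, add_sub_cancel_left] at h3
    rw [direction_affineSpan]
    have h4 := Submodule.smul_mem _ (ε / 2)⁻¹ h3
    rwa [inv_smul_smul₀ (by positivity)] at h4
  have hle : perp (Submodule.span ℝ {coeLat y0}) ≤ (affineSpan ℝ θ).direction := by
    intro z hz
    apply hker
    have := mem_perp.mp hz (coeLat y0) (Submodule.mem_span_singleton_self _)
    unfold rd at this ⊢
    rw [dotProduct_comm]; exact this
  have h5 : Module.finrank ℝ (perp (Submodule.span ℝ {coeLat y0})) ≤ dimSet θ :=
    Submodule.finrank_mono hle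
  have h7 : Module.finrank ℝ (Submodule.span ℝ ({coeLat y0} : Set E4)) ≤ 1 :=
    (finrank_span_le_card (R := ℝ) ({coeLat y0} : Set E4)).trans (by simp)
  rw [hd] at h5
  have h6 : _ + _ = 4 := finrank_perp (Submodule.span ℝ {coeLat y0})
  have h8 := h6.symm.le.trans (add_le_add h7 h5)
  omega

lemma Geo.pair_of_face (G : Geo Δ V Y hh H) (hdim : dimSet Δ = 4) {θ : Set E4}
    (hθ : IsFaceOfDim Δ 2 θ) : ∃ y1 ∈ Y, ∃ y2 ∈ Y, y1 ≠ y2 ∧ θ = th Δ y1 y2 := by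
  obtain ⟨y, hyQ, hyθ⟩ := G.exposed_normal hdim hθ
  obtain ⟨_, hne, hd⟩ := hθ
  have hsub : θ ⊆ Δ := by rw [hyθ]; exact fun x hx => hx.1
  have hone : ∀ x ∈ θ, rd y x = 1 := by
    intro x hx; rw [hyθ] at hx; exact hx.2
  obtain ⟨w, hw0, hw1, hw, hwI⟩ := G.supp hsub hyQ hone
  obtain ⟨y1, h1, hw1ne⟩ : ∃ y1 ∈ Y, w y1 ≠ 0 := by
    by_contra h
    push Not at h
    rw [Finset.sum_eq_zero h] at hw1
    exact zero_ne_one hw1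
  have e1 := hwI y1 h1 hw1ne
  have hsup : ∀ x ∈ Δ, (∀ v ∈ Y, w v ≠ 0 → rd (coeLat v) x = 1) → x ∈ θ := by
    intro x hx h
    rw [hyθ]
    refine ⟨hx, ?_⟩
    rw [← hw, rd_sum_left, ← hw1]
    refine Finset.sum_congr rfl fun v hv => ?_
    by_cases hv0 : w v = 0
    · rw [hv0, zero_mul]
    · rw [h v hv hv0, mul_one]
  have h2ex : ∃ y2 ∈ Y, y2 ≠ y1 ∧ ∀ x ∈ θ, rd (coeLat y2) x = 1 := by
    by_contra hcon
    push Not at hcon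
    have honly : ∀ v ∈ Y, (∀ x ∈ θ, rd (coeLat v) x = 1) → v = y1 := by
      intro v hv h
      by_contra hne
      obtain ⟨x, hx, hx'⟩ := hcon v hv hne
      exact hx' (h x hx)
    refine G.facet hne (y0 := y1) ?_ honly hd
    ext x
    constructor
    · intro hx; exact ⟨hsub hx, e1 x hx⟩
    · rintro ⟨hx, hx1⟩
      refine hsup x hx fun v hv hv0 => ?_
      rw [honly v hv (hwI v hv hv0)]; exact hx1
  obtain ⟨y2, h2, h21, e2⟩ := h2ex
  refine ⟨y1, h1, y2, h2, h21.symm, ?_⟩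
  ext x
  constructor
  · intro hx; exact ⟨hsub hx, e1 x hx, e2 x hx⟩
  · rintro ⟨hx, hx1, hx2⟩
    refine hsup x hx fun v hv hv0 => ?_
    rcases G.two hne hd h1 h2 hv h21.symm e1 e2 (hwI v hv hv0) with h | h
    · rw [h]; exact hx1
    · rw [h]; exact hx2

lemma Geo.dualFace_eq (G : Geo Δ V Y hh H) {y1 y2 : L4} (h1 : y1 ∈ Y) (h2 : y2 ∈ Y) (h12 : y1 ≠ y2)
    (hd : dimSet (th Δ y1 y2) = 2) (z : E4) : z ∈ dualFace Δ (th Δ y1 y2) ↔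
      ∃ t : ℝ, 0 ≤ t ∧ t ≤ 1 ∧ -z = coeLat y2 + t • (coeLat y1 - coeLat y2) := by
  classical
  have hne : (th Δ y1 y2).Nonempty := (G.face_of_pair h1 h2 hd).2.1
  constructor
  · rintro ⟨hz1, hz2⟩
    have hQ : ∀ x ∈ Δ, rd (-z) x ≤ 1 := fun x hx => by
      have := hz1 x hx; rw [← rd_def] at this; rw [neg_rd]; linarith
    have hone : ∀ x ∈ th Δ y1 y2, rd (-z) x = 1 := fun x hx => by
      have := hz2 x hx; rw [← rd_def] at this; rw [neg_rd]; linarith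
    obtain ⟨w, hw0, hw1, hw, hwI⟩ := G.supp (fun x hx => hx.1) hQ hone
    have hz : ∀ v ∈ Y, v ∉ ({y1, y2} : Finset L4) → w v = 0 := by
      intro v hv hv2
      by_contra hv0
      rcases G.two hne hd h1 h2 hv h12 (fun x hx => hx.2.1) (fun x hx => hx.2.2) (hwI v hv hv0) with h | h
      · exact hv2 (by simp [h])
      · exact hv2 (by simp [h])
    have hsub : ({y1, y2} : Finset L4) ⊆ Y := by
      intro v hv
      rcases Finset.mem_insert.mp hv with h | h
      · rw [h]; exact h1
      · rw [Finset.mem_singleton.mp h]; exact h2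
    rw [← Finset.sum_subset hsub hz, Finset.sum_pair h12] at hw1
    rw [← Finset.sum_subset hsub (fun v hv hv2 => by rw [hz v hv hv2, zero_smul]),
      Finset.sum_pair h12] at hw
    have a1 := hw0 y1 h1
    have a2 := hw0 y2 h2
    refine ⟨w y1, a1, by linarith, ?_⟩
    rw [← hw, show w y2 = 1 - w y1 by linarith, sub_smul, one_smul, smul_sub]
    abel
  · rintro ⟨t, ht0, ht1, e⟩
    have hz : ∀ x, ∑ i, z i * x i = -(rd (coeLat y2) x + t * (rd (coeLat y1) x - rd (coeLat y2) x)) := by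
      intro x
      rw [← rd_def, ← sub_rd, ← smul_rd, ← add_rd, ← e, neg_rd, neg_neg]
    refine ⟨fun x hx => ?_, fun x hx => ?_⟩
    · rw [hz]
      have a1 := G.memQ h1 x hx
      have a2 := G.memQ h2 x hx
      nlinarith
    · rw [hz, hx.2.1, hx.2.2]; ring

lemma Geo.dual_count (G : Geo Δ V Y hh H) {y1 y2 : L4} (h1 : y1 ∈ Y) (h2 : y2 ∈ Y) (h12 : y1 ≠ y2)
    (hd : dimSet (th Δ y1 y2) = 2) {c : ℤ} {n z : L4} (hc : 0 < c) (hn : y1 - y2 = c • n)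
    (hz : dot n z = 1) : ((latticePoints (dualFace Δ (th Δ y1 y2))).ncard : ℝ) - 1 = c := by
  classical
  have hset : latticePoints (dualFace Δ (th Δ y1 y2)) =
      (((Finset.Icc 0 c).image (fun k : ℤ => -(y2 + k • n)) : Finset L4) : Set L4) := by
    ext x
    show coeLat x ∈ dualFace Δ (th Δ y1 y2) ↔ _
    rw [G.dualFace_eq h1 h2 h12 hd]
    simp only [Finset.coe_image, Set.mem_image, Finset.coe_Icc, Set.mem_Icc]
    have hn' : coeLat y1 - coeLat y2 = (c : ℝ) • coeLat n := by
      rw [← coeLat_sub, hn, coeLat_zsmul]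
    have hc' : (0 : ℝ) < c := by exact_mod_cast hc
    constructor
    · rintro ⟨t, ht0, ht1, e⟩
      rw [hn', smul_smul] at e
      have e2 : rd (-coeLat x) (coeLat z) = rd (coeLat y2) (coeLat z) + t * c := by
        rw [e, add_rd, smul_rd, rd_lat n z, hz]; simp
      rw [neg_rd, rd_lat, rd_lat] at e2
      have hk : (t * c : ℝ) = ((- dot x z - dot y2 z : ℤ) : ℝ) := by push_cast; linarith
      refine ⟨- dot x z - dot y2 z, ⟨?_, ?_⟩, ?_⟩
      · have : (0 : ℝ) ≤ ((- dot x z - dot y2 z : ℤ) : ℝ) := by rw [← hk]; positivity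
        exact_mod_cast this
      · have : ((- dot x z - dot y2 z : ℤ) : ℝ) ≤ c := by rw [← hk]; nlinarith
        exact_mod_cast this
      · rw [hk, ← coeLat_zsmul, ← coeLat_add] at e
        have e3 : coeLat x = coeLat (-(y2 + (- dot x z - dot y2 z) • n)) := by
          have h4 : coeLat (-(y2 + (- dot x z - dot y2 z) • n)) = -coeLat (y2 + (- dot x z - dot y2 z) • n) := by
            ext i; simp [coeLat]
          rw [h4, ← e, neg_neg]
        exact (coeLat_inj e3).symm
    · rintro ⟨k, ⟨hk0, hk1⟩, rfl⟩
      have hk0' : (0 : ℝ) ≤ k := by exact_mod_cast hk0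
      have hk1' : (k : ℝ) ≤ c := by exact_mod_cast hk1
      refine ⟨k / c, by positivity, by rw [div_le_one hc']; exact hk1', ?_⟩
      rw [hn', smul_smul, div_mul_cancel₀ _ hc'.ne', ← coeLat_zsmul, ← coeLat_add]
      ext i; simp [coeLat]
  rw [hset, Set.ncard_coe_finset, Finset.card_image_of_injective, Int.card_Icc]
  · have : ((c + 1 - 0).toNat : ℤ) = c + 1 := by rw [Int.toNat_of_nonneg] <;> omega
    have h' : (((c + 1 - 0).toNat : ℤ) : ℝ) = ((c + 1 : ℤ) : ℝ) := by rw [this]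
    push_cast at h'
    rw [h']; ring
  · intro k k' h
    have h : -(y2 + k • n) = -(y2 + k' • n) := h
    have h2 : k • n = k' • n := add_left_cancel (neg_injective h)
    have h3 := congrArg (fun v => dot v z) h2
    simp only [smul_dot, hz] at h3
    simpa using h3

lemma exists_prim (d : L4) (hd : d ≠ 0) : ∃ (c : ℤ) (n z : L4), 0 < c ∧ d = c • n ∧ dot n z = 1 := by
  obtain ⟨g, hg⟩ := (IsPrincipalIdealRing.principal (Ideal.span (Set.range d))).principal
  have hmem : ∀ i, ∃ a, d i = g * a := by
    intro i
    have h : d i ∈ Ideal.span (Set.range d) := Ideal.subset_span ⟨i, rfl⟩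
    rw [hg] at h
    obtain ⟨a, ha⟩ := Submodule.mem_span_singleton.mp h
    exact ⟨a, by rw [← ha, smul_eq_mul, mul_comm]⟩
  choose n hn using hmem
  have hgm : g ∈ Ideal.span (Set.range d) := by rw [hg]; exact Submodule.mem_span_singleton_self g
  obtain ⟨z, hz⟩ := Ideal.mem_span_range_iff_exists_fun.mp hgm
  have hg0 : g ≠ 0 := by
    rintro rfl
    apply hd; ext i; rw [hn i]; simp
  have h1 : dot n z = 1 := by
    apply mul_left_cancel₀ hg0
    rw [mul_one]
    conv_rhs => rw [← hz]
    rw [dot, Finset.mul_sum]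
    refine Finset.sum_congr rfl fun i _ => ?_
    rw [hn i]; ring
  rcases lt_or_gt_of_ne hg0 with h | h
  · refine ⟨-g, -n, -z, by omega, ?_, ?_⟩
    · ext i; rw [hn i]; simp
    · rw [← h1]; simp [dot]
  · exact ⟨g, n, z, h, by ext i; rw [hn i]; simp, h1⟩

end R4

namespace R4
variable {Δ : Set E4} {V Y : Finset L4} {hh : E4 → ℝ} {H : L4 → ℤ}

open Classical in
/-- The sum over ordered pairs of dual vertices is twice the sum over two-dimensional faces. -/
lemma Geo.face_sum (G : Geo Δ V Y hh H) (hdim : dimSet Δ = 4) (g : Set E4 → ℝ) :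
    ∑ p ∈ Y.offDiag.filter (fun p => dimSet (th Δ p.1 p.2) = 2), g (th Δ p.1 p.2) =
      2 * ∑ᶠ θ ∈ {θ : Set E4 | IsFaceOfDim Δ 2 θ}, g θ := by
  set Pairs := Y.offDiag.filter (fun p => dimSet (th Δ p.1 p.2) = 2) with hPairs
  have hset : {θ : Set E4 | IsFaceOfDim Δ 2 θ} =
      ((Pairs.image (fun p => th Δ p.1 p.2) : Finset (Set E4)) : Set (Set E4)) := by
    ext θ
    simp only [Set.mem_ofPred_eq, Finset.coe_image, Set.mem_image, Finset.mem_coe]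
    constructor
    · intro hθ
      obtain ⟨y1, h1, y2, h2, h12, rfl⟩ := G.pair_of_face hdim hθ
      exact ⟨(y1, y2), Finset.mem_filter.mpr
        ⟨Finset.mem_offDiag.mpr ⟨h1, h2, h12⟩, hθ.2.2⟩, rfl⟩
    · rintro ⟨p, hp, rfl⟩
      obtain ⟨hp1, hp2⟩ := Finset.mem_filter.mp hp
      obtain ⟨h1, h2, h12⟩ := Finset.mem_offDiag.mp hp1
      exact G.face_of_pair h1 h2 hp2
  rw [hset, finsum_mem_coe_finset, Finset.sum_comp g (fun p : L4 × L4 => th Δ p.1 p.2),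
    Finset.mul_sum]
  refine Finset.sum_congr rfl fun θ hθ => ?_
  obtain ⟨⟨y1, y2⟩, hp, rfl⟩ := Finset.mem_image.mp hθ
  obtain ⟨hp1, hd⟩ := Finset.mem_filter.mp hp
  obtain ⟨h1, h2, h12⟩ := Finset.mem_offDiag.mp hp1
  simp only at hd h1 h2 h12 ⊢
  have hne : (th Δ y1 y2).Nonempty := (G.face_of_pair h1 h2 hd).2.1
  have hfib : Pairs.filter (fun p => th Δ p.1 p.2 = th Δ y1 y2) = {(y1, y2), (y2, y1)} := by
    ext ⟨u, v⟩
    simp only [Finset.mem_filter, Finset.mem_insert, Finset.mem_singleton, Prod.mk.injEq, hPairs,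
      Finset.mem_offDiag]
    constructor
    · rintro ⟨⟨⟨hu, hv, huv⟩, _⟩, e⟩
      have a1 := G.two hne hd h1 h2 hu h12 (fun x hx => hx.2.1) (fun x hx => hx.2.2)
        (fun x hx => by rw [← e] at hx; exact hx.2.1)
      have a2 := G.two hne hd h1 h2 hv h12 (fun x hx => hx.2.1) (fun x hx => hx.2.2)
        (fun x hx => by rw [← e] at hx; exact hx.2.2)
      rcases a1 with a1 | a1 <;> rcases a2 with a2 | a2
      · exact absurd (a1.trans a2.symm) huv
      · exact Or.inl ⟨a1, a2⟩
      · exact Or.inr ⟨a1, a2⟩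
      · exact absurd (a1.trans a2.symm) huv
    · rintro (⟨rfl, rfl⟩ | ⟨rfl, rfl⟩)
      · exact ⟨⟨⟨h1, h2, h12⟩, hd⟩, rfl⟩
      · rw [th_comm Δ u v]
        exact ⟨⟨⟨h2, h1, h12.symm⟩, hd⟩, rfl⟩
  rw [hfib, Finset.card_pair (by simp [Prod.ext_iff, h12]), nsmul_eq_mul]
  norm_num

end R4

theorem reflexive_4d_identity (Δ : Set (Fin 4 → ℝ))
    (hΔ : IsReflexive Δ) (hdim : dimSet Δ = 4) :
    12 * ((latticePoints (frontier Δ)).ncard : ℝ) =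
      2 * ((Nat.factorial 4 : ℝ) * (volume Δ).toReal) +
        ∑ᶠ θ ∈ {θ : Set (Fin 4 → ℝ) | IsFaceOfDim Δ 2 θ},
          normVol 2 θ * (((latticePoints (dualFace Δ θ)).ncard : ℝ) - 1) := by
  classical
  obtain ⟨V, Y, hh, H, G⟩ := R4.exists_geo hΔ
  have hex : ∀ y1 y2 : R4.L4, ∃ (c : ℤ) (n z : R4.L4),
      y1 ≠ y2 → (0 < c ∧ y1 - y2 = c • n ∧ R4.dot n z = 1) := by
    intro y1 y2
    by_cases h : y1 = y2
    · exact ⟨0, 0, 0, fun h' => absurd h h'⟩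
    · obtain ⟨c, n, z, hc, hn, hz⟩ := R4.exists_prim (y1 - y2) (sub_ne_zero.mpr h)
      exact ⟨c, n, z, fun _ => ⟨hc, hn, hz⟩⟩
  choose cc nn zz hP using hex
  have P : R4.PD Y H cc nn zz
      (fun y1 y2 => if dimSet (R4.th Δ y1 y2) = 2 then normVol 2 (R4.th Δ y1 y2) else 0) := by
    refine ⟨fun y1 _ y2 _ h => ⟨(hP y1 y2 h).1, (hP y1 y2 h).2.1⟩,
      fun y1 _ y2 _ h => (hP y1 y2 h).2.2, fun y1 h1 y2 h2 h => ?_⟩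
    by_cases hd : dimSet (R4.th Δ y1 y2) = 2
    · simp only [if_pos hd]; exact G.kappa_pos h1 h2 hd
    · simp only [if_neg hd]; exact G.kappa_zero h1 h hd
  obtain ⟨b, hb⟩ := G.main_count
  have hl := tendsto_nhds_unique (R4.T_limit G.AD G.level_zero hb) (R4.theoremA G.AD P)
  have hs := G.face_sum hdim
    (fun θ => normVol 2 θ * (((latticePoints (dualFace Δ θ)).ncard : ℝ) - 1))
  have hsum : ∑ p ∈ Y.offDiag, (cc p.1 p.2 : ℝ) *
      (if dimSet (R4.th Δ p.1 p.2) = 2 then normVol 2 (R4.th Δ p.1 p.2) else 0) =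
      ∑ p ∈ Y.offDiag.filter (fun p => dimSet (R4.th Δ p.1 p.2) = 2),
        normVol 2 (R4.th Δ p.1 p.2) *
          (((latticePoints (dualFace Δ (R4.th Δ p.1 p.2))).ncard : ℝ) - 1) := by
    rw [Finset.sum_filter]
    refine Finset.sum_congr rfl fun p hp => ?_
    obtain ⟨h1, h2, h12⟩ := Finset.mem_offDiag.mp hp
    split_ifs with hd
    · obtain ⟨hc, hn, hz⟩ := hP p.1 p.2 h12
      rw [G.dual_count h1 h2 h12 hd hc hn hz, mul_comm]
    · rw [mul_zero]
  rw [hsum, hs] at hl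
  have h1 := hb 1 le_rfl
  rw [G.frontier_count, h1]
  have h4 : (Nat.factorial 4 : ℝ) = 24 := by norm_num [Nat.factorial]
  rw [h4]
  push_cast
  linarith

end
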